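/- arXiv:2506.07071 — 5 statements merged into one kernel-verified Lean document; each statement's English description precedes it below -/
import Mathlib

section
/- Let (E,𝒞,r) be a semimatroid without loops. Then the sequence w_0(𝒞), w_1(𝒞), …, w_{r(𝒞)}(𝒞) of unsigned Whitney numbers of the first kind is unimodal: there exists an index 0 ≤ k ≤ r(𝒞) such that w_0(𝒞) ≤ … ≤ w_{k−1}(𝒞) ≤ w_k(𝒞) ≥ w_{k+1}(𝒞) ≥ … ≥ w_{r(𝒞)}(𝒞). -/
/-- A semimatroid on a finite ground set `E`: a nonempty, subset-closed collection `C`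
of "central" subsets of `E`, together with a rank function `r` satisfying (SR1)-(SR5). -/
structure Semimatroid (E : Type*) [DecidableEq E] [Fintype E] where
  C : Finset (Finset E)
  r : Finset E → ℕ
  C_nonempty : C.Nonempty
  mem_of_subset : ∀ ⦃X Y : Finset E⦄, X ∈ C → Y ⊆ X → Y ∈ C
  r_le_card : ∀ ⦃X : Finset E⦄, X ∈ C → r X ≤ X.card
  r_mono : ∀ ⦃X Y : Finset E⦄, X ∈ C → Y ∈ C → X ⊆ Y → r X ≤ r Y
  submodular : ∀ ⦃X Y : Finset E⦄, X ∈ C → Y ∈ C → X ∪ Y ∈ C →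
    r (X ∩ Y) + r (X ∪ Y) ≤ r X + r Y
  union_mem : ∀ ⦃X Y : Finset E⦄, X ∈ C → Y ∈ C → r X = r (X ∩ Y) → X ∪ Y ∈ C
  augment : ∀ ⦃X Y : Finset E⦄, X ∈ C → Y ∈ C → r X < r Y →
    ∃ e ∈ Y \ X, insert e X ∈ C

namespace Semimatroid

variable {E : Type*} [DecidableEq E] [Fintype E] (S : Semimatroid E)

/-- The rank `r(𝒞)` of the semimatroid: the common rank of the maximal central sets. -/
def rank : ℕ := S.C.sup S.r

/-- The closure of a central set `X`:
`cl X = {e ∈ E : X ∪ {e} ∈ 𝒞 and r (X ∪ {e}) = r X}`. -/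
def cl (X : Finset E) : Finset E :=
  Finset.univ.filter fun e => insert e X ∈ S.C ∧ S.r (insert e X) = S.r X

/-- The flats of the semimatroid: central sets `X` with `cl X = X`. -/
def flats : Finset (Finset E) := S.C.filter fun X => S.cl X = X

/-- The characteristic polynomial `χ(𝒞;t) = Σ_{X ∈ 𝒞} (−1)^{|X|} t^{r(𝒞)−r(X)}`. -/
noncomputable def charPoly : Polynomial ℤ :=
  ∑ A ∈ S.C, (-1 : Polynomial ℤ) ^ A.card * Polynomial.X ^ (S.rank - S.r A)

end Semimatroid

namespace Semimatroid

variable {E : Type*} [DecidableEq E] [Fintype E] (S : Semimatroid E)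

/-- The `i`-th unsigned Whitney number of the first kind:
`w_i(𝒞) = (−1)^i ⋅ (coefficient of t^{r(𝒞)−i} in χ(𝒞;t))`. -/
noncomputable def whitney (i : ℕ) : ℤ :=
  (-1 : ℤ) ^ i * S.charPoly.coeff (S.rank - i)

end Semimatroid


namespace HRW

open Finset

/-- Perron-type lemma. -/
theorem perron {ι : Type*} [Fintype ι] [DecidableEq ι] (A : ι → ι → ℝ)
    (hs : ∀ i j, A i j = A j i) (hn : ∀ i j, i ≠ j → 0 ≤ A i j)
    (c p : ι → ℝ) (hc : ∀ i, 0 < c i) (hp : ∀ i, 0 < p i)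
    (hAc : ∀ i, ∑ j, A i j * c j = p i)
    (hin : ∀ x : ι → ℝ, ∑ i, x i * ∑ j, A i j * x j ≤ ∑ i, c i * (∑ j, A i j * x j) ^ 2 / p i)
    (conn : ∀ z : ι → ℝ, (∀ i j, i ≠ j → 0 < A i j → z i = z j) → ∀ i j, z i = z j)
    (x : ι → ℝ) (hx : ∑ i, x i * p i = 0) :
    ∑ i, x i * ∑ j, A i j * x j ≤ 0 := by
  classical
  rcases isEmpty_or_nonempty ι with he | hne
  · simp
  have hsym : ∀ u v : ι → ℝ, ∑ i, u i * ∑ j, A i j * v j = ∑ i, v i * ∑ j, A i j * u j := by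
    intro u v
    simp only [Finset.mul_sum]
    rw [Finset.sum_comm]
    refine Finset.sum_congr rfl fun i _ => Finset.sum_congr rfl fun j _ => ?_
    rw [hs j i]; ring
  -- Laplacian identity
  have hlap : ∀ y : ι → ℝ, ∑ i, p i / c i * y i ^ 2 - ∑ i, y i * ∑ j, A i j * y j =
      (1/2) * ∑ i, ∑ j, A i j * (c i * c j * (y i / c i - y j / c j) ^ 2) := by
    intro y
    have e1 : ∀ i j, A i j * (c i * c j * (y i / c i - y j / c j) ^ 2) =
        (A i j * c j) * (y i ^ 2 / c i) + (A j i * c i) * (y j ^ 2 / c j)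
          - 2 * (y i * (A i j * y j)) := by
      intro i j
      rw [hs j i]
      have := (hc i).ne'
      have := (hc j).ne'
      field_simp
      ring
    have e2 : ∑ i, ∑ j, (A i j * c j) * (y i ^ 2 / c i) = ∑ i, p i / c i * y i ^ 2 := by
      refine Finset.sum_congr rfl fun i _ => ?_
      rw [← Finset.sum_mul, hAc]; ring
    have e3 : ∑ i, ∑ j, (A j i * c i) * (y j ^ 2 / c j) = ∑ i, p i / c i * y i ^ 2 := by
      rw [Finset.sum_comm]; exact e2
    simp only [e1, Finset.sum_sub_distrib, Finset.sum_add_distrib, e2, e3, ← Finset.mul_sum]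
    ring
  have hterm : ∀ (y : ι → ℝ) i j, 0 ≤ A i j * (c i * c j * (y i / c i - y j / c j) ^ 2) := by
    intro y i j
    by_cases h : i = j
    · subst h; simp
    · exact mul_nonneg (hn i j h) (mul_nonneg (mul_pos (hc i) (hc j)).le (sq_nonneg _))
  have hpsd : ∀ y : ι → ℝ, 0 ≤ ∑ i, p i / c i * y i ^ 2 - ∑ i, y i * ∑ j, A i j * y j := by
    intro y
    rw [hlap]
    exact mul_nonneg (by norm_num) (Finset.sum_nonneg fun i _ => Finset.sum_nonneg fun j _ => hterm y i j)
  have hker : ∀ y : ι → ℝ, ∑ i, p i / c i * y i ^ 2 - ∑ i, y i * ∑ j, A i j * y j = 0 →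
      ∀ i j, y i / c i = y j / c j := by
    intro y hy
    rw [hlap] at hy
    have h0 : ∑ i, ∑ j, A i j * (c i * c j * (y i / c i - y j / c j) ^ 2) = 0 := by linarith
    rw [Finset.sum_eq_zero_iff_of_nonneg
      (fun i _ => Finset.sum_nonneg fun j _ => hterm y i j)] at h0
    refine conn (fun i => y i / c i) ?_
    intro i j hij hA
    have h1 := h0 i (Finset.mem_univ i)
    rw [Finset.sum_eq_zero_iff_of_nonneg (fun j _ => hterm y i j)] at h1
    have h2 := h1 j (Finset.mem_univ j)
    have h3 : (y i / c i - y j / c j) ^ 2 = 0 := by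
      rcases mul_eq_zero.1 h2 with h | h
      · exact absurd h hA.ne'
      · rcases mul_eq_zero.1 h with h | h
        · exact absurd h (mul_pos (hc i) (hc j)).ne'
        · exact h
    have h4 := pow_eq_zero_iff (two_ne_zero) |>.1 h3
    show y i / c i = y j / c j
    linarith
  have hpc : 0 < ∑ i, p i * c i :=
    Finset.sum_pos (fun i _ => mul_pos (hp i) (hc i)) Finset.univ_nonempty
  -- the operator
  let S : (ι → ℝ) →ₗ[ℝ] (ι → ℝ) :=
    { toFun := fun y i => p i / c i * y i - ∑ j, A i j * y j + (∑ j, y j * p j) * p i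
      map_add' := by
        intro y z; funext i
        simp only [Pi.add_apply, mul_add, add_mul, Finset.sum_add_distrib]; ring
      map_smul' := by
        intro a y; funext i
        simp only [Pi.smul_apply, smul_eq_mul, RingHom.id_apply]
        have e1 : ∑ j, A i j * (a * y j) = a * ∑ j, A i j * y j := by
          rw [Finset.mul_sum]; exact Finset.sum_congr rfl fun j _ => by ring
        have e2 : ∑ j, a * y j * p j = a * ∑ j, y j * p j := by
          rw [Finset.mul_sum]; exact Finset.sum_congr rfl fun j _ => by ring
        rw [e1, e2]; ring }
  have hS : ∀ y i, S y i = p i / c i * y i - ∑ j, A i j * y j + (∑ j, y j * p j) * p i :=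
    fun y i => rfl
  have hcS : ∀ y, ∑ i, c i * S y i = (∑ j, y j * p j) * ∑ i, p i * c i := by
    intro y
    have e1 : ∑ i, c i * ∑ j, A i j * y j = ∑ j, y j * p j := by
      rw [hsym]; simp only [hAc]
    have e2 : ∀ i, c i * S y i = y i * p i - c i * (∑ j, A i j * y j) +
        (∑ j, y j * p j) * (p i * c i) := by
      intro i
      rw [hS]
      have := (hc i).ne'
      field_simp
    simp only [e2, Finset.sum_add_distrib, Finset.sum_sub_distrib, e1, ← Finset.mul_sum]
    ring
  have hinj : Function.Injective S := by
    rw [← LinearMap.ker_eq_bot, LinearMap.ker_eq_bot']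
    intro y hy
    have h1 := hcS y
    rw [hy] at h1
    simp only [Pi.zero_apply, mul_zero, Finset.sum_const_zero] at h1
    have h2 : ∑ j, y j * p j = 0 := by
      rcases mul_eq_zero.1 h1.symm with h | h
      · exact h
      · exact absurd h hpc.ne'
    have h3 : ∀ i, ∑ j, A i j * y j = p i / c i * y i := by
      intro i
      have := congrFun hy i
      rw [hS, h2] at this
      simp only [Pi.zero_apply] at this
      linarith
    have h4 : ∑ i, p i / c i * y i ^ 2 - ∑ i, y i * ∑ j, A i j * y j = 0 := by
      simp only [h3]
      rw [sub_eq_zero]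
      exact Finset.sum_congr rfl fun i _ => by ring
    have h5 := hker y h4
    obtain ⟨i0⟩ := hne
    have h6 : ∀ i, y i = y i0 / c i0 * c i := by
      intro i
      rw [← h5 i i0, div_mul_cancel₀ _ (hc i).ne']
    have h7 : y i0 / c i0 * ∑ i, p i * c i = 0 := by
      rw [← h2, Finset.mul_sum]
      refine Finset.sum_congr rfl fun i _ => ?_
      rw [h6 i]; ring
    have h8 : y i0 / c i0 = 0 := by
      rcases mul_eq_zero.1 h7 with h | h
      · exact h
      · exact absurd h hpc.ne'
    funext i
    rw [h6 i, h8]; simp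
  have hsurj := (LinearMap.injective_iff_surjective (f := S)).1 hinj
  obtain ⟨y, hy⟩ := hsurj (fun i => p i / c i * x i)
  have hy0 : ∑ j, y j * p j = 0 := by
    have h1 := hcS y
    rw [hy] at h1
    have h2 : ∑ i, c i * (p i / c i * x i) = ∑ i, x i * p i := by
      refine Finset.sum_congr rfl fun i _ => ?_
      have := (hc i).ne'
      field_simp
    rw [h2, hx] at h1
    rcases mul_eq_zero.1 h1.symm with h | h
    · exact h
    · exact absurd h hpc.ne'
  have hAy : ∀ i, ∑ j, A i j * y j = p i / c i * (y i - x i) := by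
    intro i
    have := congrFun hy i
    rw [hS, hy0] at this
    linarith
  have hin' := hin y
  have k1 : ∑ i, y i * ∑ j, A i j * y j =
      ∑ i, p i / c i * y i ^ 2 - ∑ i, p i / c i * (x i * y i) := by
    simp only [hAy]
    rw [← Finset.sum_sub_distrib]
    exact Finset.sum_congr rfl fun i _ => by ring
  have k2 : ∑ i, c i * (∑ j, A i j * y j) ^ 2 / p i =
      ∑ i, p i / c i * y i ^ 2 - 2 * ∑ i, p i / c i * (x i * y i) + ∑ i, p i / c i * x i ^ 2 := by
    simp only [hAy]
    rw [Finset.mul_sum, ← Finset.sum_sub_distrib, ← Finset.sum_add_distrib]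
    refine Finset.sum_congr rfl fun i _ => ?_
    have := (hc i).ne'
    have := (hp i).ne'
    field_simp
    ring
  have k3 := hpsd (fun i => x i - y i)
  have k4 : ∑ i, (x i - y i) * ∑ j, A i j * (x j - y j) =
      ∑ i, x i * ∑ j, A i j * x j - 2 * ∑ i, x i * ∑ j, A i j * y j
        + ∑ i, y i * ∑ j, A i j * y j := by
    have := hsym y x
    simp only [mul_sub, sub_mul, Finset.sum_sub_distrib]
    linarith
  have k5 : ∑ i, x i * ∑ j, A i j * y j =
      ∑ i, p i / c i * (x i * y i) - ∑ i, p i / c i * x i ^ 2 := by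
    simp only [hAy]
    rw [← Finset.sum_sub_distrib]
    exact Finset.sum_congr rfl fun i _ => by ring
  have k6 : ∑ i, p i / c i * (x i - y i) ^ 2 =
      ∑ i, p i / c i * x i ^ 2 - 2 * ∑ i, p i / c i * (x i * y i) + ∑ i, p i / c i * y i ^ 2 := by
    rw [Finset.mul_sum, ← Finset.sum_sub_distrib, ← Finset.sum_add_distrib]
    exact Finset.sum_congr rfl fun i _ => by ring
  rw [k4, k6] at k3
  rw [k1, k2] at hin'
  linarith

end HRW


namespace HRW

open Finset

/-- Link of a face in a complex. -/
noncomputable def linkOf {V : Type*} [DecidableEq V] [Fintype V] (Δ : Finset V → Prop)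
    (σ : Finset V) : Finset V := by
  classical exact univ.filter fun H => H ∉ σ ∧ Δ (insert H σ)

theorem mem_linkOf {V : Type*} [DecidableEq V] [Fintype V] {Δ : Finset V → Prop}
    {σ : Finset V} {H : V} : H ∈ linkOf Δ σ ↔ H ∉ σ ∧ Δ (insert H σ) := by
  simp [linkOf]

/-- A balanced unimodular simplicial fan, combinatorially. -/
structure Fan (V : Type*) [DecidableEq V] [Fintype V] where
  Δ : Finset V → Prop
  Lin : Submodule ℝ (V → ℝ)
  D : ℕ
  interp : ∀ σ, Δ σ → ∀ y : V → ℝ, ∃ l ∈ Lin, ∀ H ∈ σ, l H = y H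
  down : ∀ σ H K, Δ σ → Δ (insert K (insert H σ)) → Δ (insert K σ)
  balance : ∀ σ, Δ σ → σ.card + 1 = D → ∀ l ∈ Lin, (∀ H ∈ σ, l H = 0) →
    ∑ H ∈ linkOf Δ σ, l H = 0
  link_nonempty : ∀ σ, Δ σ → σ.card < D → (linkOf Δ σ).Nonempty
  conn : ∀ σ, Δ σ → σ.card + 2 < D → ∀ z : V → ℝ,
    (∀ H ∈ linkOf Δ σ, ∀ K ∈ linkOf Δ (insert H σ), z H = z K) →
    ∀ H ∈ linkOf Δ σ, ∀ K ∈ linkOf Δ σ, z H = z K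

namespace Fan

variable {V : Type*} [DecidableEq V] [Fintype V] (F : Fan V)

noncomputable abbrev link (σ : Finset V) : Finset V := linkOf F.Δ σ

theorem link_pair {σ : Finset V} (hσ : F.Δ σ) (H K : V) :
    (H ∈ F.link σ ∧ K ∈ F.link (insert H σ)) ↔ (H ∈ F.link (insert K σ) ∧ K ∈ F.link σ) := by
  simp only [link, mem_linkOf, Finset.mem_insert, not_or]
  constructor
  · rintro ⟨⟨h1, h2⟩, ⟨h3, h4⟩, h5⟩
    refine ⟨⟨⟨fun h => h3 h.symm, h1⟩, ?_⟩, h4, F.down _ _ _ hσ h5⟩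
    rwa [Finset.insert_comm]
  · rintro ⟨⟨⟨h3, h1⟩, h5⟩, h4, h2⟩
    refine ⟨⟨h1, F.down _ _ _ hσ h5⟩, ⟨fun h => h3 h.symm, h4⟩, ?_⟩
    rwa [Finset.insert_comm]

theorem sum_swap {σ : Finset V} (hσ : F.Δ σ) (f : V → V → ℝ) :
    ∑ H ∈ F.link σ, ∑ K ∈ F.link (insert H σ), f H K =
    ∑ H ∈ F.link σ, ∑ K ∈ F.link (insert H σ), f K H := by
  rw [Finset.sum_comm' (t' := F.link σ) (s' := fun K => F.link (insert K σ))]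
  intro H K
  rw [F.link_pair hσ]

theorem delta_of_link {σ : Finset V} {H : V} (h : H ∈ F.link σ) : F.Δ (insert H σ) :=
  (mem_linkOf.1 h).2

theorem card_of_link {σ : Finset V} {H : V} (h : H ∈ F.link σ) :
    (insert H σ).card = σ.card + 1 :=
  Finset.card_insert_of_notMem (mem_linkOf.1 h).1

open Classical in
/-- a linear function interpolating `y` on `σ`. -/
noncomputable def lin (σ : Finset V) (y : V → ℝ) : V → ℝ :=
  if h : F.Δ σ then Classical.choose (F.interp σ h y) else 0

theorem lin_mem (σ : Finset V) (y : V → ℝ) : F.lin σ y ∈ F.Lin := by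
  unfold lin
  split_ifs with h
  · exact (Classical.choose_spec (F.interp σ h y)).1
  · exact F.Lin.zero_mem

theorem lin_eq {σ : Finset V} (hσ : F.Δ σ) (y : V → ℝ) {H : V} (hH : H ∈ σ) :
    F.lin σ y H = y H := by
  unfold lin
  rw [dif_pos hσ]
  exact (Classical.choose_spec (F.interp σ hσ y)).2 H hH

/-- Mixed degree of a list of piecewise linear functions on the star of `σ`. -/
noncomputable def deg : List (V → ℝ) → Finset V → ℝ
  | [], _ => 1
  | v :: vs, σ => ∑ H ∈ F.link σ, (v H - F.lin σ v H) * deg vs (insert H σ)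

/-- `deg_cons` from vanishing -/
theorem deg_cons_aux {vs : List (V → ℝ)} {σ : Finset V} (hσ : F.Δ σ)
    (hvan : ∀ l ∈ F.Lin, (∀ H ∈ σ, l H = 0) →
      ∑ H ∈ F.link σ, l H * F.deg vs (insert H σ) = 0)
    (v l : V → ℝ) (hl : l ∈ F.Lin) (hlv : ∀ H ∈ σ, l H = v H) :
    F.deg (v :: vs) σ = ∑ H ∈ F.link σ, (v H - l H) * F.deg vs (insert H σ) := by
  have h := hvan (F.lin σ v - l) (F.Lin.sub_mem (F.lin_mem σ v) hl) (by
    intro H hH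
    simp only [Pi.sub_apply, F.lin_eq hσ v hH, hlv H hH, sub_self])
  have h2 : F.deg (v :: vs) σ = ∑ H ∈ F.link σ, (v H - l H) * F.deg vs (insert H σ) -
      ∑ H ∈ F.link σ, (F.lin σ v - l) H * F.deg vs (insert H σ) := by
    rw [← Finset.sum_sub_distrib]
    rw [deg]
    refine Finset.sum_congr rfl fun H _ => ?_
    simp only [Pi.sub_apply]
    ring
  rw [h2, h, sub_zero]

theorem vanish (vs : List (V → ℝ)) : ∀ σ : Finset V, F.Δ σ → σ.card + 1 + vs.length = F.D →
    ∀ l ∈ F.Lin, (∀ H ∈ σ, l H = 0) →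
      ∑ H ∈ F.link σ, l H * F.deg vs (insert H σ) = 0 := by
  induction vs with
  | nil =>
    intro σ hσ hc l hl h0
    simp only [deg, mul_one]
    exact F.balance σ hσ (by simpa using hc) l hl h0
  | cons v vs ih =>
    intro σ hσ hc l hl h0
    simp only [List.length_cons] at hc
    -- interpolation of v on σ
    obtain ⟨lv, hlv, hlv'⟩ := F.interp σ hσ v
    have hK : ∀ H : V, ∃ lH ∈ F.Lin, H ∈ F.link σ → (∀ K ∈ σ, lH K = 0) ∧ lH H = 1 := by
      intro H
      by_cases hH : H ∈ F.link σ
      · obtain ⟨lH, h1, h2⟩ := F.interp (insert H σ) (F.delta_of_link hH)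
          (fun K => if K = H then 1 else 0)
        refine ⟨lH, h1, fun _ => ⟨?_, ?_⟩⟩
        · intro K hK
          rw [h2 K (Finset.mem_insert_of_mem hK), if_neg]
          rintro rfl
          exact (mem_linkOf.1 hH).1 hK
        · rw [h2 H (Finset.mem_insert_self _ _), if_pos rfl]
      · exact ⟨0, F.Lin.zero_mem, fun h => absurd h hH⟩
    choose lH hlH hlH' using hK
    have key : ∀ H ∈ F.link σ, F.deg (v :: vs) (insert H σ) =
        ∑ K ∈ F.link (insert H σ), ((v K - lv K) - (v H - lv H) * lH H K) *
          F.deg vs (insert K (insert H σ)) := by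
      intro H hH
      have hc' : (insert H σ).card + 1 + vs.length = F.D := by
        rw [F.card_of_link hH]; omega
      rw [F.deg_cons_aux (F.delta_of_link hH) (ih _ (F.delta_of_link hH) hc')
        v (lv + (v H - lv H) • lH H)
        (F.Lin.add_mem hlv (F.Lin.smul_mem _ (hlH H)))]
      · refine Finset.sum_congr rfl fun K _ => ?_
        simp only [Pi.add_apply, Pi.smul_apply, smul_eq_mul]
        ring
      · intro K hK
        simp only [Pi.add_apply, Pi.smul_apply, smul_eq_mul]
        rcases Finset.mem_insert.1 hK with rfl | hK
        · rw [(hlH' K hH).2]; ring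
        · rw [(hlH' H hH).1 K hK, hlv' K hK]; ring
    have step : ∑ H ∈ F.link σ, l H * F.deg (v :: vs) (insert H σ) =
        ∑ H ∈ F.link σ, ∑ K ∈ F.link (insert H σ),
          (l H * (v K - lv K)) * F.deg vs (insert K (insert H σ)) -
        ∑ H ∈ F.link σ, ∑ K ∈ F.link (insert H σ),
          (l H * (v H - lv H) * lH H K) * F.deg vs (insert K (insert H σ)) := by
      rw [← Finset.sum_sub_distrib]
      refine Finset.sum_congr rfl fun H hH => ?_
      rw [key H hH, Finset.mul_sum, ← Finset.sum_sub_distrib]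
      exact Finset.sum_congr rfl fun K _ => by ring
    rw [step, F.sum_swap hσ, ← Finset.sum_sub_distrib]
    refine Finset.sum_eq_zero fun H hH => ?_
    have hc' : (insert H σ).card + 1 + vs.length = F.D := by
      rw [F.card_of_link hH]; omega
    have := ih (insert H σ) (F.delta_of_link hH) hc' (l - l H • lH H)
      (F.Lin.sub_mem hl (F.Lin.smul_mem _ (hlH H))) (by
        intro K hK
        simp only [Pi.sub_apply, Pi.smul_apply, smul_eq_mul]
        rcases Finset.mem_insert.1 hK with rfl | hK
        · rw [(hlH' K hH).2]; ring
        · rw [(hlH' H hH).1 K hK, h0 K hK]; ring)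
    rw [← Finset.sum_sub_distrib]
    calc _ = (v H - lv H) * ∑ K ∈ F.link (insert H σ),
          (l - l H • lH H) K * F.deg vs (insert K (insert H σ)) := by
          rw [Finset.mul_sum]
          refine Finset.sum_congr rfl fun K _ => ?_
          simp only [Pi.sub_apply, Pi.smul_apply, smul_eq_mul]
          rw [Finset.insert_comm H K σ]
          ring
      _ = 0 := by rw [this, mul_zero]

theorem deg_cons {vs : List (V → ℝ)} {σ : Finset V} (hσ : F.Δ σ)
    (hc : σ.card + 1 + vs.length = F.D)
    (v l : V → ℝ) (hl : l ∈ F.Lin) (hlv : ∀ H ∈ σ, l H = v H) :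
    F.deg (v :: vs) σ = ∑ H ∈ F.link σ, (v H - l H) * F.deg vs (insert H σ) :=
  F.deg_cons_aux hσ (F.vanish vs σ hσ hc) v l hl hlv

/-- subtracting a linear function from the first argument. -/
theorem deg_sub_lin {vs : List (V → ℝ)} {σ : Finset V} (hσ : F.Δ σ)
    (hc : σ.card + 1 + vs.length = F.D) (v l : V → ℝ) (hl : l ∈ F.Lin) :
    F.deg ((v - l) :: vs) σ = F.deg (v :: vs) σ := by
  obtain ⟨lv, hlv, hlv'⟩ := F.interp σ hσ v
  rw [F.deg_cons hσ hc v lv hlv hlv', F.deg_cons hσ hc (v - l) (lv - l) (F.Lin.sub_mem hlv hl)]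
  · refine Finset.sum_congr rfl fun H _ => ?_
    simp
  · intro H hH; simp [hlv' H hH]

theorem deg_add {vs : List (V → ℝ)} {σ : Finset V} (hσ : F.Δ σ)
    (hc : σ.card + 1 + vs.length = F.D) (v w : V → ℝ) :
    F.deg ((v + w) :: vs) σ = F.deg (v :: vs) σ + F.deg (w :: vs) σ := by
  obtain ⟨lv, hlv, hlv'⟩ := F.interp σ hσ v
  obtain ⟨lw, hlw, hlw'⟩ := F.interp σ hσ w
  rw [F.deg_cons hσ hc v lv hlv hlv', F.deg_cons hσ hc w lw hlw hlw',
    F.deg_cons hσ hc (v + w) (lv + lw) (F.Lin.add_mem hlv hlw), ← Finset.sum_add_distrib]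
  · refine Finset.sum_congr rfl fun H _ => ?_
    simp only [Pi.add_apply]; ring
  · intro H hH; simp [hlv' H hH, hlw' H hH]

theorem deg_smul {vs : List (V → ℝ)} {σ : Finset V} (hσ : F.Δ σ)
    (hc : σ.card + 1 + vs.length = F.D) (a : ℝ) (v : V → ℝ) :
    F.deg ((a • v) :: vs) σ = a * F.deg (v :: vs) σ := by
  obtain ⟨lv, hlv, hlv'⟩ := F.interp σ hσ v
  rw [F.deg_cons hσ hc v lv hlv hlv',
    F.deg_cons hσ hc (a • v) (a • lv) (F.Lin.smul_mem _ hlv), Finset.mul_sum]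
  · refine Finset.sum_congr rfl fun H _ => ?_
    simp only [Pi.smul_apply, smul_eq_mul]; ring
  · intro H hH; simp [hlv' H hH]

/-- chosen dual functions -/
theorem exists_dual {σ : Finset V} :
    ∃ lH : V → V → ℝ, (∀ H, lH H ∈ F.Lin) ∧
      ∀ H ∈ F.link σ, (∀ K ∈ σ, lH H K = 0) ∧ lH H H = 1 := by
  have hK : ∀ H : V, ∃ lH ∈ F.Lin, H ∈ F.link σ → (∀ K ∈ σ, lH K = 0) ∧ lH H = 1 := by
    intro H
    by_cases hH : H ∈ F.link σ
    · obtain ⟨lH, h1, h2⟩ := F.interp (insert H σ) (F.delta_of_link hH)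
        (fun K => if K = H then 1 else 0)
      refine ⟨lH, h1, fun _ => ⟨?_, ?_⟩⟩
      · intro K hK
        rw [h2 K (Finset.mem_insert_of_mem hK), if_neg]
        rintro rfl
        exact (mem_linkOf.1 hH).1 hK
      · rw [h2 H (Finset.mem_insert_self _ _), if_pos rfl]
    · exact ⟨0, F.Lin.zero_mem, fun h => absurd h hH⟩
  choose lH hlH hlH' using hK
  exact ⟨lH, hlH, hlH'⟩

theorem deg_link {vs : List (V → ℝ)} {σ : Finset V}
    (hc : σ.card + 2 + vs.length = F.D) {lH : V → V → ℝ} (hlH : ∀ H, lH H ∈ F.Lin)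
    (hlH' : ∀ H ∈ F.link σ, (∀ K ∈ σ, lH H K = 0) ∧ lH H H = 1)
    (v : V → ℝ) (hv : ∀ K ∈ σ, v K = 0) {H : V} (hH : H ∈ F.link σ) :
    F.deg (v :: vs) (insert H σ) =
        ∑ K ∈ F.link (insert H σ), (v K - v H * lH H K) *
          F.deg vs (insert K (insert H σ)) := by
  have hc' : (insert H σ).card + 1 + vs.length = F.D := by
    rw [F.card_of_link hH]; omega
  rw [F.deg_cons (F.delta_of_link hH) hc' v (v H • lH H) (F.Lin.smul_mem _ (hlH H))]
  · refine Finset.sum_congr rfl fun K _ => ?_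
    simp only [Pi.smul_apply, smul_eq_mul]
  · intro K hK
    simp only [Pi.smul_apply, smul_eq_mul]
    rcases Finset.mem_insert.1 hK with rfl | hK
    · rw [(hlH' K hH).2]; ring
    · rw [(hlH' H hH).1 K hK, hv K hK]; ring

theorem deg_zero_on {vs : List (V → ℝ)} {σ : Finset V} (hσ : F.Δ σ)
    (hc : σ.card + 1 + vs.length = F.D) (v : V → ℝ) (hv : ∀ K ∈ σ, v K = 0) :
    F.deg (v :: vs) σ = ∑ H ∈ F.link σ, v H * F.deg vs (insert H σ) := by
  rw [F.deg_cons hσ hc v 0 F.Lin.zero_mem]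
  · simp
  · intro H hH; simp [hv H hH]

/-- subtracting a linear function from the second argument. -/
theorem deg_sub_lin2 {vs : List (V → ℝ)} {σ : Finset V}
    (hc : σ.card + 2 + vs.length = F.D) (u v l : V → ℝ) (hl : l ∈ F.Lin) :
    F.deg (u :: (v - l) :: vs) σ = F.deg (u :: v :: vs) σ := by
  rw [deg, deg]
  refine Finset.sum_congr rfl fun H hH => ?_
  rw [F.deg_sub_lin (F.delta_of_link hH) (by rw [F.card_of_link hH]; omega) v l hl]

theorem deg_swap {vs : List (V → ℝ)} {σ : Finset V} (hσ : F.Δ σ)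
    (hc : σ.card + 2 + vs.length = F.D) (u v : V → ℝ) :
    F.deg (u :: v :: vs) σ = F.deg (v :: u :: vs) σ := by
  have hc1 : ∀ w : V → ℝ, σ.card + 1 + (w :: vs).length = F.D := by
    intro w; simp only [List.length_cons]; omega
  obtain ⟨lu, hlu, hlu'⟩ := F.interp σ hσ u
  obtain ⟨lv, hlv, hlv'⟩ := F.interp σ hσ v
  rw [← F.deg_sub_lin hσ (hc1 v) u lu hlu, ← F.deg_sub_lin2 hc _ v lv hlv,
    ← F.deg_sub_lin hσ (hc1 u) v lv hlv, ← F.deg_sub_lin2 hc _ u lu hlu]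
  have hu : ∀ K ∈ σ, (u - lu) K = 0 := fun K hK => by simp [hlu' K hK]
  have hv : ∀ K ∈ σ, (v - lv) K = 0 := fun K hK => by simp [hlv' K hK]
  obtain ⟨lH, h1, h2⟩ := F.exists_dual (σ := σ)
  have expand : ∀ a b : V → ℝ, (∀ K ∈ σ, a K = 0) → (∀ K ∈ σ, b K = 0) →
      F.deg (a :: b :: vs) σ =
      ∑ H ∈ F.link σ, ∑ K ∈ F.link (insert H σ),
          (a H * b K) * F.deg vs (insert K (insert H σ)) -
        ∑ H ∈ F.link σ, ∑ K ∈ F.link (insert H σ),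
          (a H * b H * lH H K) * F.deg vs (insert K (insert H σ)) := by
    intro a b ha hb
    rw [F.deg_zero_on hσ (hc1 b) a ha, ← Finset.sum_sub_distrib]
    refine Finset.sum_congr rfl fun H hH => ?_
    rw [F.deg_link hc h1 h2 b hb hH, Finset.mul_sum, ← Finset.sum_sub_distrib]
    exact Finset.sum_congr rfl fun K _ => by ring
  rw [expand _ _ hu hv, expand _ _ hv hu, F.sum_swap hσ]
  congr 1
  · refine Finset.sum_congr rfl fun H _ => Finset.sum_congr rfl fun K _ => ?_
    rw [Finset.insert_comm H K σ]; ring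
  · refine Finset.sum_congr rfl fun H _ => Finset.sum_congr rfl fun K _ => ?_
    ring

theorem deg_perm {vs ws : List (V → ℝ)} (h : vs.Perm ws) : ∀ {σ : Finset V}, F.Δ σ →
    σ.card + vs.length = F.D → F.deg vs σ = F.deg ws σ := by
  induction h with
  | nil => intros; rfl
  | cons x h ih =>
    intro σ hσ hc
    rw [deg, deg]
    refine Finset.sum_congr rfl fun H hH => ?_
    rw [ih (F.delta_of_link hH) (by
      rw [F.card_of_link hH]; simp only [List.length_cons] at hc; omega)]
  | swap x y l =>
    intro σ hσ hc
    exact F.deg_swap hσ (by simp only [List.length_cons] at hc; omega) _ _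
  | trans h1 h2 ih1 ih2 =>
    intro σ hσ hc
    rw [ih1 hσ hc, ih2 hσ (by rw [← h1.length_eq]; exact hc)]

end Fan
end HRW


namespace HRW

open Finset

namespace Fan

variable {V : Type*} [DecidableEq V] [Fintype V] (F : Fan V)

def Ample (v : V → ℝ) : Prop := ∀ τ, F.Δ τ → τ.card < F.D →
  ∃ l ∈ F.Lin, (∀ H ∈ τ, l H = v H) ∧ ∀ H ∈ F.link τ, l H < v H

def Nef (v : V → ℝ) : Prop := ∀ τ, F.Δ τ → τ.card < F.D →
  ∃ l ∈ F.Lin, (∀ H ∈ τ, l H = v H) ∧ ∀ H ∈ F.link τ, l H ≤ v H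

theorem deg_pos (vs : List (V → ℝ)) (hvs : ∀ v ∈ vs, F.Ample v) : ∀ {σ : Finset V}, F.Δ σ →
    σ.card + vs.length = F.D → 0 < F.deg vs σ := by
  induction vs with
  | nil => intro σ _ _; simp [deg]
  | cons v vs ih =>
    intro σ hσ hc
    simp only [List.length_cons] at hc
    obtain ⟨l, hl, h1, h2⟩ := hvs v (by simp) σ hσ (by omega)
    rw [F.deg_cons hσ (by omega) v l hl h1]
    refine Finset.sum_pos (fun H hH => ?_) (F.link_nonempty σ hσ (by omega))
    exact mul_pos (sub_pos.2 (h2 H hH)) (ih (fun u hu => hvs u (by simp [hu])) (F.delta_of_link hH)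
      (by rw [F.card_of_link hH]; omega))

theorem deg_cs {us : List (V → ℝ)} {σ : Finset V} (hσ : F.Δ σ)
    (hc : σ.card + 2 + us.length = F.D) (c : V → ℝ)
    (h : ∀ x, F.deg (x :: c :: us) σ = 0 → F.deg (x :: x :: us) σ ≤ 0) (x v : V → ℝ)
    (hv : 0 < F.deg (v :: v :: us) σ) :
    F.deg (x :: x :: us) σ * F.deg (v :: v :: us) σ ≤ F.deg (x :: v :: us) σ ^ 2 := by
  have hc1 : ∀ w : V → ℝ, σ.card + 1 + (w :: us).length = F.D := by
    intro w; simp only [List.length_cons]; omega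
  have lin1 : ∀ (a b : ℝ) (u w y : V → ℝ), F.deg ((a • u + b • w) :: y :: us) σ =
      a * F.deg (u :: y :: us) σ + b * F.deg (w :: y :: us) σ := by
    intro a b u w y
    rw [F.deg_add hσ (hc1 y), F.deg_smul hσ (hc1 y), F.deg_smul hσ (hc1 y)]
  have lin2 : ∀ (a b : ℝ) (u w y : V → ℝ), F.deg (y :: (a • u + b • w) :: us) σ =
      a * F.deg (u :: y :: us) σ + b * F.deg (w :: y :: us) σ := by
    intro a b u w y
    rw [F.deg_swap hσ hc, lin1]
  set a := F.deg (v :: c :: us) σ with ha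
  set b := F.deg (x :: c :: us) σ with hb
  have hz := h (a • x + (-b) • v) (by rw [lin1, ← ha, ← hb]; ring)
  rw [lin1, lin2, lin2, F.deg_swap hσ hc v x] at hz
  have ha0 : a ≠ 0 := by
    intro h0
    exact absurd (h v h0) (not_le.2 hv)
  have ha2 : 0 < a ^ 2 := by positivity
  set X := F.deg (x :: x :: us) σ
  set Y := F.deg (v :: v :: us) σ
  set Z := F.deg (x :: v :: us) σ
  have e : a ^ 2 * (X * Y - Z ^ 2) ≤ 0 := by
    have e1 : (a * (a * X + -b * Z) + -b * (a * Z + -b * Y)) * Y ≤ 0 :=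
      mul_nonpos_of_nonpos_of_nonneg hz hv.le
    nlinarith [sq_nonneg (b * Y - a * Z)]
  by_contra hcon
  push Not at hcon
  have : 0 < a ^ 2 * (X * Y - Z ^ 2) := mul_pos ha2 (by linarith)
  linarith

/-- Lorentzian property at a face. -/
def Lor (us : List (V → ℝ)) (σ : Finset V) : Prop := ∀ x v : V → ℝ,
  0 < F.deg (v :: v :: us) σ →
  F.deg (x :: x :: us) σ * F.deg (v :: v :: us) σ ≤ F.deg (x :: v :: us) σ ^ 2

theorem lor_step {vs : List (V → ℝ)} {σ : Finset V} (hσ : F.Δ σ) (w : V → ℝ)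
    (hc : σ.card + 3 + vs.length = F.D) (hw : F.Ample w) (hvs : ∀ v ∈ vs, F.Ample v)
    (ih : ∀ H ∈ F.link σ, F.Lor vs (insert H σ)) : F.Lor (w :: vs) σ := by
  classical
  have hcu : σ.card + 2 + (w :: vs).length = F.D := by simp only [List.length_cons]; omega
  have hc1 : ∀ y : V → ℝ, σ.card + 1 + (y :: w :: vs).length = F.D := by
    intro y; simp only [List.length_cons]; omega
  have hwvs : ∀ v ∈ w :: vs, F.Ample v := by
    intro v hv
    rcases List.mem_cons.1 hv with rfl | h
    · exact hw
    · exact hvs v h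
  obtain ⟨l, hl, hl1, hl2⟩ := hw σ hσ (by omega)
  obtain ⟨lH, hd1, hd2⟩ := F.exists_dual (σ := σ)
  let c : V → ℝ := w - l
  have hc0 : ∀ K ∈ σ, c K = 0 := fun K hK => by simp [c, hl1 K hK]
  have hcpos : ∀ K ∈ F.link σ, 0 < c K := fun K hK => by
    simp only [c, Pi.sub_apply]; linarith [hl2 K hK]
  let m : V → V → ℝ := fun H K => F.deg (w :: vs) (insert K (insert H σ))
  have hm : ∀ H ∈ F.link σ, ∀ K ∈ F.link (insert H σ), 0 < m H K := by
    intro H hH K hK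
    refine F.deg_pos (w :: vs) hwvs (F.delta_of_link hK) ?_
    rw [F.card_of_link hK, F.card_of_link hH]; simp only [List.length_cons]; omega
  have hmsymm : ∀ H K, m H K = m K H := by
    intro H K; simp only [m]; rw [Finset.insert_comm]
  let d : V → ℝ := fun H => ∑ K ∈ F.link (insert H σ), lH H K * m H K
  let ι := {H // H ∈ F.link σ}
  let A : ι → ι → ℝ := fun i j =>
    if i = j then - d i else if (j : V) ∈ F.link (insert (i : V) σ) then m i j else 0
  have hsub : ∀ H ∈ F.link σ, ∀ K ∈ F.link (insert H σ), K ∈ F.link σ := fun H hH K hK =>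
    ((F.link_pair hσ H K).1 ⟨hH, hK⟩).2
  have hself : ∀ H, H ∉ F.link (insert H σ) := fun H h =>
    (mem_linkOf.1 h).1 (Finset.mem_insert_self _ _)
  have hA : ∀ y : V → ℝ, (∀ K ∈ σ, y K = 0) → ∀ i : ι,
      ∑ j, A i j * y j = F.deg (y :: w :: vs) (insert (i : V) σ) := by
    intro y hy i
    rw [F.deg_link hcu hd1 hd2 y hy i.2]
    have e1 : ∀ j : ι, A i j * y j = (if i = j then - d i * y j else 0) +
        (if (j : V) ∈ F.link (insert (i : V) σ) then m i j * y j else 0) := by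
      intro j
      by_cases hij : i = j
      · subst hij
        simp [A, hself]
      · simp [A, hij]
    rw [Finset.sum_congr rfl fun j _ => e1 j, Finset.sum_add_distrib]
    have e0 : ∑ j : ι, (if i = j then - d i * y j else 0) = - d i * y i := by
      rw [Finset.sum_eq_single i]
      · rw [if_pos rfl]
      · intro b _ hb; rw [if_neg (Ne.symm hb)]
      · intro h; exact absurd (Finset.mem_univ i) h
    rw [e0]
    have e2 : ∑ j : ι, (if (j : V) ∈ F.link (insert (i : V) σ) then m i j * y j else 0) =
        ∑ K ∈ F.link (insert (i : V) σ), m i K * y K := by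
      rw [Finset.sum_coe_sort (F.link σ)
        (fun K => if K ∈ F.link (insert (i : V) σ) then m i K * y K else 0)]
      rw [← Finset.sum_filter]
      refine Finset.sum_congr ?_ fun _ _ => rfl
      ext K
      simp only [Finset.mem_filter]
      exact ⟨fun h => h.2, fun h => ⟨hsub _ i.2 K h, h⟩⟩
    rw [e2]
    simp only [d]
    rw [neg_mul, Finset.sum_mul, neg_add_eq_sub, ← Finset.sum_sub_distrib]
    refine Finset.sum_congr rfl fun K _ => ?_
    simp only [m]
    ring
  let p : V → ℝ := fun H => F.deg (w :: w :: vs) (insert H σ)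
  have hppos : ∀ H ∈ F.link σ, 0 < p H := by
    intro H hH
    refine F.deg_pos (w :: w :: vs) ?_ (F.delta_of_link hH) ?_
    · intro v hv
      rcases List.mem_cons.1 hv with rfl | h
      · exact hw
      · exact hwvs v h
    · rw [F.card_of_link hH]; simp only [List.length_cons]; omega
  have hpc : ∀ H ∈ F.link σ, F.deg (c :: w :: vs) (insert H σ) = p H := by
    intro H hH
    exact F.deg_sub_lin (F.delta_of_link hH)
      (by rw [F.card_of_link hH]; simp only [List.length_cons]; omega) w l hl
  have hQ : ∀ x y : V → ℝ, (∀ K ∈ σ, x K = 0) → (∀ K ∈ σ, y K = 0) →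
      F.deg (x :: y :: w :: vs) σ = ∑ i : ι, x i * ∑ j, A i j * y j := by
    intro x y hx hy
    rw [F.deg_zero_on hσ (hc1 y) x hx]
    rw [← Finset.sum_coe_sort]
    refine Finset.sum_congr rfl fun i _ => ?_
    rw [hA y hy i]
  have hwq : ∀ x : V → ℝ, F.deg (x :: x :: w :: vs) σ =
      ∑ H ∈ F.link σ, c H * F.deg (x :: x :: vs) (insert H σ) := by
    intro x
    have hp : (x :: x :: w :: vs).Perm (w :: x :: x :: vs) :=
      (List.Perm.cons x (List.Perm.swap w x vs)).trans (List.Perm.swap w x (x :: vs))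
    rw [F.deg_perm hp hσ (by simp only [List.length_cons]; omega)]
    rw [F.deg_cons hσ (by simp only [List.length_cons]; omega) w l hl hl1]
    rfl
  have main : ∀ x : V → ℝ, (∀ K ∈ σ, x K = 0) → F.deg (x :: c :: w :: vs) σ = 0 →
      F.deg (x :: x :: w :: vs) σ ≤ 0 := by
    intro x hx0 hxc
    rw [hQ x x hx0 hx0]
    refine perron A ?_ ?_ (fun i => c i) (fun i => p i) (fun i => hcpos i i.2)
      (fun i => hppos i i.2) ?_ ?_ ?_ (fun i => x i) ?_
    · intro i j
      simp only [A]
      by_cases hij : i = j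
      · subst hij; rfl
      · rw [if_neg hij, if_neg (Ne.symm hij)]
        have : ((j : V) ∈ F.link (insert (i : V) σ)) ↔ ((i : V) ∈ F.link (insert (j : V) σ)) := by
          have := F.link_pair hσ i j
          constructor
          · intro h; exact (this.1 ⟨i.2, h⟩).1
          · intro h; exact (this.2 ⟨h, j.2⟩).2
        by_cases hj : (j : V) ∈ F.link (insert (i : V) σ)
        · rw [if_pos hj, if_pos (this.1 hj), hmsymm]
        · rw [if_neg hj, if_neg (fun h => hj (this.2 h))]
    · intro i j hij
      simp only [A, if_neg hij]
      split_ifs with h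
      · exact (hm i i.2 j h).le
      · exact le_rfl
    · intro i
      rw [hA c hc0 i, hpc i i.2]
    · intro y
      let yt : V → ℝ := fun H => if h : H ∈ F.link σ then y ⟨H, h⟩ else 0
      have hyt : ∀ i : ι, yt i = y i := by
        intro i; simp only [yt]; rw [dif_pos i.2]
      have hyt0 : ∀ K ∈ σ, yt K = 0 := by
        intro K hK
        simp only [yt]
        rw [dif_neg]
        intro h
        exact (mem_linkOf.1 h).1 hK
      have e1 := hQ yt yt hyt0 hyt0
      simp only [hyt] at e1
      rw [← e1, hwq, ← Finset.sum_coe_sort]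
      refine Finset.sum_le_sum fun i _ => ?_
      have e2 := hA yt hyt0 i
      simp only [hyt] at e2
      rw [e2]
      have e3 := ih i i.2 yt w (hppos i i.2)
      rw [mul_div_assoc]
      refine mul_le_mul_of_nonneg_left ?_ (hcpos i i.2).le
      rw [le_div_iff₀ (hppos i i.2)]
      exact e3
    · intro z hz
      have := F.conn σ hσ (by omega) (fun H => if h : H ∈ F.link σ then z ⟨H, h⟩ else 0) ?_
      · intro i j
        have h := this i i.2 j j.2
        simpa using h
      · intro H hH K hK
        have hK' := hsub H hH K hK
        rw [dif_pos hH, dif_pos hK']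
        have hne : (⟨H, hH⟩ : ι) ≠ ⟨K, hK'⟩ := by
          intro h
          have := congrArg Subtype.val h
          simp only at this
          subst this
          exact hself _ hK
        refine hz ⟨H, hH⟩ ⟨K, hK'⟩ hne ?_
        simp only [A, if_neg hne]
        rw [if_pos hK]
        exact hm H hH K hK
    · have e1 := hQ x c hx0 hc0
      rw [hxc] at e1
      rw [e1]
      refine Finset.sum_congr rfl fun i _ => ?_
      rw [hA c hc0 i, hpc i i.2]
  refine F.deg_cs hσ hcu c ?_
  intro x hx
  obtain ⟨lx, hlx, hlx'⟩ := F.interp σ hσ x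
  rw [← F.deg_sub_lin hσ (hc1 x) x lx hlx, ← F.deg_sub_lin2 hcu _ x lx hlx]
  refine main _ (fun K hK => by simp [hlx' K hK]) ?_
  rw [F.deg_sub_lin hσ (hc1 c) x lx hlx, hx]

theorem lorentz (base : ∀ σ, F.Δ σ → σ.card + 2 = F.D → F.Lor [] σ)
    (vs : List (V → ℝ)) (hvs : ∀ v ∈ vs, F.Ample v) : ∀ σ, F.Δ σ →
    σ.card + 2 + vs.length = F.D → F.Lor vs σ := by
  induction vs with
  | nil => intro σ hσ hc; exact base σ hσ (by simpa using hc)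
  | cons w vs ih =>
    intro σ hσ hc
    simp only [List.length_cons] at hc
    refine F.lor_step hσ w (by omega) (hvs w (by simp)) (fun v hv => hvs v (by simp [hv])) ?_
    intro H hH
    exact ih (fun v hv => hvs v (by simp [hv])) _ (F.delta_of_link hH)
      (by rw [F.card_of_link hH]; omega)

theorem nef_add_ample {v w : V → ℝ} (hv : F.Nef v) (hw : F.Ample w) {e : ℝ} (he : 0 < e) :
    F.Ample (v + e • w) := by
  intro τ hτ hc
  obtain ⟨l1, a1, b1, c1⟩ := hv τ hτ hc
  obtain ⟨l2, a2, b2, c2⟩ := hw τ hτ hc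
  refine ⟨l1 + e • l2, F.Lin.add_mem a1 (F.Lin.smul_mem _ a2), ?_, ?_⟩
  · intro H hH; simp [b1 H hH, b2 H hH]
  · intro H hH
    simp only [Pi.add_apply, Pi.smul_apply, smul_eq_mul]
    have := mul_lt_mul_of_pos_left (c2 H hH) he
    linarith [c1 H hH]

theorem deg_continuous (w : V → ℝ) (vs : List (V → ℝ)) : ∀ σ, F.Δ σ →
    σ.card + vs.length = F.D →
    Continuous fun e : ℝ => F.deg (vs.map fun v => v + e • w) σ := by
  induction vs with
  | nil => intro σ _ _; simp only [List.map_nil, deg]; exact continuous_const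
  | cons v vs ih =>
    intro σ hσ hc
    simp only [List.length_cons] at hc
    have : (fun e : ℝ => F.deg ((v :: vs).map fun v => v + e • w) σ) = fun e : ℝ =>
        ∑ H ∈ F.link σ, ((v H - F.lin σ v H) + e * (w H - F.lin σ w H)) *
          F.deg (vs.map fun v => v + e • w) (insert H σ) := by
      funext e
      rw [List.map_cons, F.deg_cons hσ (by rw [List.length_map]; omega) (v + e • w)
        (F.lin σ v + e • F.lin σ w)
        (F.Lin.add_mem (F.lin_mem _ _) (F.Lin.smul_mem _ (F.lin_mem _ _)))]
      · refine Finset.sum_congr rfl fun H _ => ?_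
        simp only [Pi.add_apply, Pi.smul_apply, smul_eq_mul]
        ring
      · intro H hH
        simp [F.lin_eq hσ _ hH]
    rw [this]
    refine continuous_finsetSum _ fun H hH => ?_
    refine Continuous.mul (by fun_prop) ?_
    exact ih _ (F.delta_of_link hH) (by rw [F.card_of_link hH]; omega)

theorem nef_ineq (base : ∀ σ, F.Δ σ → σ.card + 2 = F.D → F.Lor [] σ)
    {w : V → ℝ} (hw : F.Ample w) (vs : List (V → ℝ)) (hvs : ∀ v ∈ vs, F.Nef v)
    {σ : Finset V} (hσ : F.Δ σ) (hc : σ.card + 2 + vs.length = F.D)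
    (x y : V → ℝ) (hy : F.Nef y) :
    F.deg (x :: x :: vs) σ * F.deg (y :: y :: vs) σ ≤ F.deg (x :: y :: vs) σ ^ 2 := by
  have hcont : ∀ a b : V → ℝ, Filter.Tendsto
      (fun e : ℝ => F.deg ((a :: b :: vs).map fun v => v + e • w) σ)
      (nhdsWithin 0 (Set.Ioi 0)) (nhds (F.deg (a :: b :: vs) σ)) := by
    intro a b
    have h := (F.deg_continuous w (a :: b :: vs) σ hσ
      (by simp only [List.length_cons]; omega)).tendsto 0
    simp only [zero_smul, add_zero, List.map_id'] at h
    exact h.mono_left nhdsWithin_le_nhds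
  refine le_of_tendsto_of_tendsto ((hcont x x).mul (hcont y y)) ((hcont x y).pow 2) ?_
  filter_upwards [self_mem_nhdsWithin] with e he
  have he' : (0 : ℝ) < e := he
  simp only [List.map_cons]
  have hA : ∀ v ∈ vs.map (fun v => v + e • w), F.Ample v := by
    intro v hv
    obtain ⟨u, hu, rfl⟩ := List.mem_map.1 hv
    exact F.nef_add_ample (hvs u hu) hw he'
  refine F.lorentz base _ hA σ hσ (by rw [List.length_map]; exact hc) _ _ ?_
  refine F.deg_pos _ ?_ hσ (by simp only [List.length_cons, List.length_map]; omega)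
  intro v hv
  have hyA := F.nef_add_ample hy hw he'
  rcases List.mem_cons.1 hv with rfl | hv
  · exact hyA
  rcases List.mem_cons.1 hv with rfl | hv
  · exact hyA
  exact hA v hv

end Fan
end HRW


namespace HRW

open Finset

/-- Rank function of a loopless matroid. -/
structure RankFn (α : Type*) [DecidableEq α] [Fintype α] where
  R : Finset α → ℕ
  zero : R ∅ = 0
  mono : ∀ {A B : Finset α}, A ⊆ B → R A ≤ R B
  unit : ∀ (e : α) (A : Finset α), R (insert e A) ≤ R A + 1
  loc : ∀ (e f : α) (A : Finset α), R (insert e A) = R A → R (insert f A) = R A →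
    R (insert e (insert f A)) = R A
  loopless : ∀ e, R {e} = 1

namespace RankFn

variable {α : Type*} [DecidableEq α] [Fintype α] (M : RankFn α)

theorem stay {A B : Finset α} (h : A ⊆ B) {e : α} (he : M.R (insert e A) = M.R A) :
    M.R (insert e B) = M.R B := by
  have key : ∀ C : Finset α, M.R (insert e (A ∪ C)) = M.R (A ∪ C) := by
    intro C
    induction C using Finset.induction_on with
    | empty => simpa using he
    | insert f C _ ih =>
      rw [Finset.union_insert]
      by_cases hf : M.R (insert f (A ∪ C)) = M.R (A ∪ C)
      · rw [M.loc _ _ _ ih hf, hf]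
      · have h1 := M.unit f (A ∪ C)
        have h2 := M.mono (Finset.subset_insert f (A ∪ C))
        have h3 := M.unit f (insert e (A ∪ C))
        rw [Finset.insert_comm] at h3
        have h4 := M.mono (Finset.subset_insert e (insert f (A ∪ C)))
        omega
  have := key B
  rwa [Finset.union_eq_right.2 h] at this

def cl (A : Finset α) : Finset α := univ.filter fun e => M.R (insert e A) = M.R A

theorem mem_cl {A : Finset α} {e : α} : e ∈ M.cl A ↔ M.R (insert e A) = M.R A := by
  simp [cl]

theorem subset_cl (A : Finset α) : A ⊆ M.cl A := by
  intro e he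
  rw [mem_cl, Finset.insert_eq_of_mem he]

theorem R_union {A : Finset α} (C : Finset α) (h : C ⊆ M.cl A) : M.R (A ∪ C) = M.R A := by
  induction C using Finset.induction_on with
  | empty => simp
  | insert f C _ ih =>
    rw [Finset.union_insert]
    have hf : f ∈ M.cl A := h (Finset.mem_insert_self _ _)
    rw [mem_cl] at hf
    rw [M.stay Finset.subset_union_left hf, ih (fun x hx => h (Finset.mem_insert_of_mem hx))]

theorem R_cl (A : Finset α) : M.R (M.cl A) = M.R A := by
  have := M.R_union (A := A) (M.cl A) (Finset.Subset.refl _)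
  rwa [Finset.union_eq_right.2 (M.subset_cl A)] at this

def Flat (A : Finset α) : Prop := ∀ e, e ∉ A → M.R (insert e A) = M.R A + 1

theorem flat_cl (A : Finset α) : M.Flat (M.cl A) := by
  intro e he
  have h1 := M.unit e (M.cl A)
  have h2 := M.mono (Finset.subset_insert e (M.cl A))
  have h3 : M.R (insert e (M.cl A)) ≠ M.R (M.cl A) := by
    intro h
    apply he
    rw [mem_cl]
    rw [M.R_cl] at h
    have h4 := M.mono (Finset.insert_subset_insert e (M.subset_cl A))
    have h5 := M.mono (Finset.subset_insert e A)
    omega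
  omega

theorem cl_subset {A G : Finset α} (hG : M.Flat G) (h : A ⊆ G) : M.cl A ⊆ G := by
  intro e he
  by_contra hn
  rw [mem_cl] at he
  have := M.stay h he
  have := hG e hn
  omega

theorem cl_flat {G : Finset α} (hG : M.Flat G) : M.cl G = G :=
  Finset.Subset.antisymm (M.cl_subset hG (Finset.Subset.refl _)) (M.subset_cl G)

theorem flat_lt {A B : Finset α} (hA : M.Flat A) (h : A ⊂ B) : M.R A < M.R B := by
  obtain ⟨e, he, hn⟩ := Finset.exists_of_ssubset h
  have := hA e hn
  have := M.mono (Finset.insert_subset he h.1)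
  omega

theorem flat_eq {A B : Finset α} (hA : M.Flat A) (h : A ⊆ B) (hr : M.R B ≤ M.R A) : A = B := by
  by_contra hne
  have := M.flat_lt hA (h.ssubset_of_ne hne)
  omega

theorem flat_univ : M.Flat (univ : Finset α) := fun e he => absurd (Finset.mem_univ e) he

theorem flat_empty : M.Flat (∅ : Finset α) := by
  intro e _
  rw [M.zero]
  simpa using M.loopless e

theorem R_eq_zero {A : Finset α} (h : M.R A = 0) : A = ∅ := by
  rw [Finset.eq_empty_iff_forall_notMem]
  intro e he
  have := M.mono (Finset.singleton_subset_iff.2 he)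
  rw [M.loopless] at this
  omega

theorem R_cl_insert {A : Finset α} (hA : M.Flat A) {e : α} (he : e ∉ A) :
    M.R (M.cl (insert e A)) = M.R A + 1 := by
  rw [M.R_cl, hA e he]

theorem cover_eq {A H : Finset α} (hA : M.Flat A) {e : α} (he : e ∉ A) (hH : M.Flat H)
    (hAH : A ⊆ H) (heH : e ∈ H) (hr : M.R H = M.R A + 1) : M.cl (insert e A) = H := by
  refine M.flat_eq (M.flat_cl _) (M.cl_subset hH (Finset.insert_subset heH hAH)) ?_
  rw [M.R_cl_insert hA he, hr]

theorem subset_cl_insert (A : Finset α) (e : α) : A ⊆ M.cl (insert e A) :=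
  (Finset.subset_insert _ _).trans (M.subset_cl _)

theorem mem_cl_insert (A : Finset α) (e : α) : e ∈ M.cl (insert e A) :=
  M.subset_cl _ (Finset.mem_insert_self _ _)

/-- flats of any intermediate rank avoiding an element. -/
theorem exists_avoid {F G : Finset α} (hF : M.Flat F) (hG : M.Flat G) (hFG : F ⊆ G) {i : α}
    (hi : i ∈ G) (hiF : i ∉ F) (k : ℕ) (h1 : M.R F ≤ k) (h2 : k < M.R G) :
    ∃ H, M.Flat H ∧ F ⊆ H ∧ H ⊆ G ∧ i ∉ H ∧ M.R H = k := by
  induction k, h1 using Nat.le_induction with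
  | base => exact ⟨F, hF, Finset.Subset.refl _, hFG, hiF, rfl⟩
  | succ k hk ih =>
    obtain ⟨H, a1, a2, a3, a4, a5⟩ := ih (by omega)
    have hsub : M.cl (insert i H) ⊆ G := M.cl_subset hG (Finset.insert_subset hi a3)
    have hr := M.R_cl_insert a1 a4
    have hss : M.cl (insert i H) ⊂ G := by
      refine hsub.ssubset_of_ne ?_
      intro h
      rw [h] at hr
      omega
    obtain ⟨j, hj, hjn⟩ := Finset.exists_of_ssubset hss
    have hjH : j ∉ H := fun h => hjn (M.subset_cl_insert _ _ h)
    refine ⟨M.cl (insert j H), M.flat_cl _, a2.trans (M.subset_cl_insert _ _),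
      M.cl_subset hG (Finset.insert_subset hj a3), ?_, ?_⟩
    · intro h
      have := M.cover_eq a1 a4 (M.flat_cl _) (M.subset_cl_insert _ _) h (M.R_cl_insert a1 hjH)
      exact hjn (this ▸ M.mem_cl_insert _ _)
    · rw [M.R_cl_insert a1 hjH, a5]

theorem exists_between {F G : Finset α} (hF : M.Flat F) (hG : M.Flat G) (hFG : F ⊆ G)
    (k : ℕ) (h1 : M.R F ≤ k) (h2 : k < M.R G) :
    ∃ H, M.Flat H ∧ F ⊆ H ∧ H ⊆ G ∧ M.R H = k := by
  have : F ⊂ G := hFG.ssubset_of_ne (by rintro rfl; omega)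
  obtain ⟨i, hi, hiF⟩ := Finset.exists_of_ssubset this
  obtain ⟨H, a1, a2, a3, _, a5⟩ := M.exists_avoid hF hG hFG hi hiF k h1 h2
  exact ⟨H, a1, a2, a3, a5⟩

open Classical in
/-- covers of `F` inside `G` -/
noncomputable def cov (F G : Finset α) : Finset (Finset α) :=
  univ.filter fun H => M.Flat H ∧ F ⊆ H ∧ H ⊆ G ∧ M.R H = M.R F + 1

theorem mem_cov {F G H : Finset α} :
    H ∈ M.cov F G ↔ M.Flat H ∧ F ⊆ H ∧ H ⊆ G ∧ M.R H = M.R F + 1 := by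
  simp [cov]

theorem sum_cov_aux {F G : Finset α} (hF : M.Flat F) (hG : M.Flat G) (hFG : F ⊆ G) (c : α → ℝ) :
    ∑ H ∈ M.cov F G, ∑ i ∈ H \ F, c i = ∑ i ∈ G \ F, c i := by
  have := Finset.sum_fiberwise_of_maps_to (s := G \ F) (t := M.cov F G)
    (g := fun i => M.cl (insert i F)) (f := c) (by
      intro i hi
      rw [Finset.mem_sdiff] at hi
      rw [mem_cov]
      exact ⟨M.flat_cl _, M.subset_cl_insert _ _,
        M.cl_subset hG (Finset.insert_subset hi.1 hFG), M.R_cl_insert hF hi.2⟩)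
  rw [← this]
  refine Finset.sum_congr rfl fun H hH => ?_
  obtain ⟨a1, a2, a3, a4⟩ := M.mem_cov.1 hH
  refine Finset.sum_congr ?_ fun _ _ => rfl
  ext i
  simp only [Finset.mem_sdiff, Finset.mem_filter]
  constructor
  · rintro ⟨b1, b2⟩
    exact ⟨⟨a3 b1, b2⟩, M.cover_eq hF b2 a1 a2 b1 a4⟩
  · rintro ⟨⟨_, b2⟩, b3⟩
    exact ⟨b3 ▸ M.mem_cl_insert _ _, b2⟩

/-- linear functions -/
def Lin (α : Type*) [DecidableEq α] [Fintype α] : Submodule ℝ (Finset α → ℝ) where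
  carrier := {l | ∃ (k : ℝ) (c : α → ℝ), ∀ H, l H = k + ∑ i ∈ H, c i}
  add_mem' := by
    rintro a b ⟨k, c, h⟩ ⟨k', c', h'⟩
    refine ⟨k + k', c + c', fun H => ?_⟩
    simp only [Pi.add_apply, h, h', Finset.sum_add_distrib]; ring
  zero_mem' := ⟨0, 0, fun H => by simp⟩
  smul_mem' := by
    rintro t a ⟨k, c, h⟩
    refine ⟨t * k, t • c, fun H => ?_⟩
    simp only [Pi.smul_apply, smul_eq_mul, h, ← Finset.mul_sum]; ring

theorem mem_Lin {l : Finset α → ℝ} :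
    l ∈ Lin α ↔ ∃ (k : ℝ) (c : α → ℝ), ∀ H, l H = k + ∑ i ∈ H, c i := Iff.rfl

theorem sum_cov {F G : Finset α} (hF : M.Flat F) (hG : M.Flat G) (hFG : F ⊆ G)
    {l : Finset α → ℝ} (hl : l ∈ Lin α) : ∑ H ∈ M.cov F G, (l H - l F) = l G - l F := by
  obtain ⟨k, c, h⟩ := mem_Lin.1 hl
  have e : ∀ H, F ⊆ H → l H - l F = ∑ i ∈ H \ F, c i := by
    intro H hH
    rw [h, h, ← Finset.sum_sdiff hH]; ring
  rw [e G hFG, ← M.sum_cov_aux hF hG hFG]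
  exact Finset.sum_congr rfl fun H hH => e H (M.mem_cov.1 hH).2.1

/-- given values on points, find an additive function with these values -/
theorem exists_lin_points {F : Finset α} (hF : M.Flat F) (y : Finset α → ℝ) :
    ∃ l ∈ Lin α, ∀ H, M.Flat H → F ⊆ H → M.R H = M.R F + 1 → l H - l F = y H := by
  classical
  let c : α → ℝ := fun i => y (M.cl (insert i F)) / ((M.cl (insert i F)) \ F).card
  refine ⟨fun H => 0 + ∑ i ∈ H, c i, ⟨0, c, fun H => rfl⟩, ?_⟩
  intro H hH hFH hr
  have e : ∑ i ∈ H \ F, c i = y H := by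
    have hne : (H \ F).Nonempty := by
      rw [Finset.sdiff_nonempty]
      intro h
      have := M.mono h
      omega
    have : ∀ i ∈ H \ F, c i = y H / (H \ F).card := by
      intro i hi
      rw [Finset.mem_sdiff] at hi
      simp only [c]
      rw [M.cover_eq hF hi.2 hH hFH hi.1 hr]
    rw [Finset.sum_congr rfl this, Finset.sum_const, nsmul_eq_mul]
    have : ((H \ F).card : ℝ) ≠ 0 := by
      exact_mod_cast hne.card_pos.ne'
    field_simp
  simp only
  rw [← e, ← Finset.sum_sdiff hFH]; ring

/-- signed Möbius-type numbers -/
noncomputable def B (G : Finset α) : ℝ :=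
  ∑ X ∈ univ.filter (fun X => M.cl X = G), (-1 : ℝ) ^ (X.card + M.R G)

theorem B_empty : M.B ∅ = 1 := by
  have : (univ.filter (fun X => M.cl X = ∅)) = {(∅ : Finset α)} := by
    ext X
    simp only [Finset.mem_filter, Finset.mem_univ, true_and, Finset.mem_singleton]
    constructor
    · intro h
      have := M.subset_cl X
      rw [h] at this
      exact Finset.subset_empty.1 this
    · rintro rfl
      exact M.cl_flat M.flat_empty
  unfold B
  rw [this]
  simp [M.zero]

open Classical in
noncomputable def cocov (G : Finset α) (i : α) : Finset (Finset α) :=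
  univ.filter fun H => M.Flat H ∧ H ⊆ G ∧ i ∉ H ∧ M.R H + 1 = M.R G

theorem mem_cocov {G H : Finset α} {i : α} :
    H ∈ M.cocov G i ↔ M.Flat H ∧ H ⊆ G ∧ i ∉ H ∧ M.R H + 1 = M.R G := by
  simp [cocov]

theorem B_rec {G : Finset α} (hG : M.Flat G) {i : α} (hi : i ∈ G) :
    M.B G = ∑ H ∈ M.cocov G i, M.B H := by
  -- split by whether i ∈ X
  have hR : M.R G ≠ 0 := fun h => by
    have := M.R_eq_zero h
    subst this
    simp at hi
  have hcl : ∀ X, M.cl X = G → M.cl (insert i X) = G := by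
    intro X hX
    refine Finset.Subset.antisymm (M.cl_subset hG ?_) ?_
    · exact Finset.insert_subset hi (hX ▸ M.subset_cl X)
    · rw [← hX]
      exact M.cl_subset (M.flat_cl _) (M.subset_cl_insert _ _)
  -- sum over Y not containing i
  let f : Finset α → ℝ := fun X => if M.cl X = G then (-1 : ℝ) ^ (X.card + M.R G) else 0
  have e1 : M.B G = ∑ X, f X := by
    simp only [B, f, Finset.sum_filter]
  have e2 : ∑ X, f X = ∑ Y ∈ univ.filter (fun Y : Finset α => i ∉ Y), (f Y + f (insert i Y)) := by
    rw [← Finset.sum_filter_add_sum_filter_not univ (fun Y : Finset α => i ∉ Y),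
      Finset.sum_add_distrib]
    congr 1
    refine Finset.sum_bij' (fun X _ => X.erase i) (fun Y _ => insert i Y) ?_ ?_ ?_ ?_ ?_
    · intro X _; simp
    · intro Y _; simp
    · intro X hX
      simp only [Finset.mem_filter, Finset.mem_univ, true_and, not_not] at hX
      exact Finset.insert_erase hX
    · intro Y hY
      simp only [Finset.mem_filter, Finset.mem_univ, true_and] at hY
      exact Finset.erase_insert hY
    · intro X hX
      simp only [Finset.mem_filter, Finset.mem_univ, true_and, not_not] at hX
      rw [Finset.insert_erase hX]
  have e3 : ∀ Y : Finset α, i ∉ Y → f Y + f (insert i Y) =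
      if M.cl Y ∈ M.cocov G i then (-1 : ℝ) ^ (Y.card + M.R (M.cl Y)) else 0 := by
    intro Y hY
    simp only [f]
    by_cases h1 : M.cl Y = G
    · have : ¬ M.cl Y ∈ M.cocov G i := by
        rw [mem_cocov, h1]
        intro h
        exact h.2.2.1 hi
      rw [if_pos h1, if_pos (hcl Y h1), if_neg this, Finset.card_insert_of_notMem hY]
      ring
    · rw [if_neg h1]
      by_cases h2 : M.cl (insert i Y) = G
      · have hi' : i ∉ M.cl Y := by
          intro h
          apply h1
          rw [← h2]
          refine Finset.Subset.antisymm ?_ ?_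
          · exact M.cl_subset (M.flat_cl _) (M.subset_cl_insert _ _)
          · exact M.cl_subset (M.flat_cl _) (Finset.insert_subset h (M.subset_cl _))
        have hr : M.R (M.cl Y) + 1 = M.R G := by
          have a1 : M.R (insert i Y) ≠ M.R Y := fun h => hi' (M.mem_cl.2 h)
          have a2 := M.unit i Y
          have a3 := M.mono (Finset.subset_insert i Y)
          have a4 : M.R G = M.R (insert i Y) := by rw [← h2, M.R_cl]
          rw [M.R_cl]
          omega
        have : M.cl Y ∈ M.cocov G i := by
          rw [mem_cocov]
          refine ⟨M.flat_cl _, ?_, hi', hr⟩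
          rw [← h2]
          exact M.cl_subset (M.flat_cl _) (M.subset_cl_insert _ _)
        rw [if_pos h2, if_pos this, Finset.card_insert_of_notMem hY, ← hr]
        ring
      · have : ¬ M.cl Y ∈ M.cocov G i := by
          rw [mem_cocov]
          rintro ⟨a1, a2, a3, a4⟩
          apply h2
          refine M.flat_eq (M.flat_cl _) (M.cl_subset hG
            (Finset.insert_subset hi ((M.subset_cl Y).trans a2))) ?_
          rw [M.R_cl]
          have b1 : M.R (insert i Y) ≠ M.R Y := fun h => a3 (M.mem_cl.2 h)
          have b3 := M.mono (Finset.subset_insert i Y)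
          rw [M.R_cl] at a4
          omega
        rw [if_neg h2, if_neg this]; ring
  rw [e1, e2, Finset.sum_congr rfl fun Y hY => e3 Y (Finset.mem_filter.1 hY).2]
  rw [← Finset.sum_filter]
  rw [← Finset.sum_fiberwise_of_maps_to (t := M.cocov G i) (g := fun Y => M.cl Y)
    (fun Y hY => (Finset.mem_filter.1 hY).2)]
  refine Finset.sum_congr rfl fun H hH => ?_
  unfold B
  refine Finset.sum_congr ?_ ?_
  · ext Y
    simp only [Finset.mem_filter, Finset.mem_univ, true_and]
    constructor
    · rintro ⟨_, h⟩; exact h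
    · intro h
      refine ⟨⟨?_, h ▸ hH⟩, h⟩
      intro hiY
      exact (M.mem_cocov.1 hH).2.2.1 (h ▸ M.subset_cl Y hiY)
  · intro Y hY
    simp only [Finset.mem_filter] at hY
    rw [hY.2]

theorem B_pos (n : ℕ) : ∀ {G : Finset α}, M.Flat G → M.R G = n → 0 < M.B G := by
  induction n with
  | zero =>
    intro G _ h
    rw [M.R_eq_zero h, B_empty]; norm_num
  | succ n ih =>
    intro G hG h
    have hne : G.Nonempty := by
      rw [Finset.nonempty_iff_ne_empty]
      rintro rfl
      rw [M.zero] at h; omega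
    obtain ⟨i, hi⟩ := hne
    rw [M.B_rec hG hi]
    refine Finset.sum_pos ?_ ?_
    · intro H hH
      obtain ⟨a1, a2, a3, a4⟩ := M.mem_cocov.1 hH
      exact ih a1 (by omega)
    · obtain ⟨H, a1, _, a3, a4, a5⟩ := M.exists_avoid M.flat_empty hG (Finset.empty_subset _) hi
        (Finset.notMem_empty i) n (by rw [M.zero]; omega) (by omega)
      exact ⟨H, M.mem_cocov.2 ⟨a1, a3, a4, by omega⟩⟩

end RankFn
end HRW


namespace HRW

open Finset

namespace RankFn

variable {α : Type*} [DecidableEq α] [Fintype α] (M : RankFn α)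

/-- chains of flats containing both extremes -/
def Chain (σ : Finset (Finset α)) : Prop :=
  (∀ H ∈ σ, M.Flat H) ∧ (∀ H ∈ σ, ∀ K ∈ σ, H ⊆ K ∨ K ⊆ H) ∧ ∅ ∈ σ ∧ univ ∈ σ

theorem chain_le {σ : Finset (Finset α)} (hσ : M.Chain σ) {H K : Finset α} (hH : H ∈ σ)
    (hK : K ∈ σ) (h : M.R H ≤ M.R K) : H ⊆ K := by
  rcases hσ.2.1 H hH K hK with h1 | h1
  · exact h1
  · rw [M.flat_eq (hσ.1 K hK) h1 h]

theorem chain_inj {σ : Finset (Finset α)} (hσ : M.Chain σ) {H K : Finset α} (hH : H ∈ σ)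
    (hK : K ∈ σ) (h : M.R H = M.R K) : H = K :=
  Finset.Subset.antisymm (M.chain_le hσ hH hK h.le) (M.chain_le hσ hK hH h.ge)

def missing (σ : Finset (Finset α)) : Finset ℕ := range (M.R univ + 1) \ σ.image M.R

theorem mem_missing {σ : Finset (Finset α)} {a : ℕ} :
    a ∈ M.missing σ ↔ a ≤ M.R univ ∧ ∀ H ∈ σ, M.R H ≠ a := by
  simp only [missing, Finset.mem_sdiff, Finset.mem_range, Finset.mem_image, not_exists, not_and]
  rw [Nat.lt_succ_iff]

theorem card_missing {σ : Finset (Finset α)} (hσ : M.Chain σ) :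
    (M.missing σ).card + σ.card = M.R univ + 1 := by
  have h1 : σ.image M.R ⊆ range (M.R univ + 1) := by
    intro a ha
    obtain ⟨H, _, rfl⟩ := Finset.mem_image.1 ha
    have := M.mono (Finset.subset_univ H)
    simp only [Finset.mem_range]; omega
  have h2 : (σ.image M.R).card = σ.card :=
    Finset.card_image_of_injOn fun H hH K hK h => M.chain_inj hσ hH hK h
  have h3 := Finset.card_sdiff_add_card_eq_card h1
  rw [Finset.card_range, h2] at h3
  exact h3

theorem chain_insert {σ : Finset (Finset α)} (hσ : M.Chain σ) {H : Finset α} :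
    M.Chain (insert H σ) ↔ M.Flat H ∧ ∀ K ∈ σ, H ⊆ K ∨ K ⊆ H := by
  constructor
  · intro h
    exact ⟨h.1 H (Finset.mem_insert_self _ _), fun K hK =>
      h.2.1 H (Finset.mem_insert_self _ _) K (Finset.mem_insert_of_mem hK)⟩
  · rintro ⟨h1, h2⟩
    refine ⟨?_, ?_, Finset.mem_insert_of_mem hσ.2.2.1, Finset.mem_insert_of_mem hσ.2.2.2⟩
    · intro K hK
      rcases Finset.mem_insert.1 hK with rfl | hK
      · exact h1
      · exact hσ.1 K hK
    · intro K hK0 L hL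
      rcases Finset.mem_insert.1 hK0 with rfl | hK
      · rcases Finset.mem_insert.1 hL with rfl | hL
        · exact Or.inl (Finset.Subset.refl _)
        · exact h2 L hL
      · rcases Finset.mem_insert.1 hL with rfl | hL
        · exact (h2 K (by assumption)).symm
        · exact hσ.2.1 K hK L hL

theorem mem_link {σ : Finset (Finset α)} (hσ : M.Chain σ) {H : Finset α} :
    H ∈ linkOf M.Chain σ ↔ H ∉ σ ∧ M.Flat H ∧ ∀ K ∈ σ, H ⊆ K ∨ K ⊆ H := by
  rw [mem_linkOf, M.chain_insert hσ]

theorem missing_insert {σ : Finset (Finset α)} {H : Finset α} :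
    M.missing (insert H σ) = (M.missing σ).erase (M.R H) := by
  ext a
  simp only [mem_missing, Finset.mem_erase, Finset.forall_mem_insert]
  constructor
  · rintro ⟨h1, h2, h3⟩
    exact ⟨h2.symm, h1, h3⟩
  · rintro ⟨h1, h2, h3⟩
    exact ⟨h2, h1.symm, h3⟩

theorem link_rank {σ : Finset (Finset α)} (hσ : M.Chain σ) {H : Finset α}
    (hH : H ∈ linkOf M.Chain σ) : M.R H ∈ M.missing σ := by
  rw [mem_missing]
  refine ⟨M.mono (Finset.subset_univ _), fun K hK h => ?_⟩
  have h1 := mem_linkOf.1 hH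
  have := M.chain_inj h1.2 (Finset.mem_insert_self _ _) (Finset.mem_insert_of_mem hK) h.symm
  exact h1.1 (this ▸ hK)

/-- comparability with chain members is determined by rank -/
theorem link_le {σ : Finset (Finset α)} {H K : Finset α}
    (hH : H ∈ linkOf M.Chain σ) (hK : K ∈ σ) (h : M.R H ≤ M.R K) : H ⊆ K :=
  M.chain_le (mem_linkOf.1 hH).2 (Finset.mem_insert_self _ _) (Finset.mem_insert_of_mem hK) h

theorem link_ge {σ : Finset (Finset α)} {H K : Finset α}
    (hH : H ∈ linkOf M.Chain σ) (hK : K ∈ σ) (h : M.R K ≤ M.R H) : K ⊆ H :=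
  M.chain_le (mem_linkOf.1 hH).2 (Finset.mem_insert_of_mem hK) (Finset.mem_insert_self _ _) h

theorem gap {σ : Finset (Finset α)} (hσ : M.Chain σ) {a : ℕ} (ha : a ∈ M.missing σ) :
    ∃ F ∈ σ, ∃ G ∈ σ, M.R F < a ∧ a < M.R G ∧ F ⊆ G ∧ ∀ K ∈ σ, K ⊆ F ∨ G ⊆ K := by
  rw [mem_missing] at ha
  obtain ⟨F, hF, hF'⟩ := Finset.exists_max_image (σ.filter fun K => M.R K < a) M.R
    ⟨∅, Finset.mem_filter.2 ⟨hσ.2.2.1, by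
      have := ha.2 ∅ hσ.2.2.1
      rw [M.zero] at *; omega⟩⟩
  obtain ⟨G, hG, hG'⟩ := Finset.exists_min_image (σ.filter fun K => a < M.R K) M.R
    ⟨univ, Finset.mem_filter.2 ⟨hσ.2.2.2, by
      have := ha.2 univ hσ.2.2.2
      omega⟩⟩
  rw [Finset.mem_filter] at hF hG
  refine ⟨F, hF.1, G, hG.1, hF.2, hG.2, M.chain_le hσ hF.1 hG.1 (by omega), fun K hK => ?_⟩
  rcases lt_or_gt_of_ne (ha.2 K hK) with h | h
  · exact Or.inl (M.chain_le hσ hK hF.1 (hF' K (Finset.mem_filter.2 ⟨hK, h⟩)))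
  · exact Or.inr (M.chain_le hσ hG.1 hK (hG' K (Finset.mem_filter.2 ⟨hK, h⟩)))

theorem between_link {σ : Finset (Finset α)} (hσ : M.Chain σ) {F G H : Finset α}
    (hg : ∀ K ∈ σ, K ⊆ F ∨ G ⊆ K) (hH : M.Flat H) (hFH : F ⊆ H) (hHG : H ⊆ G)
    (h1 : M.R F < M.R H) (h2 : M.R H < M.R G) : H ∈ linkOf M.Chain σ := by
  rw [M.mem_link hσ]
  refine ⟨fun h => ?_, hH, fun K hK => ?_⟩
  · rcases hg H h with h | h
    · have := M.mono h; omega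
    · have := M.mono h; omega
  · rcases hg K hK with h | h
    · exact Or.inr (h.trans hFH)
    · exact Or.inl (hHG.trans h)

theorem adj_link {σ : Finset (Finset α)} (hσ : M.Chain σ) {H K : Finset α}
    (hH : H ∈ linkOf M.Chain σ) (hK : K ∈ linkOf M.Chain σ) (hne : H ≠ K) (h : H ⊆ K ∨ K ⊆ H) :
    K ∈ linkOf M.Chain (insert H σ) := by
  rw [M.mem_link (mem_linkOf.1 hH).2]
  rw [M.mem_link hσ] at hK
  refine ⟨?_, hK.2.1, ?_⟩
  · rw [Finset.mem_insert, not_or]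
    exact ⟨hne.symm, hK.1⟩
  · intro L hL
    rcases Finset.mem_insert.1 hL with rfl | hL
    · exact h.symm
    · exact hK.2.2 L hL

theorem chain_interp (σ : Finset (Finset α)) :
    (∀ H ∈ σ, ∀ K ∈ σ, H ⊆ K ∨ K ⊆ H) → ∀ y : Finset α → ℝ,
      ∃ l ∈ Lin α, ∀ H ∈ σ, l H = y H := by
  refine Finset.induction_on_max_value (ι := Finset α) Finset.card σ ?_ ?_
  · exact fun _ y => ⟨0, (Lin α).zero_mem, by simp⟩
  · intro G s hG hmax ih hc y
    obtain ⟨l, hl, hly⟩ := ih (fun H hH K hK => hc H (Finset.mem_insert_of_mem hH) K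
      (Finset.mem_insert_of_mem hK)) y
    rcases s.eq_empty_or_nonempty with rfl | hs
    · refine ⟨fun _ => y G, mem_Lin.2 ⟨y G, 0, by simp⟩, by simp⟩
    · obtain ⟨T, hT, hT'⟩ := Finset.exists_max_image s Finset.card hs
      have hTG : T ⊆ G := by
        rcases hc T (Finset.mem_insert_of_mem hT) G (Finset.mem_insert_self _ _) with h | h
        · exact h
        · rw [Finset.eq_of_subset_of_card_le h (hmax T hT)]
      have hss : T ⊂ G := hTG.ssubset_of_ne (by rintro rfl; exact hG hT)
      obtain ⟨i, hi, hiT⟩ := Finset.exists_of_ssubset hss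
      refine ⟨l + (y G - l G) • (fun H => if i ∈ H then (1 : ℝ) else 0),
        (Lin α).add_mem hl ((Lin α).smul_mem _ (mem_Lin.2 ⟨0, Pi.single i 1, fun H => ?_⟩)), ?_⟩
      · simp [Finset.sum_pi_single]
      · intro H hH
        simp only [Pi.add_apply, Pi.smul_apply, smul_eq_mul]
        rcases Finset.mem_insert.1 hH with rfl | hH
        · rw [if_pos hi]; ring
        · have hHT : H ⊆ T := by
            rcases hc H (Finset.mem_insert_of_mem hH) T (Finset.mem_insert_of_mem hT) with h | h
            · exact h
            · rw [Finset.eq_of_subset_of_card_le h (hT' H hH)]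
          rw [if_neg (fun h => hiT (hHT h)), hly H hH]; ring

theorem exists_rank {σ : Finset (Finset α)} {a : ℕ} (ha : a ≤ M.R univ) (h : a ∉ M.missing σ) :
    ∃ H ∈ σ, M.R H = a := by
  rw [mem_missing] at h
  by_contra hn
  push Not at hn
  exact h ⟨ha, hn⟩

theorem missing_pos {σ : Finset (Finset α)} (hσ : M.Chain σ) {a : ℕ} (ha : a ∈ M.missing σ) :
    0 < a ∧ a < M.R univ := by
  rw [mem_missing] at ha
  have h1 := ha.2 ∅ hσ.2.2.1
  have h2 := ha.2 univ hσ.2.2.2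
  rw [M.zero] at h1
  omega

theorem mem_link_of_rank {τ : Finset (Finset α)} (hτ : M.Chain τ) {F G H : Finset α}
    (hF : F ∈ τ) (hG : G ∈ τ) (hr : M.R G = M.R F + 2) (hm : M.R F + 1 ∈ M.missing τ) :
    H ∈ M.cov F G ↔ H ∈ linkOf M.Chain τ ∧ M.R H = M.R F + 1 := by
  rw [mem_cov]
  rw [mem_missing] at hm
  constructor
  · rintro ⟨h1, h2, h3, h4⟩
    refine ⟨M.between_link hτ (F := F) (G := G) ?_ h1 h2 h3 (by omega) (by omega), h4⟩
    intro K hK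
    have := hm.2 K hK
    rcases lt_or_gt_of_ne this with h | h
    · exact Or.inl (M.chain_le hτ hK hF (by omega))
    · exact Or.inr (M.chain_le hτ hG hK (by omega))
  · rintro ⟨h1, h2⟩
    exact ⟨((M.mem_link hτ).1 h1).2.1, M.link_ge h1 hF (by omega), M.link_le h1 hG (by omega), h2⟩

theorem link_eq_cov {τ : Finset (Finset α)} (hτ : M.Chain τ) {F G : Finset α}
    (hF : F ∈ τ) (hG : G ∈ τ) (hr : M.R G = M.R F + 2) (hm : M.missing τ = {M.R F + 1}) :
    linkOf M.Chain τ = M.cov F G := by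
  ext H
  rw [M.mem_link_of_rank hτ hF hG hr (by simp [hm])]
  constructor
  · intro h
    have := M.link_rank hτ h
    rw [hm, Finset.mem_singleton] at this
    exact ⟨h, this⟩
  · exact fun h => h.1

theorem link_eq_cov_exists {τ : Finset (Finset α)} (hτ : M.Chain τ)
    (hc : τ.card + 1 = M.R univ + 1) :
    ∃ F ∈ τ, ∃ G ∈ τ, M.R G = M.R F + 2 ∧ M.missing τ = {M.R F + 1} := by
  have h1 := M.card_missing hτ
  have h2 : (M.missing τ).card = 1 := by omega
  obtain ⟨a, ha⟩ := Finset.card_eq_one.1 h2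
  have h3 := M.missing_pos hτ (a := a) (by simp [ha])
  obtain ⟨F, hF, hF'⟩ := M.exists_rank (σ := τ) (a := a - 1) (by omega) (by
    rw [ha, Finset.mem_singleton]; omega)
  obtain ⟨G, hG, hG'⟩ := M.exists_rank (σ := τ) (a := a + 1) (by omega) (by
    rw [ha, Finset.mem_singleton]; omega)
  refine ⟨F, hF, G, hG, by omega, ?_⟩
  rw [ha]; congr 1; omega

theorem chain_balance (σ : Finset (Finset α)) (hσ : M.Chain σ) (hc : σ.card + 1 = M.R univ + 1)
    (l : Finset α → ℝ) (hl : l ∈ Lin α) (h0 : ∀ H ∈ σ, l H = 0) :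
    ∑ H ∈ linkOf M.Chain σ, l H = 0 := by
  obtain ⟨F, hF, G, hG, hr, hm⟩ := M.link_eq_cov_exists hσ hc
  rw [M.link_eq_cov hσ hF hG hr hm]
  have := M.sum_cov (hσ.1 F hF) (hσ.1 G hG) (M.chain_le hσ hF hG (by omega)) hl
  simpa [h0 F hF, h0 G hG] using this

theorem chain_conn (σ : Finset (Finset α)) (hσ : M.Chain σ) (hc : σ.card + 2 < M.R univ + 1)
    (z : Finset α → ℝ)
    (hz : ∀ H ∈ linkOf M.Chain σ, ∀ K ∈ linkOf M.Chain (insert H σ), z H = z K) :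
    ∀ H ∈ linkOf M.Chain σ, ∀ K ∈ linkOf M.Chain σ, z H = z K := by
  have hz' : ∀ H ∈ linkOf M.Chain σ, ∀ K ∈ linkOf M.Chain σ, H ⊆ K → z H = z K := by
    intro H hH K hK h
    by_cases e : H = K
    · rw [e]
    · exact hz H hH K (M.adj_link hσ hH hK e (Or.inl h))
  have hcm := M.card_missing hσ
  have hne : (M.missing σ).Nonempty := Finset.card_pos.1 (by omega)
  obtain ⟨a, ha, hamin⟩ := Finset.exists_min_image (M.missing σ) id hne
  simp only [id] at hamin
  obtain ⟨F, hF, G, hG, hFa, haG, hFG, hg⟩ := M.gap hσ ha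
  have hpos := M.missing_pos hσ ha
  have hRF : M.R F + 1 = a := by
    by_contra hn
    obtain ⟨K, hK, hK'⟩ := M.exists_rank (σ := σ) (a := M.R F + 1) (by omega) (fun h => by
      have := hamin _ h; omega)
    rcases hg K hK with h | h
    · have := M.mono h; omega
    · have := M.mono h; omega
  have fF := hσ.1 F hF
  have fG := hσ.1 G hG
  have hP : ∀ P ∈ M.cov F G, P ∈ linkOf M.Chain σ := by
    intro P hP
    rw [mem_cov] at hP
    exact M.between_link hσ hg hP.1 hP.2.1 hP.2.2.1 (by omega) (by omega)
  have step1 : ∀ H ∈ linkOf M.Chain σ, ∃ P ∈ M.cov F G, z H = z P := by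
    intro H hH
    have hr := hamin _ (M.link_rank hσ hH)
    have hFH := M.link_ge hH hF (by omega)
    have : ∃ i, i ∈ H ∧ i ∈ G ∧ i ∉ F := by
      rcases ((M.mem_link hσ).1 hH).2.2 G hG with h | h
      · obtain ⟨i, h1, h2⟩ := Finset.exists_of_ssubset
          (hFH.ssubset_of_ne (by rintro rfl; omega))
        exact ⟨i, h1, h h1, h2⟩
      · obtain ⟨i, h1, h2⟩ := Finset.exists_of_ssubset
          (hFG.ssubset_of_ne (by rintro rfl; omega))
        exact ⟨i, h h1, h1, h2⟩
    obtain ⟨i, hiH, hiG, hiF⟩ := this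
    have hc : M.cl (insert i F) ∈ M.cov F G := by
      rw [mem_cov]
      exact ⟨M.flat_cl _, M.subset_cl_insert _ _,
        M.cl_subset fG (Finset.insert_subset hiG hFG), M.R_cl_insert fF hiF⟩
    refine ⟨_, hc, (hz' _ (hP _ hc) H hH ?_).symm⟩
    exact M.cl_subset ((M.mem_link hσ).1 hH).2.1 (Finset.insert_subset hiH hFH)
  have step2 : ∀ P ∈ M.cov F G, ∀ P' ∈ M.cov F G, z P = z P' := by
    intro P hPc P' hPc'
    have q := M.mem_cov.1 hPc
    have q' := M.mem_cov.1 hPc'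
    by_cases hGa : a + 1 < M.R G
    · by_cases e : P = P'
      · rw [e]
      have : ∃ i ∈ P', i ∉ P := by
        by_contra hn
        push Not at hn
        exact e (M.flat_eq q'.1 hn (by omega)).symm
      obtain ⟨i, hi, hi'⟩ := this
      have hJ : M.cl (insert i P) ∈ linkOf M.Chain σ := by
        have := M.R_cl_insert q.1 hi'
        refine M.between_link hσ hg (M.flat_cl _) (q.2.1.trans (M.subset_cl_insert _ _))
          (M.cl_subset fG (Finset.insert_subset (q'.2.2.1 hi) q.2.2.1)) (by omega) (by omega)
      rw [hz' P (hP P hPc) _ hJ (M.subset_cl_insert _ _)]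
      refine (hz' P' (hP P' hPc') _ hJ ?_).symm
      rw [← M.cover_eq fF (fun h => hi' (q.2.1 h)) q'.1 q'.2.1 hi q'.2.2.2]
      exact M.cl_subset (M.flat_cl _) (Finset.insert_subset (M.mem_cl_insert _ _)
        (q.2.1.trans (M.subset_cl_insert _ _)))
    · obtain ⟨b, hb, hba⟩ := Finset.exists_mem_ne (s := M.missing σ) (by omega) a
      have h1 := hamin b hb
      have h2 := (M.mem_missing.1 hb).2 G hG
      obtain ⟨F2, hF2, G2, hG2, c1, c2, c3, c4⟩ := M.gap hσ hb
      obtain ⟨K, k1, k2, k3, k4⟩ := M.exists_between (hσ.1 F2 hF2) (hσ.1 G2 hG2) c3 b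
        (by omega) c2
      have hK := M.between_link hσ c4 k1 k2 k3 (by omega) (by omega)
      have hGK : G ⊆ K := M.link_ge hK hG (by omega)
      rw [hz' P (hP P hPc) K hK (q.2.2.1.trans hGK),
        hz' P' (hP P' hPc') K hK (q'.2.2.1.trans hGK)]
  intro H hH K hK
  obtain ⟨P, h1, h2⟩ := step1 H hH
  obtain ⟨Q, h3, h4⟩ := step1 K hK
  rw [h2, h4, step2 P h1 Q h3]

/-- The Bergman fan of the matroid. -/
def fan : Fan (Finset α) where
  Δ := M.Chain
  Lin := Lin α
  D := M.R univ + 1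
  interp σ hσ y := chain_interp σ hσ.2.1 y
  down σ H K hσ h := by
    rw [M.chain_insert hσ]
    exact ⟨h.1 K (Finset.mem_insert_self _ _), fun L hL => h.2.1 K (Finset.mem_insert_self _ _) L
      (Finset.mem_insert_of_mem (Finset.mem_insert_of_mem hL))⟩
  balance := M.chain_balance
  link_nonempty σ hσ hc := by
    have h1 := M.card_missing hσ
    have hne : (M.missing σ).Nonempty := Finset.card_pos.1 (by omega)
    obtain ⟨a, ha⟩ := hne
    obtain ⟨F, hF, G, hG, c1, c2, c3, c4⟩ := M.gap hσ ha
    obtain ⟨K, k1, k2, k3, k4⟩ := M.exists_between (hσ.1 F hF) (hσ.1 G hG) c3 a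
        (by omega) c2
    exact ⟨K, M.between_link hσ c4 k1 k2 k3 (by omega) (by omega)⟩
  conn := M.chain_conn

theorem deg_one {τ : Finset (Finset α)} (hτ : M.Chain τ) {F G : Finset α}
    (hF : F ∈ τ) (hG : G ∈ τ) (hr : M.R G = M.R F + 2) (hm : M.missing τ = {M.R F + 1})
    (y : Finset α → ℝ) :
    M.fan.deg [y] τ = ∑ K ∈ M.cov F G, (y K - y F) - (y G - y F) := by
  have hc := M.card_missing hτ
  rw [hm, Finset.card_singleton] at hc
  obtain ⟨l, hl, hly⟩ := M.fan.interp τ hτ y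
  rw [M.fan.deg_cons hτ (by simp only [List.length_nil, fan]; omega) y l hl hly]
  have e : M.fan.link τ = M.cov F G := M.link_eq_cov hτ hF hG hr hm
  rw [e]
  have h2 := M.sum_cov (hτ.1 F hF) (hτ.1 G hG) (M.chain_le hτ hF hG (by omega)) hl
  rw [← hly F hF, ← hly G hG, ← h2, ← Finset.sum_sub_distrib]
  refine Finset.sum_congr rfl fun K _ => ?_
  simp [Fan.deg]

theorem base (σ : Finset (Finset α)) (hσ : M.Chain σ) (hc : σ.card + 2 = M.R univ + 1) :
    M.fan.Lor [] σ := by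
  -- reduce to functions vanishing on the face
  suffices H : ∀ x v : Finset α → ℝ, (∀ H ∈ σ, x H = 0) → (∀ H ∈ σ, v H = 0) →
      0 < M.fan.deg [v, v] σ →
      M.fan.deg [x, x] σ * M.fan.deg [v, v] σ ≤ M.fan.deg [x, v] σ ^ 2 by
    intro x v hv
    obtain ⟨lx, hlx, hlx'⟩ := M.fan.interp σ hσ x
    obtain ⟨lv, hlv, hlv'⟩ := M.fan.interp σ hσ v
    have red : ∀ u w lu lw : Finset α → ℝ, lu ∈ M.fan.Lin → lw ∈ M.fan.Lin →
        M.fan.deg [u, w] σ = M.fan.deg [u - lu, w - lw] σ := by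
      intro u w lu lw hu hw
      rw [M.fan.deg_sub_lin hσ (by simp [fan]; omega) u lu hu,
        M.fan.deg_sub_lin2 (σ := σ) (vs := []) (by simp [fan]; omega) u w lw hw]
    rw [red v v lv lv hlv hlv] at hv ⊢
    rw [red x x lx lx hlx hlx, red x v lx lv hlx hlv]
    exact H _ _ (fun H hH => by simp [hlx' H hH]) (fun H hH => by simp [hlv' H hH]) hv
  have hcm := M.card_missing hσ
  have h2 : (M.missing σ).card = 2 := by omega
  obtain ⟨a, b, hab, hm⟩ : ∃ a b, a < b ∧ M.missing σ = {a, b} := by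
    obtain ⟨a, b, hab, hm⟩ := Finset.card_eq_two.1 h2
    rcases lt_or_gt_of_ne hab with h | h
    · exact ⟨a, b, h, hm⟩
    · exact ⟨b, a, h, by rw [hm, Finset.pair_comm]⟩
  have pa := M.missing_pos hσ (a := a) (by simp [hm])
  have pb := M.missing_pos hσ (a := b) (by simp [hm])
  have hm' : ∀ c, c ∈ M.missing σ ↔ c = a ∨ c = b := by simp [hm]
  have expand : ∀ x y : Finset α → ℝ, (∀ H ∈ σ, x H = 0) →
      M.fan.deg [x, y] σ = ∑ H ∈ linkOf M.Chain σ, x H * M.fan.deg [y] (insert H σ) := by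
    intro x y hx
    rw [M.fan.deg_cons hσ (by simp [fan]; omega) x 0 M.fan.Lin.zero_mem
      (fun H hH => by simp [hx H hH])]
    simp
    rfl
  obtain ⟨F, hF, hRF⟩ := M.exists_rank (σ := σ) (a := a - 1) (by omega) (by
    rw [hm']; omega)
  obtain ⟨G2, hG2, hRG2⟩ := M.exists_rank (σ := σ) (a := b + 1) (by omega) (by
    rw [hm']; omega)
  have ins : ∀ H ∈ linkOf M.Chain σ, (M.R H = a ∧ M.missing (insert H σ) = {b}) ∨
      (M.R H = b ∧ M.missing (insert H σ) = {a}) := by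
    intro H hH
    have := M.link_rank hσ hH
    rw [hm'] at this
    rw [M.missing_insert, hm]
    rcases this with h | h
    · left
      refine ⟨h, ?_⟩
      ext c
      simp only [h, Finset.mem_erase, Finset.mem_insert, Finset.mem_singleton]
      omega
    · right
      refine ⟨h, ?_⟩
      ext c
      simp only [h, Finset.mem_erase, Finset.mem_insert, Finset.mem_singleton]
      omega
  have hsplit : ∀ f : Finset α → ℝ, ∑ H ∈ linkOf M.Chain σ, f H =
      ∑ H ∈ (linkOf M.Chain σ).filter (fun H => M.R H = a), f H +
      ∑ H ∈ (linkOf M.Chain σ).filter (fun H => M.R H = b), f H := by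
    intro f
    rw [← Finset.sum_filter_add_sum_filter_not _ (fun H => M.R H = a)]
    congr 1
    refine Finset.sum_congr (Finset.filter_congr fun H hH => ?_) fun _ _ => rfl
    rcases ins H hH with h | h <;> omega
  by_cases hb : b = a + 1
  · -- rank three interval
    have fF := hσ.1 F hF
    have fG := hσ.1 G2 hG2
    have hFG := M.chain_le hσ hF hG2 (by omega)
    have hg : ∀ K ∈ σ, K ⊆ F ∨ G2 ⊆ K := by
      intro K hK
      have h1 := (M.mem_missing.1 ((hm' a).2 (Or.inl rfl))).2 K hK
      have h2 := (M.mem_missing.1 ((hm' b).2 (Or.inr rfl))).2 K hK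
      by_cases h : M.R K ≤ M.R F
      · exact Or.inl (M.chain_le hσ hK hF h)
      · exact Or.inr (M.chain_le hσ hG2 hK (by omega))
    have ea : (linkOf M.Chain σ).filter (fun H => M.R H = a) = M.cov F G2 := by
      ext H
      rw [Finset.mem_filter, mem_cov]
      constructor
      · rintro ⟨h1, h2⟩
        exact ⟨((M.mem_link hσ).1 h1).2.1, M.link_ge h1 hF (by omega), M.link_le h1 hG2 (by omega),
          by omega⟩
      · rintro ⟨h1, h2, h3, h4⟩
        exact ⟨M.between_link hσ hg h1 h2 h3 (by omega) (by omega), by omega⟩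
    set 𝓛 := (linkOf M.Chain σ).filter (fun H => M.R H = b) with h𝓛
    have mL : ∀ H, H ∈ 𝓛 ↔ M.Flat H ∧ F ⊆ H ∧ H ⊆ G2 ∧ M.R H = b := by
      intro H
      rw [h𝓛, Finset.mem_filter]
      constructor
      · rintro ⟨h1, h2⟩
        exact ⟨((M.mem_link hσ).1 h1).2.1, M.link_ge h1 hF (by omega), M.link_le h1 hG2 (by omega),
          by omega⟩
      · rintro ⟨h1, h2, h3, h4⟩
        exact ⟨M.between_link hσ hg h1 h2 h3 (by omega) (by omega), by omega⟩
    let t : (Finset α → ℝ) → Finset α → ℝ := fun y L => y L - ∑ P ∈ M.cov F L, y P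
    let s : (Finset α → ℝ) → ℝ := fun y => ∑ P ∈ M.cov F G2, y P
    have dL : ∀ y : Finset α → ℝ, (∀ H ∈ σ, y H = 0) → ∀ L ∈ 𝓛,
        M.fan.deg [y] (insert L σ) = - t y L := by
      intro y hy L hL
      have q := (mL L).1 hL
      have hlk : L ∈ linkOf M.Chain σ := (Finset.mem_filter.1 hL).1
      rw [M.deg_one (mem_linkOf.1 hlk).2 (Finset.mem_insert_of_mem hF)
        (Finset.mem_insert_self _ _) (by omega) (by
          rcases ins L hlk with h | h
          · omega
          · rw [h.2]; congr 1; omega)]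
      simp only [hy F hF, t]
      simp
    have dP : ∀ y : Finset α → ℝ, (∀ H ∈ σ, y H = 0) → ∀ P ∈ M.cov F G2,
        M.fan.deg [y] (insert P σ) = s y + ∑ L ∈ M.cov P G2, t y L := by
      intro y hy P hP
      have q := M.mem_cov.1 hP
      have hlk : P ∈ linkOf M.Chain σ := (Finset.mem_filter.1 (ea ▸ hP)).1
      rw [M.deg_one (mem_linkOf.1 hlk).2 (Finset.mem_insert_self _ _)
        (Finset.mem_insert_of_mem hG2) (by omega) (by
          rcases ins P hlk with h | h
          · rw [h.2]; congr 1; omega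
          · omega)]
      obtain ⟨l, hl, hly⟩ := M.exists_lin_points fF y
      have e1 : ∀ L, M.Flat L → F ⊆ L → ∑ P ∈ M.cov F L, y P = l L - l F := by
        intro L h1 h2
        rw [← M.sum_cov fF h1 h2 hl]
        refine Finset.sum_congr rfl fun P hP => ?_
        have := M.mem_cov.1 hP
        rw [hly P this.1 this.2.1 this.2.2.2]
      have e2 : ∑ L ∈ M.cov P G2, (l L - l P) = l G2 - l P := M.sum_cov q.1 fG q.2.2.1 hl
      have e3 : s y = l G2 - l F := e1 G2 fG hFG
      have e4 : y P = l P - l F := (hly P q.1 q.2.1 q.2.2.2).symm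
      have e5 : ∑ L ∈ M.cov P G2, (y L - y P) = ∑ L ∈ M.cov P G2, t y L +
          ∑ L ∈ M.cov P G2, (l L - l P) := by
        rw [← Finset.sum_add_distrib]
        refine Finset.sum_congr rfl fun L hL => ?_
        have := M.mem_cov.1 hL
        simp only [t]
        rw [e1 L this.1 (q.2.1.trans this.2.1), e4]
        ring
      rw [e5, e2, e3, hy G2 hG2, e4]
      ring
    have Q : ∀ x y : Finset α → ℝ, (∀ H ∈ σ, x H = 0) → (∀ H ∈ σ, y H = 0) →
        M.fan.deg [x, y] σ = s x * s y - ∑ L ∈ 𝓛, t x L * t y L := by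
      intro x y hx hy
      rw [expand x y hx, hsplit, ea]
      rw [Finset.sum_congr rfl (fun P hP => by rw [dP y hy P hP] :
        ∀ P ∈ M.cov F G2, x P * M.fan.deg [y] (insert P σ) =
          x P * (s y + ∑ L ∈ M.cov P G2, t y L)),
        Finset.sum_congr rfl (fun L hL => by rw [dL y hy L hL] :
        ∀ L ∈ 𝓛, x L * M.fan.deg [y] (insert L σ) = x L * (- t y L))]
      have e1 : ∑ P ∈ M.cov F G2, x P * (s y + ∑ L ∈ M.cov P G2, t y L) =
          s x * s y + ∑ P ∈ M.cov F G2, ∑ L ∈ M.cov P G2, x P * t y L := by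
        simp only [mul_add, Finset.sum_add_distrib, Finset.mul_sum]
        rw [← Finset.sum_mul]
      have e2 : ∑ P ∈ M.cov F G2, ∑ L ∈ M.cov P G2, x P * t y L =
          ∑ L ∈ 𝓛, ∑ P ∈ M.cov F L, x P * t y L := by
        refine Finset.sum_comm' ?_
        intro P L
        rw [mL]
        simp only [mem_cov]
        constructor
        · rintro ⟨⟨a1, a2, a3, a4⟩, b1, b2, b3, b4⟩
          exact ⟨⟨a1, a2, b2, a4⟩, b1, a2.trans b2, b3, by omega⟩
        · rintro ⟨⟨a1, a2, b2, a4⟩, b1, b5, b3, b4⟩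
          exact ⟨⟨a1, a2, b2.trans b3, a4⟩, b1, b2, b3, by omega⟩
      rw [e1, e2, add_assoc, ← Finset.sum_add_distrib, sub_eq_add_neg, ← Finset.sum_neg_distrib]
      congr 1
      refine Finset.sum_congr rfl fun L _ => ?_
      rw [← Finset.sum_mul]
      simp only [t]
      ring
    intro x v hx hv hpos
    rw [Q x x hx hx, Q v v hv hv, Q x v hx hv]
    rw [Q v v hv hv] at hpos
    have nonneg : 0 ≤ ∑ L ∈ 𝓛, (s v * t x L - s x * t v L) ^ 2 :=
      Finset.sum_nonneg fun _ _ => sq_nonneg _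
    have ex : ∑ L ∈ 𝓛, (s v * t x L - s x * t v L) ^ 2 =
        s v ^ 2 * ∑ L ∈ 𝓛, t x L * t x L - 2 * s v * s x * ∑ L ∈ 𝓛, t x L * t v L +
          s x ^ 2 * ∑ L ∈ 𝓛, t v L * t v L := by
      simp only [Finset.mul_sum]
      rw [← Finset.sum_sub_distrib, ← Finset.sum_add_distrib]
      refine Finset.sum_congr rfl fun L _ => ?_
      ring
    have hB : 0 ≤ ∑ L ∈ 𝓛, t v L * t v L := Finset.sum_nonneg fun _ _ => mul_self_nonneg _
    rw [ex] at nonneg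
    generalize ∑ L ∈ 𝓛, t v L * t v L = Bv at *
    generalize ∑ L ∈ 𝓛, t x L * t x L = Ax at *
    generalize ∑ L ∈ 𝓛, t x L * t v L = Cx at *
    generalize s v = p at *
    generalize s x = q at *
    have hp : 0 < p ^ 2 := by nlinarith
    have key : 0 ≤ p ^ 2 * ((q * p - Cx) ^ 2 - (q * q - Ax) * (p * p - Bv)) := by
      have h1 : 0 ≤ (p * p - Bv) * (p ^ 2 * Ax - 2 * p * q * Cx + q ^ 2 * Bv) :=
        mul_nonneg hpos.le nonneg
      have h2 : 0 ≤ (p * (q * p - Cx) - q * (p * p - Bv)) ^ 2 := sq_nonneg _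
      nlinarith
    have := nonneg_of_mul_nonneg_right key hp
    linarith
  · -- two separated intervals
    obtain ⟨G, hG, hRG⟩ := M.exists_rank (σ := σ) (a := a + 1) (by omega) (by
      rw [hm']; omega)
    obtain ⟨F2, hF2, hRF2⟩ := M.exists_rank (σ := σ) (a := b - 1) (by omega) (by
      rw [hm']; omega)
    have ea : (linkOf M.Chain σ).filter (fun H => M.R H = a) = M.cov F G := by
      ext H
      rw [Finset.mem_filter, M.mem_link_of_rank hσ hF hG (by omega) (by rw [hm']; omega)]
      have : M.R F + 1 = a := by omega
      rw [this]
    have eb : (linkOf M.Chain σ).filter (fun H => M.R H = b) = M.cov F2 G2 := by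
      ext H
      rw [Finset.mem_filter, M.mem_link_of_rank hσ hF2 hG2 (by omega) (by rw [hm']; omega)]
      have : M.R F2 + 1 = b := by omega
      rw [this]
    have Q : ∀ x y : Finset α → ℝ, (∀ H ∈ σ, x H = 0) → (∀ H ∈ σ, y H = 0) →
        M.fan.deg [x, y] σ = (∑ H ∈ M.cov F G, x H) * (∑ H ∈ M.cov F2 G2, y H) +
          (∑ H ∈ M.cov F2 G2, x H) * (∑ H ∈ M.cov F G, y H) := by
      intro x y hx hy
      rw [expand x y hx, hsplit, Finset.sum_mul, Finset.sum_mul, ← ea, ← eb]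
      congr 1
      · refine Finset.sum_congr rfl fun H hH => ?_
        rw [Finset.mem_filter] at hH
        rw [M.deg_one (mem_linkOf.1 hH.1).2 (Finset.mem_insert_of_mem hF2)
          (Finset.mem_insert_of_mem hG2) (by omega) (by
            rcases ins H hH.1 with h | h
            · rw [h.2]; congr 1; omega
            · omega), eb, hy F2 hF2, hy G2 hG2]
        simp
      · refine Finset.sum_congr rfl fun H hH => ?_
        rw [Finset.mem_filter] at hH
        rw [M.deg_one (mem_linkOf.1 hH.1).2 (Finset.mem_insert_of_mem hF)
          (Finset.mem_insert_of_mem hG) (by omega) (by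
            rcases ins H hH.1 with h | h
            · omega
            · rw [h.2]; congr 1; omega), ea, hy F hF, hy G hG]
        simp
    intro x v hx hv _
    rw [Q x x hx hx, Q v v hv hv, Q x v hx hv]
    nlinarith [sq_nonneg ((∑ H ∈ M.cov F G, x H) * (∑ H ∈ M.cov F2 G2, v H) -
      (∑ H ∈ M.cov F2 G2, x H) * (∑ H ∈ M.cov F G, v H))]

end RankFn

end HRW


namespace HRW

open Finset

namespace RankFn

variable {α : Type*} [DecidableEq α] [Fintype α] (M : RankFn α)

theorem exists_top [Nonempty α] {σ : Finset (Finset α)} (hσ : M.Chain σ) :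
    ∃ T ∈ σ, T ≠ univ ∧ ∀ K ∈ σ, K ≠ univ → K ⊆ T := by
  obtain ⟨T, hT, hT'⟩ := Finset.exists_max_image (σ.erase univ) M.R
    ⟨∅, Finset.mem_erase.2 ⟨Finset.univ_nonempty.ne_empty.symm, hσ.2.2.1⟩⟩
  rw [Finset.mem_erase] at hT
  exact ⟨T, hT.2, hT.1, fun K hK hne => M.chain_le hσ hK hT.2
    (hT' K (Finset.mem_erase.2 ⟨hne, hK⟩))⟩

theorem exists_bot [Nonempty α] {σ : Finset (Finset α)} (hσ : M.Chain σ) :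
    ∃ G ∈ σ, G ≠ ∅ ∧ ∀ K ∈ σ, K ≠ ∅ → G ⊆ K := by
  obtain ⟨T, hT, hT'⟩ := Finset.exists_min_image (σ.erase ∅) M.R
    ⟨univ, Finset.mem_erase.2 ⟨Finset.univ_nonempty.ne_empty, hσ.2.2.2⟩⟩
  rw [Finset.mem_erase] at hT
  exact ⟨T, hT.2, hT.1, fun K hK hne => M.chain_le hσ hT.2 hK
    (hT' K (Finset.mem_erase.2 ⟨hne, hK⟩))⟩

noncomputable def alp : Finset α → ℝ := fun H => if H = univ then -1 else 0

noncomputable def bet : Finset α → ℝ := fun H => if H = ∅ then -1 else 0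

theorem alp_lin (i : α) : (fun H : Finset α => if i ∈ H then (-1 : ℝ) else 0) ∈ Lin α :=
  mem_Lin.2 ⟨0, Pi.single i (-1), fun H => by simp⟩

theorem bet_lin (i : α) : (fun H : Finset α => if i ∈ H then (0 : ℝ) else -1) ∈ Lin α :=
  mem_Lin.2 ⟨-1, Pi.single i 1, fun H => by
    by_cases h : i ∈ H <;> simp [h]⟩

theorem alp_interp {σ : Finset (Finset α)} {T : Finset α} (hT : ∀ K ∈ σ, K ≠ univ → K ⊆ T)
    {i : α} (hi : i ∉ T) : ∀ K ∈ σ, (if i ∈ K then (-1 : ℝ) else 0) = alp K := by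
  intro K hK
  by_cases h : K = univ
  · simp [alp, h]
  · rw [if_neg (fun h' => hi (hT K hK h h'))]
    simp [alp, h]

theorem bet_interp {σ : Finset (Finset α)} {G : Finset α} (hG : ∀ K ∈ σ, K ≠ ∅ → G ⊆ K)
    {i : α} (hi : i ∈ G) : ∀ K ∈ σ, (if i ∈ K then (0 : ℝ) else -1) = bet K := by
  intro K hK
  by_cases h : K = ∅
  · simp [bet, h]
  · rw [if_pos (hG K hK h hi)]
    simp [bet, h]

theorem alp_link {σ : Finset (Finset α)} (hσ : M.Chain σ) {H : Finset α}
    (hH : H ∈ linkOf M.Chain σ) : alp H = 0 := by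
  have : H ≠ univ := by
    rintro rfl
    exact (mem_linkOf.1 hH).1 hσ.2.2.2
  simp [alp, this]

theorem bet_link {σ : Finset (Finset α)} (hσ : M.Chain σ) {H : Finset α}
    (hH : H ∈ linkOf M.Chain σ) : bet H = 0 := by
  have : H ≠ ∅ := by
    rintro rfl
    exact (mem_linkOf.1 hH).1 hσ.2.2.1
  simp [bet, this]

theorem exists_notMem_of_ne {T : Finset α} (h : T ≠ univ) : ∃ i, i ∉ T := by
  by_contra hn
  push Not at hn
  exact h (Finset.eq_univ_iff_forall.2 hn)

theorem alp_nef [Nonempty α] : M.fan.Nef alp := by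
  intro τ hτ _
  obtain ⟨T, _, hT1, hT2⟩ := M.exists_top hτ
  obtain ⟨i, hi⟩ := exists_notMem_of_ne hT1
  refine ⟨_, alp_lin i, alp_interp hT2 hi, fun H hH => ?_⟩
  rw [M.alp_link hτ hH]
  split_ifs <;> norm_num

theorem bet_nef [Nonempty α] : M.fan.Nef bet := by
  intro τ hτ _
  obtain ⟨T, _, hT1, hT2⟩ := M.exists_bot hτ
  obtain ⟨i, hi⟩ := Finset.nonempty_iff_ne_empty.2 hT1
  refine ⟨_, bet_lin i, bet_interp hT2 hi, fun H hH => ?_⟩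
  rw [M.bet_link hτ hH]
  split_ifs <;> norm_num

noncomputable def amp : Finset α → ℝ := fun H => -(H.card : ℝ) ^ 2

theorem amp_ample : M.fan.Ample amp := by
  classical
  intro τ hτ _
  let g : α → α → ℝ := fun i j => if ∀ S ∈ τ, i ∈ S → j ∈ S then 1 else 0
  have g0 : ∀ i j, 0 ≤ g i j := fun i j => by simp only [g]; split_ifs <;> norm_num
  have g1 : ∀ i j, g i j ≤ 1 := fun i j => by simp only [g]; split_ifs <;> norm_num
  let c : α → ℝ := fun i => - ∑ j, (1 + g i j - g j i)
  have diff : ∀ K : Finset α, amp K - ∑ i ∈ K, c i =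
      ∑ i ∈ K, ∑ j ∈ univ \ K, (1 + g i j - g j i) := by
    intro K
    have e1 : ∑ i ∈ K, ∑ j ∈ K, (1 + g i j - g j i) = (K.card : ℝ) ^ 2 := by
      simp only [Finset.sum_add_distrib, Finset.sum_sub_distrib]
      rw [Finset.sum_comm (f := fun i j => g j i)]
      simp
      ring
    have e2 : ∀ i, ∑ j, (1 + g i j - g j i) = ∑ j ∈ univ \ K, (1 + g i j - g j i) +
        ∑ j ∈ K, (1 + g i j - g j i) := fun i =>
      (Finset.sum_sdiff (Finset.subset_univ K)).symm
    simp only [c, amp]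
    rw [Finset.sum_neg_distrib, Finset.sum_congr rfl (fun i _ => e2 i), Finset.sum_add_distrib, e1]
    ring
  refine ⟨fun K => 0 + ∑ i ∈ K, c i, mem_Lin.2 ⟨0, c, fun H => rfl⟩, fun K hK => ?_,
    fun K hK => ?_⟩
  · have h0 : ∑ i ∈ K, ∑ j ∈ univ \ K, (1 + g i j - g j i) = 0 := by
      refine Finset.sum_eq_zero fun i hi => Finset.sum_eq_zero fun j hj => ?_
      have hj' : j ∉ K := (Finset.mem_sdiff.1 hj).2
      have a1 : g i j = 0 := if_neg fun h => hj' (h K hK hi)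
      have a2 : g j i = 1 := if_pos fun S hS hjS => by
        rcases hτ.2.1 S hS K hK with h | h
        · exact absurd (h hjS) hj'
        · exact h hi
      rw [a1, a2]; ring
    have := diff K
    rw [h0] at this
    linarith
  · have h0 : 0 < ∑ i ∈ K, ∑ j ∈ univ \ K, (1 + g i j - g j i) := by
      obtain ⟨F, hF, G, hG, c1, c2, c3, c4⟩ := M.gap hτ (M.link_rank hτ hK)
      have hFK := M.link_ge hK hF c1.le
      have hKG := M.link_le hK hG c2.le
      obtain ⟨i, hi, hiF⟩ := Finset.exists_of_ssubset
        (hFK.ssubset_of_ne (by rintro rfl; omega))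
      obtain ⟨j, hj, hjK⟩ := Finset.exists_of_ssubset
        (hKG.ssubset_of_ne (by rintro rfl; omega))
      have a1 : g i j = 1 := if_pos fun S hS hiS => by
        rcases c4 S hS with h | h
        · exact absurd (h hiS) hiF
        · exact h hj
      refine Finset.sum_pos' (fun i _ => Finset.sum_nonneg fun j _ => ?_) ⟨i, hi, ?_⟩
      · have := g0 i j; have := g1 j i; linarith
      · refine Finset.sum_pos' (fun j _ => ?_) ⟨j, by simp [hjK], ?_⟩
        · have := g0 i j; have := g1 j i; linarith
        · have := g1 j i; linarith
    have := diff K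
    linarith

theorem count_gaps {σ : Finset (Finset α)} (hσ : M.Chain σ) {G T : Finset α}
    (hTm : T ∈ σ) (hT1 : T ≠ univ) (hT2 : ∀ K ∈ σ, K ≠ univ → K ⊆ T)
    (hGT : G ⊆ T) (hG2 : ∀ K ∈ σ, K ≠ ∅ → G ⊆ K) :
    (M.R G - 1) + (M.R univ - M.R T - 1) ≤ (M.missing σ).card := by
  have h1 : Ioo 0 (M.R G) ∪ Ioo (M.R T) (M.R univ) ⊆ M.missing σ := by
    intro a ha
    rw [mem_missing]
    have hGT' := M.mono hGT
    have hTu := M.mono (Finset.subset_univ T)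
    simp only [Finset.mem_union, Finset.mem_Ioo] at ha
    refine ⟨by omega, fun K hK h => ?_⟩
    rcases ha with ha | ha
    · have hne : K ≠ ∅ := by
        rintro rfl
        rw [M.zero] at h; omega
      have := M.mono (hG2 K hK hne)
      omega
    · have hne : K ≠ univ := by
        rintro rfl
        omega
      have := M.mono (hT2 K hK hne)
      omega
  have h2 := Finset.card_le_card h1
  rw [Finset.card_union_of_disjoint, Nat.card_Ioo, Nat.card_Ioo] at h2
  · omega
  · rw [Finset.disjoint_left]
    intro a ha hb
    have hGT' := M.mono hGT
    rw [Finset.mem_Ioo] at ha hb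
    omega

theorem R_lt_univ {T : Finset α} (hT : M.Flat T) (h : T ≠ univ) : M.R T < M.R univ :=
  M.flat_lt hT ((Finset.subset_univ T).ssubset_of_ne h)

theorem deg_alp [Nonempty α] (m : ℕ) : ∀ {σ : Finset (Finset α)} {T : Finset α}, M.Chain σ →
    σ.card + m = M.R univ + 1 → T ∈ σ → T ≠ univ → (∀ K ∈ σ, K ≠ univ → K ⊆ T) →
    M.fan.deg (List.replicate m alp) σ = if M.R T + m + 1 = M.R univ then 1 else 0 := by
  induction m with
  | zero =>
    intro σ T hσ hc hT hT1 hT2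
    have h1 := M.count_gaps hσ (G := ∅) hT hT1 hT2 (by simp) (by simp)
    have h2 := M.card_missing hσ
    have h3 := M.R_lt_univ (hσ.1 T hT) hT1
    rw [if_pos (by omega)]
    simp [Fan.deg]
  | succ m ih =>
    intro σ T hσ hc hT hT1 hT2
    have h1 := M.count_gaps hσ (G := ∅) hT hT1 hT2 (by simp) (by simp)
    have h2 := M.card_missing hσ
    have h3 := M.R_lt_univ (hσ.1 T hT) hT1
    have fT := hσ.1 T hT
    obtain ⟨i, hi⟩ := exists_notMem_of_ne hT1
    rw [List.replicate_succ, M.fan.deg_cons hσ (by simp [fan]; omega) alp _ (alp_lin i)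
      (alp_interp hT2 hi)]
    have e : ∀ H ∈ M.fan.link σ, (alp H - if i ∈ H then (-1 : ℝ) else 0) *
        M.fan.deg (List.replicate m alp) (insert H σ) =
        if M.R T + (m + 1) + 1 = M.R univ then (if H = M.cl (insert i T) then 1 else 0) else 0 := by
      intro H hH
      rw [M.alp_link hσ hH]
      have hlk := (M.mem_link hσ).1 hH
      by_cases hiH : i ∈ H
      · have hTH : T ⊆ H := by
          rcases hlk.2.2 T hT with h | h
          · exact absurd (h hiH) hi
          · exact h
        have hHu : H ≠ univ := by
          rintro rfl
          exact hlk.1 hσ.2.2.2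
        have hTH' : M.R T < M.R H := M.flat_lt fT (hTH.ssubset_of_ne (by
          rintro rfl; exact hi hiH))
        rw [ih (mem_linkOf.1 hH).2 (by rw [M.fan.card_of_link hH]; omega)
          (Finset.mem_insert_self H σ) hHu (by
            intro K hK hne
            rcases Finset.mem_insert.1 hK with rfl | hK
            · exact Finset.Subset.refl _
            · exact (hT2 K hK hne).trans hTH), if_pos hiH]
        by_cases h4 : M.R T + (m + 1) + 1 = M.R univ
        · rw [if_pos h4]
          by_cases h5 : M.R H = M.R T + 1
          · rw [if_pos (by omega), if_pos (M.cover_eq fT hi hlk.2.1 hTH hiH h5).symm]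
            norm_num
          · rw [if_neg (by omega), if_neg]
            · norm_num
            · rintro rfl
              exact h5 (M.R_cl_insert fT hi)
        · rw [if_neg h4, if_neg (by omega)]; norm_num
      · rw [if_neg hiH]
        have : H ≠ M.cl (insert i T) := by
          rintro rfl
          exact hiH (M.mem_cl_insert _ _)
        rw [if_neg this]
        simp
    rw [Finset.sum_congr rfl e]
    split_ifs with h4
    · rw [Finset.sum_ite_eq', if_pos]
      have hr := M.R_cl_insert fT hi
      refine M.between_link hσ (F := T) (G := univ) ?_ (M.flat_cl _) (M.subset_cl_insert _ _)
        (Finset.subset_univ _) (by omega) (by omega)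
      intro K hK
      by_cases hKu : K = univ
      · exact Or.inr (by rw [hKu])
      · exact Or.inl (hT2 K hK hKu)
    · simp

theorem B_one {G : Finset α} (hG : M.Flat G) (h : M.R G = 1) : M.B G = 1 := by
  have hne : G ≠ ∅ := by
    rintro rfl
    rw [M.zero] at h; omega
  obtain ⟨i, hi⟩ := Finset.nonempty_iff_ne_empty.2 hne
  rw [M.B_rec hG hi]
  have : M.cocov G i = {∅} := by
    ext H
    rw [mem_cocov, Finset.mem_singleton]
    constructor
    · rintro ⟨_, _, _, h4⟩
      exact M.R_eq_zero (by omega)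
    · rintro rfl
      exact ⟨M.flat_empty, by simp, by simp, by rw [M.zero, h]⟩
  rw [this, Finset.sum_singleton, M.B_empty]

theorem deg_bet [Nonempty α] (m j : ℕ) : ∀ {σ : Finset (Finset α)} {G T : Finset α}, M.Chain σ →
    σ.card + j + m = M.R univ + 1 → T ∈ σ → T ≠ univ → (∀ K ∈ σ, K ≠ univ → K ⊆ T) →
    G ∈ σ → G ≠ ∅ → G ≠ univ → (∀ K ∈ σ, K ≠ ∅ → G ⊆ K) →
    M.fan.deg (List.replicate j bet ++ List.replicate m alp) σ =
      if M.R G = j + 1 ∧ M.R T + m + 1 = M.R univ then M.B G else 0 := by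
  induction j with
  | zero =>
    intro σ G T hσ hc hT hT1 hT2 hG hG0 hG1 hG2
    rw [List.replicate_zero, List.nil_append, M.deg_alp m hσ (by omega) hT hT1 hT2]
    have h1 := M.count_gaps hσ hT hT1 hT2 (hT2 G hG hG1) hG2
    have h2 := M.card_missing hσ
    have h3 : M.R G ≠ 0 := fun h => hG0 (M.R_eq_zero h)
    by_cases h4 : M.R T + m + 1 = M.R univ
    · have h5 : M.R G = 1 := by omega
      rw [if_pos h4, if_pos ⟨by omega, h4⟩, M.B_one (hσ.1 G hG) h5]
    · rw [if_neg h4, if_neg (fun h => h4 h.2)]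
  | succ j ih =>
    intro σ G T hσ hc hT hT1 hT2 hG hG0 hG1 hG2
    have h1 := M.count_gaps hσ hT hT1 hT2 (hT2 G hG hG1) hG2
    have h2 := M.card_missing hσ
    have h3 : M.R G ≠ 0 := fun h => hG0 (M.R_eq_zero h)
    have fG := hσ.1 G hG
    obtain ⟨i, hi⟩ := Finset.nonempty_iff_ne_empty.2 hG0
    rw [List.replicate_succ, List.cons_append,
      M.fan.deg_cons hσ (by simp [fan]; omega) bet _ (bet_lin i) (bet_interp hG2 hi)]
    have e : ∀ H ∈ M.fan.link σ, (bet H - if i ∈ H then (0 : ℝ) else -1) *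
        M.fan.deg (List.replicate j bet ++ List.replicate m alp) (insert H σ) =
        if M.R G = j + 1 + 1 ∧ M.R T + m + 1 = M.R univ then
          (if H ∈ M.cocov G i then M.B H else 0) else 0 := by
      intro H hH
      rw [M.bet_link hσ hH]
      have hlk := (M.mem_link hσ).1 hH
      by_cases hiH : i ∈ H
      · have : H ∉ M.cocov G i := by
          rw [mem_cocov]
          exact fun h => h.2.2.1 hiH
        rw [if_pos hiH, if_neg this]
        simp
      · have hHG : H ⊆ G := by
          rcases hlk.2.2 G hG with h | h
          · exact h
          · exact absurd (h hi) hiH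
        have hH0 : H ≠ ∅ := by
          rintro rfl
          exact hlk.1 hσ.2.2.1
        have hHu : H ≠ univ := by
          rintro rfl
          exact hlk.1 hσ.2.2.2
        have hlt : M.R H < M.R G := M.flat_lt hlk.2.1 (hHG.ssubset_of_ne (by
          rintro rfl; exact hiH hi))
        rw [ih (G := H) (T := T) (mem_linkOf.1 hH).2 (by rw [M.fan.card_of_link hH]; omega)
          (Finset.mem_insert_of_mem hT) hT1 (by
            intro K hK hne
            rcases Finset.mem_insert.1 hK with rfl | hK
            · exact hHG.trans (hT2 G hG hG1)
            · exact hT2 K hK hne) (Finset.mem_insert_self H σ) hH0 hHu (by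
            intro K hK hne
            rcases Finset.mem_insert.1 hK with rfl | hK
            · exact Finset.Subset.refl _
            · exact hHG.trans (hG2 K hK hne)), if_neg hiH]
        by_cases h4 : M.R G = j + 1 + 1 ∧ M.R T + m + 1 = M.R univ
        · rw [if_pos h4]
          by_cases h5 : M.R H = j + 1
          · rw [if_pos ⟨h5, h4.2⟩, if_pos]
            · norm_num
            · rw [mem_cocov]
              exact ⟨hlk.2.1, hHG, hiH, by omega⟩
          · rw [if_neg (fun h => h5 h.1), if_neg]
            · simp
            · rw [mem_cocov]
              intro h6
              omega
        · rw [if_neg h4, if_neg (fun h => h4 ⟨by omega, h.2⟩)]; norm_num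
    rw [Finset.sum_congr rfl e]
    split_ifs with h4
    · rw [← Finset.sum_filter, M.B_rec fG hi]
      refine Finset.sum_congr ?_ fun _ _ => rfl
      ext H
      rw [Finset.mem_filter, and_iff_right_iff_imp]
      intro h
      rw [mem_cocov] at h
      refine M.between_link hσ (F := ∅) (G := G) ?_ h.1 (by simp) h.2.1 (by rw [M.zero]; omega)
        (by omega)
      intro K hK
      by_cases hK0 : K = ∅
      · exact Or.inl (by rw [hK0])
      · exact Or.inr (hG2 K hK hK0)
    · simp

open Classical in
/-- signed Möbius sums over flats of rank `k` avoiding `p`. -/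
noncomputable def aa (p : α) (k : ℕ) : ℝ :=
  ∑ H ∈ univ.filter (fun H => M.Flat H ∧ p ∉ H ∧ M.R H = k), M.B H

theorem chain_zero : M.Chain ({∅, univ} : Finset (Finset α)) := by
  refine ⟨?_, ?_, by simp, by simp⟩
  · intro H hH
    simp only [Finset.mem_insert, Finset.mem_singleton] at hH
    rcases hH with rfl | rfl
    · exact M.flat_empty
    · exact M.flat_univ
  · intro H hH K hK
    simp only [Finset.mem_insert, Finset.mem_singleton] at hH hK
    rcases hH with rfl | rfl
    · exact Or.inl (by simp)
    · exact Or.inr (by simp)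

theorem card_zero [Nonempty α] : ({∅, univ} : Finset (Finset α)).card = 2 :=
  Finset.card_pair Finset.univ_nonempty.ne_empty.symm

theorem deg_aa (p : α) (k m : ℕ) (h : k + m + 1 = M.R univ) :
    M.fan.deg (List.replicate k bet ++ List.replicate m alp) {∅, univ} = M.aa p k := by
  classical
  haveI : Nonempty α := ⟨p⟩
  have hne : (∅ : Finset α) ≠ univ := Finset.univ_nonempty.ne_empty.symm
  have hc := card_zero (α := α)
  have hσ := M.chain_zero
  rcases k with _ | k
  · rw [List.replicate_zero, List.nil_append, M.deg_alp (T := ∅) m hσ (by omega) (by simp) hne (by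
      intro K hK hK'
      simp only [Finset.mem_insert, Finset.mem_singleton] at hK
      rcases hK with rfl | rfl
      · simp
      · exact absurd rfl hK'), if_pos (by rw [M.zero]; omega)]
    have : univ.filter (fun H => M.Flat H ∧ p ∉ H ∧ M.R H = 0) = {∅} := by
      ext H
      simp only [Finset.mem_filter, Finset.mem_univ, true_and, Finset.mem_singleton]
      constructor
      · exact fun h => M.R_eq_zero h.2.2
      · rintro rfl
        exact ⟨M.flat_empty, by simp, M.zero⟩
    rw [aa, this, Finset.sum_singleton, M.B_empty]
  · have hG2 : ∀ K ∈ ({∅, univ} : Finset (Finset α)), K ≠ ∅ → (univ : Finset α) ⊆ K := by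
      intro K hK hK'
      simp only [Finset.mem_insert, Finset.mem_singleton] at hK
      rcases hK with rfl | rfl
      · exact absurd rfl hK'
      · simp
    rw [List.replicate_succ, List.cons_append,
      M.fan.deg_cons hσ (by simp [fan, hc]; omega) bet _ (bet_lin p)
      (bet_interp hG2 (Finset.mem_univ p))]
    have e : ∀ H ∈ M.fan.link {∅, univ}, (bet H - if p ∈ H then (0 : ℝ) else -1) *
        M.fan.deg (List.replicate k bet ++ List.replicate m alp) (insert H {∅, univ}) =
        if M.Flat H ∧ p ∉ H ∧ M.R H = k + 1 then M.B H else 0 := by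
      intro H hH
      rw [M.bet_link hσ hH]
      have hlk := (M.mem_link hσ).1 hH
      have hH0 : H ≠ ∅ := by
        rintro rfl
        exact hlk.1 hσ.2.2.1
      have hHu : H ≠ univ := by
        rintro rfl
        exact hlk.1 hσ.2.2.2
      by_cases hp : p ∈ H
      · rw [if_pos hp, if_neg (fun h => h.2.1 hp)]; simp
      · rw [if_neg hp, M.deg_bet (G := H) (T := H) m k (mem_linkOf.1 hH).2
          (by rw [M.fan.card_of_link hH]; omega) (Finset.mem_insert_self _ _) hHu (by
            intro K hK hne
            simp only [Finset.mem_insert, Finset.mem_singleton] at hK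
            rcases hK with rfl | rfl | rfl
            · exact Finset.Subset.refl _
            · simp
            · exact absurd rfl hne) (Finset.mem_insert_self _ _) hH0 hHu (by
            intro K hK hne
            simp only [Finset.mem_insert, Finset.mem_singleton] at hK
            rcases hK with rfl | rfl | rfl
            · exact Finset.Subset.refl _
            · exact absurd rfl hne
            · simp)]
        by_cases hr : M.R H = k + 1
        · rw [if_pos ⟨hr, by omega⟩, if_pos ⟨hlk.2.1, hp, hr⟩]; norm_num
        · rw [if_neg (fun h => hr h.1), if_neg (fun h => hr h.2.2)]; norm_num
    rw [Finset.sum_congr rfl e, ← Finset.sum_filter, aa]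
    refine Finset.sum_congr ?_ fun _ _ => rfl
    ext H
    simp only [Finset.mem_filter, Finset.mem_univ, true_and, and_iff_right_iff_imp]
    rintro ⟨h1, h2, h3⟩
    refine M.between_link hσ (F := ∅) (G := univ) ?_ h1 (by simp) (by simp)
      (by rw [M.zero]; omega) (by omega)
    intro K hK
    simp only [Finset.mem_insert, Finset.mem_singleton] at hK
    rcases hK with rfl | rfl
    · exact Or.inl (by simp)
    · exact Or.inr (by simp)

theorem aa_pos (p : α) (k : ℕ) (h : k < M.R univ) : 0 < M.aa p k := by
  classical
  rw [aa]
  refine Finset.sum_pos (fun H hH => ?_) ?_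
  · rw [Finset.mem_filter] at hH
    exact M.B_pos _ hH.2.1 rfl
  · obtain ⟨H, h1, _, _, h4, h5⟩ := M.exists_avoid M.flat_empty M.flat_univ (by simp)
      (Finset.mem_univ p) (by simp) k (by rw [M.zero]; omega) h
    exact ⟨H, by simp [h1, h4, h5]⟩

theorem aa_logconcave (p : α) (k : ℕ) (h : k + 2 < M.R univ) :
    M.aa p k * M.aa p (k + 2) ≤ M.aa p (k + 1) ^ 2 := by
  haveI : Nonempty α := ⟨p⟩
  obtain ⟨m, hm⟩ : ∃ m, k + 2 + m + 1 = M.R univ := ⟨M.R univ - (k + 3), by omega⟩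
  have hσ := M.chain_zero
  have hc := card_zero (α := α)
  have hD : M.fan.D = M.R univ + 1 := rfl
  have key := M.fan.nef_ineq M.base M.amp_ample
    (List.replicate k bet ++ List.replicate m alp) (by
      intro v hv
      rw [List.mem_append, List.mem_replicate, List.mem_replicate] at hv
      rcases hv with hv | hv
      · rw [hv.2]; exact M.bet_nef
      · rw [hv.2]; exact M.alp_nef) hσ (by simp [hD, hc]; omega) bet alp M.alp_nef
  rw [← M.deg_aa p (k + 2) m (by omega), ← M.deg_aa p (k + 1) (m + 1) (by omega),
    ← M.deg_aa p k (m + 2) (by omega)]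
  have p1 : (List.replicate k (bet (α := α)) ++ List.replicate (m + 1) alp).Perm
      (alp :: (List.replicate k bet ++ List.replicate m alp)) := by
    rw [List.replicate_succ]; exact List.perm_middle
  have p2 : (List.replicate k (bet (α := α)) ++ List.replicate (m + 2) alp).Perm
      (alp :: alp :: (List.replicate k bet ++ List.replicate m alp)) := by
    rw [List.replicate_succ]
    exact List.perm_middle.trans (List.Perm.cons _ p1)
  have d1 : M.fan.deg (List.replicate (k + 1) bet ++ List.replicate (m + 1) alp) {∅, univ} =
      M.fan.deg (bet :: alp :: (List.replicate k bet ++ List.replicate m alp)) {∅, univ} := by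
    refine M.fan.deg_perm (List.Perm.cons _ p1) hσ ?_
    simp [hD, hc]; omega
  have d2 : M.fan.deg (List.replicate k bet ++ List.replicate (m + 2) alp) {∅, univ} =
      M.fan.deg (alp :: alp :: (List.replicate k bet ++ List.replicate m alp)) {∅, univ} := by
    refine M.fan.deg_perm p2 hσ ?_
    simp [hD, hc]; omega
  rw [d1, d2, mul_comm]
  exact key

end RankFn

end HRW

namespace HRW

open Finset

namespace SM

variable {E : Type*} [DecidableEq E] [Fintype E] (S : Semimatroid E)

theorem empty_mem : ∅ ∈ S.C := by
  obtain ⟨X, hX⟩ := S.C_nonempty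
  exact S.mem_of_subset hX (by simp)

theorem r_empty : S.r ∅ = 0 := by
  have := S.r_le_card (empty_mem S)
  simpa using this

/-- largest rank of a central subset -/
def m (Y : Finset E) : ℕ := (S.C.filter fun X => X ⊆ Y).sup S.r

theorem le_m {X Y : Finset E} (hX : X ∈ S.C) (h : X ⊆ Y) : S.r X ≤ m S Y :=
  Finset.le_sup (f := S.r) (Finset.mem_filter.2 ⟨hX, h⟩)

theorem m_le {Y : Finset E} {n : ℕ} (h : ∀ X ∈ S.C, X ⊆ Y → S.r X ≤ n) : m S Y ≤ n :=
  Finset.sup_le fun X hX => h X (Finset.mem_filter.1 hX).1 (Finset.mem_filter.1 hX).2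

theorem m_mono {Y Z : Finset E} (h : Y ⊆ Z) : m S Y ≤ m S Z :=
  m_le S fun _ hX hXY => le_m S hX (hXY.trans h)

theorem m_eq {Y : Finset E} (h : Y ∈ S.C) : m S Y = S.r Y :=
  le_antisymm (m_le S fun _ hX hXY => S.r_mono hX h hXY) (le_m S h (Finset.Subset.refl _))

theorem max_rank {X Y : Finset E} (hX : X ∈ S.C) (hXY : X ⊆ Y)
    (hmax : ∀ e ∈ Y, e ∉ X → insert e X ∉ S.C) : S.r X = m S Y := by
  refine le_antisymm (le_m S hX hXY) (m_le S fun Z hZ hZY => ?_)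
  by_contra hlt
  obtain ⟨e, he, he'⟩ := S.augment hX hZ (by omega)
  rw [Finset.mem_sdiff] at he
  exact hmax e (hZY he.1) he.2 he'

theorem extend {X Y : Finset E} (hX : X ∈ S.C) (hXY : X ⊆ Y) :
    ∃ Z ∈ S.C, X ⊆ Z ∧ Z ⊆ Y ∧ S.r Z = m S Y := by
  obtain ⟨Z, hZ, hZ'⟩ := Finset.exists_max_image
    (S.C.filter fun Z => X ⊆ Z ∧ Z ⊆ Y) Finset.card
    ⟨X, Finset.mem_filter.2 ⟨hX, Finset.Subset.refl _, hXY⟩⟩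
  rw [Finset.mem_filter] at hZ
  refine ⟨Z, hZ.1, hZ.2.1, hZ.2.2, max_rank S hZ.1 hZ.2.2 fun e he heZ hC => ?_⟩
  have := hZ' (insert e Z) (Finset.mem_filter.2 ⟨hC, hZ.2.1.trans (Finset.subset_insert _ _),
    Finset.insert_subset he hZ.2.2⟩)
  rw [Finset.card_insert_of_notMem heZ] at this
  omega

theorem jump {Y : Finset E} {x : E} (hY : Y ∈ S.C) (h : insert x Y ∉ S.C) :
    m S (insert x Y) = m S Y := by
  rw [m_eq S hY]
  refine (max_rank S hY (Finset.subset_insert _ _) fun e he heY => ?_).symm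
  rcases Finset.mem_insert.1 he with rfl | he
  · exact h
  · exact absurd he heY

theorem m_unit (Y : Finset E) (x : E) : m S (insert x Y) ≤ m S Y + 1 := by
  refine m_le S fun X hX hXY => ?_
  have h1 : X.erase x ∈ S.C := S.mem_of_subset hX (Finset.erase_subset _ _)
  have h2 : X.erase x ⊆ Y := Finset.subset_insert_iff.1 hXY
  have h3 := le_m S h1 h2
  by_cases hx : x ∈ X
  · have h4 : ({x} : Finset E) ∈ S.C := S.mem_of_subset hX (Finset.singleton_subset_iff.2 hx)
    have e : X.erase x ∪ {x} = X := by
      rw [Finset.union_comm, ← Finset.insert_eq, Finset.insert_erase hx]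
    have h5 := S.submodular h1 h4 (by rw [e]; exact hX)
    rw [e] at h5
    have h6 := S.r_le_card h4
    rw [Finset.card_singleton] at h6
    omega
  · rw [Finset.erase_eq_of_notMem hx] at h3
    omega

theorem m_loc (Y : Finset E) (e f : E) (he : m S (insert e Y) = m S Y)
    (hf : m S (insert f Y) = m S Y) : m S (insert e (insert f Y)) = m S Y := by
  by_cases heY : e ∈ Y
  · rw [Finset.insert_eq_of_mem (Finset.mem_insert_of_mem heY), hf]
  by_cases hfY : f ∈ Y
  · rw [Finset.insert_eq_of_mem hfY, he]
  by_cases hef : e = f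
  · subst hef
    rw [Finset.insert_idem, he]
  obtain ⟨X, hX, _, hXY, hr⟩ := extend S (empty_mem S) (Finset.empty_subset Y)
  obtain ⟨Z, hZ, hXZ, hZY, hrZ⟩ := extend S hX
    (hXY.trans ((Finset.subset_insert f Y).trans (Finset.subset_insert e _)))
  refine le_antisymm ?_ (m_mono S ((Finset.subset_insert f Y).trans (Finset.subset_insert e _)))
  rw [← hrZ]
  have hA : Z.erase f ∈ S.C := S.mem_of_subset hZ (Finset.erase_subset _ _)
  have hB : Z.erase e ∈ S.C := S.mem_of_subset hZ (Finset.erase_subset _ _)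
  have hI : Z.erase f ∩ Z.erase e ∈ S.C := S.mem_of_subset hA Finset.inter_subset_left
  have hA1 := le_m S hA (Y := insert e Y) (by
    rw [← Finset.subset_insert_iff, Finset.insert_comm]; exact hZY)
  have hB1 := le_m S hB (Y := insert f Y) (Finset.subset_insert_iff.1 hZY)
  have hU : Z.erase f ∪ Z.erase e = Z := by
    ext x
    simp only [Finset.mem_union, Finset.mem_erase]
    constructor
    · tauto
    · intro h
      by_cases hx : x = f
      · right
        exact ⟨fun h' => hef (h' ▸ hx), h⟩
      · exact Or.inl ⟨hx, h⟩
  have hI1 : X ⊆ Z.erase f ∩ Z.erase e := by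
    intro x hx
    simp only [Finset.mem_inter, Finset.mem_erase]
    exact ⟨⟨by rintro rfl; exact hfY (hXY hx), hXZ hx⟩, by rintro rfl; exact heY (hXY hx), hXZ hx⟩
  have h1 := S.submodular hA hB (by rw [hU]; exact hZ)
  rw [hU] at h1
  have h2 := S.r_mono hX hI hI1
  omega

def cen (A : Finset (Option E)) : Prop := none ∉ A ∧ Finset.eraseNone A ∈ S.C

open Classical in
noncomputable def fl (A : Finset (Option E)) : ℕ := if cen S A then 0 else 1

theorem fl_mono {A B : Finset (Option E)} (h : A ⊆ B) : fl S A ≤ fl S B := by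
  unfold fl
  by_cases hB : cen S B
  · have : cen S A := ⟨fun hn => hB.1 (h hn), S.mem_of_subset hB.2 (Finset.eraseNone.monotone h)⟩
    rw [if_pos this, if_pos hB]
  · rw [if_neg hB]
    split_ifs <;> omega

theorem fl_zero {A : Finset (Option E)} : fl S A = 0 ↔ cen S A := by
  unfold fl
  split_ifs with h <;> simp [h]

theorem fl_le (A : Finset (Option E)) : fl S A ≤ 1 := by
  unfold fl
  split_ifs <;> omega

theorem eraseNone_insert_some (x : E) (A : Finset (Option E)) :
    Finset.eraseNone (insert (some x) A) = insert x (Finset.eraseNone A) := by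
  ext y
  simp [Finset.mem_eraseNone]

theorem eraseNone_insert_none (A : Finset (Option E)) :
    Finset.eraseNone (insert none A) = Finset.eraseNone A := by
  ext y
  simp [Finset.mem_eraseNone]

theorem cen_insert_some {x : E} {A : Finset (Option E)} :
    cen S (insert (some x) A) ↔ none ∉ A ∧ insert x (Finset.eraseNone A) ∈ S.C := by
  simp [cen, eraseNone_insert_some]

theorem union_two {Y : Finset E} {x y : E} (hY : Y ∈ S.C) (hx : insert x Y ∈ S.C)
    (hy : insert y Y ∈ S.C) (h : S.r (insert x Y) = S.r Y) : insert x (insert y Y) ∈ S.C := by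
  have hI : insert x Y ∩ insert y Y ∈ S.C := S.mem_of_subset hx Finset.inter_subset_left
  have i1 := S.r_mono hY hI (Finset.subset_inter (Finset.subset_insert _ _)
    (Finset.subset_insert _ _))
  have i2 := S.r_mono hI hx Finset.inter_subset_left
  have hU := S.union_mem hx hy (by omega)
  rwa [Finset.insert_union, Finset.union_insert, Finset.union_self] at hU

theorem cone_loc (e f : Option E) (A : Finset (Option E))
    (he : m S (Finset.eraseNone (insert e A)) + fl S (insert e A) = m S (Finset.eraseNone A) + fl S A)
    (hf : m S (Finset.eraseNone (insert f A)) + fl S (insert f A) =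
      m S (Finset.eraseNone A) + fl S A) :
    m S (Finset.eraseNone (insert e (insert f A))) + fl S (insert e (insert f A)) =
      m S (Finset.eraseNone A) + fl S A := by
  have e1 := m_mono S (Finset.eraseNone.monotone (Finset.subset_insert e A))
  have e2 := fl_mono S (Finset.subset_insert e A)
  have f1 := m_mono S (Finset.eraseNone.monotone (Finset.subset_insert f A))
  have f2 := fl_mono S (Finset.subset_insert f A)
  have e3 : m S (Finset.eraseNone (insert e A)) = m S (Finset.eraseNone A) := by omega
  have e4 : fl S (insert e A) = fl S A := by omega
  have f3 : m S (Finset.eraseNone (insert f A)) = m S (Finset.eraseNone A) := by omega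
  have f4 : fl S (insert f A) = fl S A := by omega
  congr 1
  · rcases e with _ | x
    · rw [eraseNone_insert_none, f3]
    rcases f with _ | y
    · rw [eraseNone_insert_some, eraseNone_insert_none, ← eraseNone_insert_some, e3]
    rw [eraseNone_insert_some] at e3 f3
    rw [eraseNone_insert_some, eraseNone_insert_some]
    exact m_loc S _ x y e3 f3
  · by_cases hA : cen S A
    · have g0 := (fl_zero S).2 hA
      rw [g0] at e4 f4 ⊢
      rw [fl_zero] at e4 f4 ⊢
      rcases e with _ | x
      · exact absurd (Finset.mem_insert_self _ _) e4.1
      rcases f with _ | y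
      · exact absurd (Finset.mem_insert_self _ _) f4.1
      have hx := ((cen_insert_some S).1 e4).2
      have hy := ((cen_insert_some S).1 f4).2
      rw [cen_insert_some, eraseNone_insert_some]
      rw [eraseNone_insert_some, m_eq S hx, m_eq S hA.2] at e3
      exact ⟨f4.1, union_two S hA.2 hx hy e3⟩
    · have g0 : fl S A ≠ 0 := fun h => hA ((fl_zero S).1 h)
      have g1 := fl_mono S ((Finset.subset_insert f A).trans (Finset.subset_insert e _))
      have g2 := fl_le S (insert e (insert f A))
      omega

/-- The cone matroid of a semimatroid. -/
noncomputable def cone (hl : ∀ e : E, {e} ∈ S.C → S.r {e} ≠ 0) : RankFn (Option E) where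
  R A := m S (Finset.eraseNone A) + fl S A
  zero := by
    have h1 : cen S (∅ : Finset (Option E)) := ⟨by simp, by simpa using empty_mem S⟩
    have h2 : Finset.eraseNone (∅ : Finset (Option E)) = ∅ := by simp
    rw [(fl_zero S).2 h1, h2, m_eq S (empty_mem S), r_empty]
  mono h := Nat.add_le_add (m_mono S (Finset.eraseNone.monotone h)) (fl_mono S h)
  unit e A := by
    have h0 := fl_le S (insert e A)
    rcases e with _ | x
    · rw [eraseNone_insert_none]; omega
    · rw [eraseNone_insert_some]
      have h1 := m_unit S (Finset.eraseNone A) x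
      by_cases hA : cen S A
      · by_cases hB : cen S (insert (some x) A)
        · rw [(fl_zero S).2 hB]; omega
        · have := jump S hA.2 (x := x) (fun h => hB ((cen_insert_some S).2 ⟨hA.1, h⟩))
          omega
      · have : fl S A ≠ 0 := fun h => hA ((fl_zero S).1 h)
        omega
  loc e f A he hf := cone_loc S e f A he hf
  loopless e := by
    rcases e with _ | x
    · have h1 : Finset.eraseNone ({none} : Finset (Option E)) = ∅ := by
        ext y; simp [Finset.mem_eraseNone]
      have h2 : fl S ({none} : Finset (Option E)) ≠ 0 := fun h =>
        ((fl_zero S).1 h).1 (Finset.mem_singleton_self _)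
      have h3 := fl_le S ({none} : Finset (Option E))
      rw [h1, m_eq S (empty_mem S), r_empty]
      omega
    · have h1 : Finset.eraseNone ({some x} : Finset (Option E)) = {x} := by
        ext y; simp [Finset.mem_eraseNone]
      have h3 := fl_le S ({some x} : Finset (Option E))
      by_cases hx : {x} ∈ S.C
      · have h2 : cen S ({some x} : Finset (Option E)) := ⟨by simp, by rwa [h1]⟩
        rw [(fl_zero S).2 h2, h1, m_eq S hx]
        have h4 := S.r_le_card hx
        have h5 := hl x hx
        rw [Finset.card_singleton] at h4
        omega
      · have h2 : fl S ({some x} : Finset (Option E)) ≠ 0 := fun h => hx (by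
          rw [← h1]; exact ((fl_zero S).1 h).2)
        have h4 := jump S (empty_mem S) (x := x) (by simpa using hx)
        rw [m_eq S (empty_mem S), r_empty] at h4
        have h5 : m S {x} = 0 := by simpa using h4
        rw [h1, h5]
        omega

variable (hl : ∀ e : E, {e} ∈ S.C → S.r {e} ≠ 0)

theorem cone_R (A : Finset (Option E)) :
    (cone S hl).R A = m S (Finset.eraseNone A) + fl S A := rfl

theorem cone_univ : (cone S hl).R univ = S.rank + 1 := by
  have h1 : Finset.eraseNone (univ : Finset (Option E)) = univ := by
    ext y; simp [Finset.mem_eraseNone]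
  have h2 : fl S (univ : Finset (Option E)) ≠ 0 := fun h =>
    ((fl_zero S).1 h).1 (Finset.mem_univ _)
  have h3 := fl_le S (univ : Finset (Option E))
  have h4 : m S univ = S.rank := by
    simp [m, Semimatroid.rank]
  rw [cone_R, h1, h4]
  omega

theorem none_mem_cl (A : Finset (Option E)) : none ∉ (cone S hl).cl A ↔ cen S A := by
  rw [RankFn.mem_cl, cone_R, cone_R, eraseNone_insert_none, ← fl_zero]
  have h2 : fl S (insert none A) ≠ 0 := fun h =>
    ((fl_zero S).1 h).1 (Finset.mem_insert_self _ _)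
  have h3 := fl_le S (insert none A)
  have h4 := fl_le S A
  omega

theorem r_le_rank {A : Finset E} (hA : A ∈ S.C) : S.r A ≤ S.rank :=
  Finset.le_sup (f := S.r) hA

theorem whitney_eq {k : ℕ} (hk : k ≤ S.rank) :
    S.whitney k = ∑ X ∈ S.C.filter (fun X => S.r X = k), (-1 : ℤ) ^ (X.card + k) := by
  rw [Semimatroid.whitney, Semimatroid.charPoly, Polynomial.finsetSum_coeff, Finset.mul_sum,
    Finset.sum_filter]
  refine Finset.sum_congr rfl fun A hA => ?_
  have e : ((-1 : Polynomial ℤ) ^ A.card) = Polynomial.C ((-1 : ℤ) ^ A.card) := by simp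
  have := r_le_rank S hA
  rw [e, Polynomial.coeff_C_mul, Polynomial.coeff_X_pow]
  by_cases h : S.r A = k
  · rw [if_pos (by omega), if_pos h, pow_add]; ring
  · rw [if_neg (by omega), if_neg h]; simp

theorem whitney_aa {k : ℕ} (hk : k ≤ S.rank) :
    (S.whitney k : ℝ) = (cone S hl).aa none k := by
  classical
  rw [whitney_eq S hk, RankFn.aa]
  push_cast
  set M := cone S hl with hM
  have step : ∀ H ∈ univ.filter (fun H => M.Flat H ∧ none ∉ H ∧ M.R H = k),
      M.B H = ∑ A ∈ univ.filter (fun A => cen S A ∧ M.R A = k) with M.cl A = H,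
        (-1 : ℝ) ^ (A.card + k) := by
    intro H hH
    rw [Finset.mem_filter] at hH
    rw [RankFn.B]
    refine Finset.sum_congr ?_ fun A _ => by rw [hH.2.2.2]
    ext A
    simp only [Finset.mem_filter, Finset.mem_univ, true_and]
    constructor
    · rintro rfl
      exact ⟨⟨(none_mem_cl S hl A).1 hH.2.2.1, by rw [← M.R_cl, hH.2.2.2]⟩, rfl⟩
    · exact fun h => h.2
  rw [Finset.sum_congr rfl step, Finset.sum_fiberwise_of_maps_to]
  · have hR : ∀ A, cen S A → M.R A = S.r (Finset.eraseNone A) := by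
      intro A hA
      rw [hM, cone_R, (fl_zero S).2 hA, m_eq S hA.2, add_zero]
    have hmap : ∀ A, cen S A → (Finset.eraseNone A).map Function.Embedding.some = A := by
      intro A hA
      rw [Finset.map_some_eraseNone, Finset.erase_eq_of_notMem hA.1]
    have hcen : ∀ X, X ∈ S.C → cen S (X.map Function.Embedding.some) := by
      intro X hX
      refine ⟨by simp, by rwa [Finset.eraseNone_map_some]⟩
    refine Finset.sum_nbij' (fun X => X.map Function.Embedding.some)
      (fun A => Finset.eraseNone A) ?_ ?_ ?_ ?_ ?_
    · intro X hX
      rw [Finset.mem_filter] at hX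
      simp only [Finset.mem_filter, Finset.mem_univ, true_and]
      refine ⟨hcen X hX.1, ?_⟩
      rw [hR _ (hcen X hX.1), Finset.eraseNone_map_some, hX.2]
    · intro A hA
      simp only [Finset.mem_filter, Finset.mem_univ, true_and] at hA
      rw [Finset.mem_filter]
      exact ⟨hA.1.2, by rw [← hR A hA.1, hA.2]⟩
    · intro X _
      simp [Finset.eraseNone_map_some]
    · intro A hA
      simp only [Finset.mem_filter, Finset.mem_univ, true_and] at hA
      exact hmap A hA.1
    · intro X _
      simp
  · intro A hA
    simp only [Finset.mem_filter, Finset.mem_univ, true_and] at hA ⊢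
    exact ⟨M.flat_cl A, (none_mem_cl S hl A).2 hA.1, by rw [M.R_cl, hA.2]⟩

theorem unimodal (a : ℕ → ℝ) (n : ℕ) (hpos : ∀ i ≤ n, 0 < a i)
    (hlc : ∀ i, i + 2 ≤ n → a i * a (i + 2) ≤ a (i + 1) ^ 2) :
    ∃ k ≤ n, (∀ i j : ℕ, i ≤ j → j ≤ k → a i ≤ a j) ∧
      (∀ i j : ℕ, k ≤ i → i ≤ j → j ≤ n → a j ≤ a i) := by
  obtain ⟨k, hk, hmax⟩ := Finset.exists_max_image (range (n + 1)) a ⟨0, by simp⟩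
  have hkn : k ≤ n := by
    rw [Finset.mem_range] at hk; omega
  have hmax' : ∀ i ≤ n, a i ≤ a k := fun i hi => hmax i (Finset.mem_range.2 (by omega))
  have up : ∀ d i, i + d + 1 = k → a i ≤ a (i + 1) := by
    intro d
    induction d with
    | zero =>
      intro i hi
      have : i + 1 = k := by omega
      rw [this]
      exact hmax' i (by omega)
    | succ d ih =>
      intro i hi
      have h1 := ih (i + 1) (by omega)
      have h2 := hlc i (by omega)
      have h3 := hpos (i + 1) (by omega)
      have h4 := hpos (i + 2) (by omega)
      have h1' : a (i + 1) ≤ a (i + 2) := h1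
      by_contra hn
      push Not at hn
      nlinarith [mul_lt_mul_of_pos_right hn h4]
  have down : ∀ d, k + d + 1 ≤ n → a (k + d + 1) ≤ a (k + d) := by
    intro d
    induction d with
    | zero => exact fun h => hmax' _ h
    | succ d ih =>
      intro h
      have h1 := ih (by omega)
      have h2 := hlc (k + d) (by omega)
      have h3 := hpos (k + d + 1) (by omega)
      have h4 := hpos (k + d) (by omega)
      have h2' : a (k + d) * a (k + (d + 1) + 1) ≤ a (k + d + 1) ^ 2 := h2
      have e : k + (d + 1) = k + d + 1 := by omega
      rw [e] at h2' ⊢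
      by_contra hn
      push Not at hn
      nlinarith [mul_lt_mul_of_pos_left hn h4]
  refine ⟨k, hkn, ?_, ?_⟩
  · intro i j hij
    induction j, hij using Nat.le_induction with
    | base => exact fun _ => le_refl _
    | succ j hj ih =>
      intro hjk
      exact (ih (by omega)).trans (up (k - j - 1) j (by omega))
  · intro i j hki hij
    induction j, hij using Nat.le_induction with
    | base => exact fun _ => le_refl _
    | succ j hj ih =>
      intro hjn
      have := down (j - k) (by omega)
      have e : k + (j - k) = j := by omega
      rw [e] at this
      exact this.trans (ih (by omega))

end SM

end HRW

/-- For a loopless semimatroid, the sequence `w_0(𝒞), …, w_{r(𝒞)}(𝒞)` of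
unsigned Whitney numbers of the first kind is unimodal: for some `0 ≤ k ≤ r(𝒞)` it is
weakly increasing up to `k` and weakly decreasing from `k` on. -/
theorem Semimatroid.whitney_unimodal
    {E : Type*} [DecidableEq E] [Fintype E] (S : Semimatroid E)
    (hloopless : ¬ ∃ e : E, {e} ∈ S.C ∧ S.r {e} = 0) :
    ∃ k ≤ S.rank,
      (∀ i j : ℕ, i ≤ j → j ≤ k → S.whitney i ≤ S.whitney j) ∧
      (∀ i j : ℕ, k ≤ i → i ≤ j → j ≤ S.rank → S.whitney j ≤ S.whitney i) := by
  have hl : ∀ e : E, {e} ∈ S.C → S.r {e} ≠ 0 := fun e h1 h2 => hloopless ⟨e, h1, h2⟩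
  have hu := HRW.SM.cone_univ S hl
  obtain ⟨k, hk, h1, h2⟩ := HRW.SM.unimodal (fun i => (HRW.SM.cone S hl).aa none i) S.rank
    (fun i hi => (HRW.SM.cone S hl).aa_pos none i (by omega))
    (fun i hi => (HRW.SM.cone S hl).aa_logconcave none i (by omega))
  refine ⟨k, hk, fun i j hij hjk => ?_, fun i j hki hij hj => ?_⟩
  · have := h1 i j hij hjk
    rw [← HRW.SM.whitney_aa S hl (by omega), ← HRW.SM.whitney_aa S hl (by omega)] at this
    exact_mod_cast this
  · have := h2 i j hki hij hj
    rw [← HRW.SM.whitney_aa S hl (by omega), ← HRW.SM.whitney_aa S hl (by omega)] at this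
    exact_mod_cast this
end

section
/- Let (E,𝒞,r) be a semimatroid and define r̂ : 2^E → ℕ by r̂(X) = max{r(Y) : Y ⊆ X, Y ∈ 𝒞}. Then for every subset X ⊆ E: X ∈ 𝒞 if and only if every circuit K of M_𝒞 (that is, every minimal subset K ⊆ E with r̂(K) < |K|) with K ⊆ X belongs to 𝒞. Moreover, the circuits of the semimatroid 𝒞 are exactly the circuits K of M_𝒞 with K ∈ 𝒞, and r̂(X) = r(X) for every X ∈ 𝒞. -/
namespace Semimatroid

variable {E : Type*} [DecidableEq E] [Fintype E] (S : Semimatroid E)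

/-- A circuit of the semimatroid: a minimal dependent central set. -/
def IsCircuit (K : Finset E) : Prop :=
  K ∈ S.C ∧ S.r K < K.card ∧ ∀ Y ⊂ K, S.r Y = Y.card

/-- The extension `r̂(X) = max{r(Y) : Y ⊆ X, Y ∈ 𝒞}` of the rank function to all of `2^E`;
it is the rank function of the matroid `M_𝒞`. -/
def rhat (X : Finset E) : ℕ := (S.C.filter fun Y => Y ⊆ X).sup S.r

/-- A circuit of the matroid `M_𝒞`: a minimal subset `K ⊆ E` with `r̂(K) < |K|`. -/
def IsMatCircuit (K : Finset E) : Prop :=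
  S.rhat K < K.card ∧ ∀ K' ⊂ K, ¬ (S.rhat K' < K'.card)

end Semimatroid

namespace Semimatroid

theorem rhat_eq_aux {E : Type*} [DecidableEq E] [Fintype E] (S : Semimatroid E)
    {X : Finset E} (hX : X ∈ S.C) : S.rhat X = S.r X := by
  unfold rhat
  apply le_antisymm
  · apply Finset.sup_le
    intro Y hY
    rw [Finset.mem_filter] at hY
    exact S.r_mono hY.1 hX hY.2
  · exact Finset.le_sup (f := S.r) (by simp [hX])

theorem exists_loop_aux {E : Type*} [DecidableEq E] [Fintype E] (S : Semimatroid E)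
    (Y : Finset E) : Y ∈ S.C → S.r Y < Y.card →
    ∃ D ⊆ Y, ∃ f ∈ D, S.r D = S.r (D.erase f) := by
  induction Y using Finset.strongInduction with
  | H Y ih =>
    intro hY hlt
    obtain ⟨f, hf⟩ : Y.Nonempty := Finset.card_pos.mp (by omega)
    by_cases h : S.r Y = S.r (Y.erase f)
    · exact ⟨Y, subset_rfl, f, hf, h⟩
    · have hs := Finset.erase_subset f Y
      have hc := S.mem_of_subset hY hs
      have hm := S.r_mono hc hY hs
      have hcard := Finset.card_erase_of_mem hf
      obtain ⟨D, hD, g, hg, he⟩ := ih _ (Finset.erase_ssubset hf) hc (by omega)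
      exact ⟨D, hD.trans hs, g, hg, he⟩

theorem mem_of_rhat_aux {E : Type*} [DecidableEq E] [Fintype E] (S : Semimatroid E)
    {X : Finset E} (h : X.card ≤ S.rhat X) : X ∈ S.C := by
  obtain ⟨Z, hZ⟩ := S.C_nonempty
  have h0 : (∅ : Finset E) ∈ S.C := S.mem_of_subset hZ (Finset.empty_subset _)
  obtain ⟨Y, hY, he⟩ := Finset.exists_mem_eq_sup (S.C.filter fun Y => Y ⊆ X)
    ⟨∅, by simp [h0]⟩ S.r
  rw [Finset.mem_filter] at hY
  have h1 := S.r_le_card hY.1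
  unfold rhat at h
  rw [he] at h
  have := Finset.eq_of_subset_of_card_le hY.2 (h.trans h1)
  exact this ▸ hY.1

theorem exists_min_aux {E : Type*} [DecidableEq E] [Fintype E] (S : Semimatroid E)
    (X : Finset E) : X ∉ S.C → ∃ N ⊆ X, N ∉ S.C ∧ ∀ Y ⊂ N, Y ∈ S.C := by
  induction X using Finset.strongInduction with
  | H X ih =>
    intro hX
    by_cases h : ∀ Y ⊂ X, Y ∈ S.C
    · exact ⟨X, subset_rfl, hX, h⟩
    · push Not at h
      obtain ⟨Y, hY, hn⟩ := h
      obtain ⟨N, hN, h2⟩ := ih Y hY hn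
      exact ⟨N, hN.trans hY.1, h2⟩

end Semimatroid

/-- For a semimatroid `(E,𝒞,r)`: a subset `X ⊆ E` is central iff every
circuit of `M_𝒞` contained in `X` is central; the circuits of `𝒞` are exactly the circuits
of `M_𝒞` that are central; and `r̂` agrees with `r` on central sets. -/
theorem Semimatroid.central_iff_circuits_central
    {E : Type*} [DecidableEq E] [Fintype E] (S : Semimatroid E) :
    (∀ X : Finset E,
      (X ∈ S.C ↔ ∀ K : Finset E, S.IsMatCircuit K → K ⊆ X → K ∈ S.C)) ∧
    (∀ K : Finset E, S.IsCircuit K ↔ (S.IsMatCircuit K ∧ K ∈ S.C)) ∧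
    (∀ X ∈ S.C, S.rhat X = S.r X) := by
  refine ⟨fun X => ⟨fun hX K _ hK => S.mem_of_subset hX hK, fun h => ?_⟩, fun K => ⟨?_, ?_⟩,
    fun X hX => S.rhat_eq_aux hX⟩
  · by_contra hX
    obtain ⟨N, hNX, hN, hmin⟩ := S.exists_min_aux X hX
    refine hN (h N ⟨?_, ?_⟩ hNX)
    · by_contra hc
      exact hN (S.mem_of_rhat_aux (not_lt.mp hc))
    · intro Y hY hlt
      rw [S.rhat_eq_aux (hmin Y hY)] at hlt
      obtain ⟨D, hD, f, hf, he⟩ := S.exists_loop_aux Y (hmin Y hY) hlt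
      have hDN : D ⊆ N := hD.trans hY.1
      have hi : D ∩ N.erase f = D.erase f := by
        ext x
        have := @hDN x
        simp only [Finset.mem_inter, Finset.mem_erase]
        tauto
      have hu : D ∪ N.erase f = N := by
        ext x
        have := @hDN x
        by_cases hx : x = f
        · subst hx
          simp [hf, hDN hf]
        · simp only [Finset.mem_union, Finset.mem_erase]
          tauto
      have := S.union_mem (S.mem_of_subset (hmin Y hY) hD)
        (hmin _ (Finset.erase_ssubset (hDN hf))) (by rw [hi]; exact he)
      rw [hu] at this
      exact hN this
  · rintro ⟨hK, hlt, hmin⟩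
    refine ⟨⟨by rwa [S.rhat_eq_aux hK], fun Y hY => ?_⟩, hK⟩
    rw [S.rhat_eq_aux (S.mem_of_subset hK hY.1), hmin Y hY]
    exact lt_irrefl _
  · rintro ⟨⟨hlt, hmin⟩, hK⟩
    refine ⟨hK, by rwa [← S.rhat_eq_aux hK], fun Y hY => ?_⟩
    have hYC := S.mem_of_subset hK hY.1
    have := hmin Y hY
    rw [S.rhat_eq_aux hYC] at this
    exact le_antisymm (S.r_le_card hYC) (not_lt.mp this)
end

section
/- Let (E,𝒞,r) be a semimatroid, let r̂(X) = max{r(Y) : Y ⊆ X, Y ∈ 𝒞} for X ⊆ E, and let 𝒟 = {X ⊆ E : every circuit K of M_𝒞 with K ⊆ X belongs to 𝒞} (the α_𝒞-compatible subsets of the assigning matroid (M_𝒞, α_𝒞)). Then T(𝒞;t,s) = Σ_{X ∈ 𝒟} (t−1)^{r̂(E)−r̂(X)} (s−1)^{|X|−r̂(X)} and χ(𝒞;t) = Σ_{X ∈ 𝒟} (−1)^{|X|} t^{r̂(E)−r̂(X)}. -/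
open scoped Classical

namespace Semimatroid

variable {E : Type*} [DecidableEq E] [Fintype E] (S : Semimatroid E)

/-- The `α_𝒞`-compatible subsets of the assigning matroid `(M_𝒞, α_𝒞)`:
`𝒟 = {X ⊆ E : every circuit of M_𝒞 contained in X belongs to 𝒞}`. -/
noncomputable def compat : Finset (Finset E) :=
  (Finset.univ : Finset E).powerset.filter
    fun X => ∀ K : Finset E, S.IsMatCircuit K → K ⊆ X → K ∈ S.C

end Semimatroid

namespace Semimatroid

variable {E : Type*} [DecidableEq E] [Fintype E] (S : Semimatroid E)

lemma empty_mem_C : (∅ : Finset E) ∈ S.C := by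
  obtain ⟨X, hX⟩ := S.C_nonempty
  exact S.mem_of_subset hX (Finset.empty_subset X)

lemma r_le_rhat {X Y : Finset E} (hY : Y ∈ S.C) (h : Y ⊆ X) : S.r Y ≤ S.rhat X :=
  Finset.le_sup (f := S.r) (Finset.mem_filter.2 ⟨hY, h⟩)

lemma exists_rhat (X : Finset E) : ∃ Y ∈ S.C, Y ⊆ X ∧ S.r Y = S.rhat X := by
  have hne : (S.C.filter fun Y => Y ⊆ X).Nonempty :=
    ⟨∅, Finset.mem_filter.2 ⟨S.empty_mem_C, Finset.empty_subset X⟩⟩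
  obtain ⟨Y, hY, h⟩ := Finset.exists_mem_eq_sup _ hne S.r
  rw [Finset.mem_filter] at hY
  exact ⟨Y, hY.1, hY.2, h.symm⟩

lemma rhat_eq_r {X : Finset E} (hX : X ∈ S.C) : S.rhat X = S.r X := by
  apply le_antisymm
  · obtain ⟨Y, hY, hYX, h⟩ := S.exists_rhat X
    rw [← h]
    exact S.r_mono hY hX hYX
  · exact S.r_le_rhat hX (Finset.Subset.refl X)

lemma rhat_le_card (X : Finset E) : S.rhat X ≤ X.card := by
  obtain ⟨Y, hY, hYX, h⟩ := S.exists_rhat X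
  rw [← h]
  exact (S.r_le_card hY).trans (Finset.card_le_card hYX)

lemma rank_eq : S.rank = S.rhat Finset.univ := by
  simp [rank, rhat]

lemma mem_of_indep {X : Finset E} (h : ¬ S.rhat X < X.card) : X ∈ S.C ∧ S.r X = X.card := by
  obtain ⟨Y, hY, hYX, h'⟩ := S.exists_rhat X
  have h1 := S.r_le_card hY
  have : Y = X := Finset.eq_of_subset_of_card_le hYX (by omega)
  subst this
  have := S.rhat_le_card Y
  exact ⟨hY, by omega⟩

lemma indep_subset {A B : Finset E} (hB : B ∈ S.C) (h : S.r B = B.card) (hAB : A ⊆ B) :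
    S.r A = A.card := by
  have hA := S.mem_of_subset hB hAB
  have hD := S.mem_of_subset hB (Finset.sdiff_subset (s := B) (t := A))
  have hU : A ∪ (B \ A) = B := Finset.union_sdiff_of_subset hAB
  have h1 := S.submodular hA hD (by rw [hU]; exact hB)
  rw [hU] at h1
  have h2 := S.r_le_card hA
  have h3 := S.r_le_card hD
  have h4 := Finset.card_sdiff_add_card_eq_card hAB
  omega

lemma exists_basis {Y : Finset E} (hY : Y ∈ S.C) :
    ∃ B ⊆ Y, S.r B = B.card ∧ S.r B = S.r Y := by
  obtain ⟨B, hB, hBmax⟩ := Finset.exists_max_image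
    (Y.powerset.filter fun B => S.r B = B.card) Finset.card
    ⟨∅, by
      have := S.r_le_card S.empty_mem_C
      simp at this ⊢
      exact this⟩
  simp only [Finset.mem_filter, Finset.mem_powerset] at hB hBmax
  obtain ⟨hBY, hBi⟩ := hB
  refine ⟨B, hBY, hBi, ?_⟩
  obtain ⟨Z, hZ, hZmax⟩ := Finset.exists_max_image
    (Y.powerset.filter fun Z => B ⊆ Z ∧ S.r Z = S.r B) Finset.card
    ⟨B, by simp [hBY]⟩
  simp only [Finset.mem_filter, Finset.mem_powerset] at hZ hZmax
  obtain ⟨hZY, hBZ, hZr⟩ := hZ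
  suffices Z = Y by rw [← this, hZr]
  refine Finset.Subset.antisymm hZY ?_
  intro e he
  by_contra heZ
  have heB : e ∉ B := fun h => heZ (hBZ h)
  have hBe : insert e B ⊆ Y := Finset.insert_subset he hBY
  have hZe : insert e Z ⊆ Y := Finset.insert_subset he hZY
  have cB := S.mem_of_subset hY hBY
  have cZ := S.mem_of_subset hY hZY
  have cBe := S.mem_of_subset hY hBe
  have cZe := S.mem_of_subset hY hZe
  have h1 : S.r (insert e B) ≤ S.r B := by
    have h2 := S.r_le_card cBe
    rw [Finset.card_insert_of_notMem heB] at h2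
    by_contra h3
    have h4 := hBmax (insert e B) ⟨hBe, by rw [Finset.card_insert_of_notMem heB]; omega⟩
    rw [Finset.card_insert_of_notMem heB] at h4
    omega
  have hU : Z ∪ insert e B = insert e Z := by
    ext x; have := @hBZ x; simp; tauto
  have hI : Z ∩ insert e B = B := by
    ext x; have := @hBZ x; simp only [Finset.mem_inter, Finset.mem_insert]
    constructor
    · rintro ⟨h, rfl | h'⟩
      · exact absurd h heZ
      · exact h'
    · intro h; exact ⟨this h, Or.inr h⟩
  have h2 := S.submodular cZ cBe (by rw [hU]; exact cZe)
  rw [hU, hI] at h2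
  have h3 := S.r_mono cZ cZe (Finset.subset_insert e Z)
  have h4 := hZmax (insert e Z) ⟨hZe, hBZ.trans (Finset.subset_insert e Z), by omega⟩
  rw [Finset.card_insert_of_notMem heZ] at h4
  omega

lemma exists_circuit {X : Finset E} (h : S.rhat X < X.card) :
    ∃ K ⊆ X, S.IsMatCircuit K := by
  obtain ⟨K, hK, hmin⟩ := Finset.exists_min_image
    (X.powerset.filter fun K => S.rhat K < K.card) Finset.card ⟨X, by simp [h]⟩
  simp only [Finset.mem_filter, Finset.mem_powerset] at hK hmin
  refine ⟨K, hK.1, hK.2, fun K' hK' h' => ?_⟩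
  have h1 := hmin K' ⟨hK'.1.trans hK.1, h'⟩
  have h2 := Finset.card_lt_card hK'
  omega

lemma compat_eq : S.compat = S.C := by
  ext X
  simp only [compat, Finset.mem_filter, Finset.mem_powerset, Finset.subset_univ, true_and]
  constructor
  swap
  · intro hX K _ hKX
    exact S.mem_of_subset hX hKX
  intro hX
  obtain ⟨Y₀, hY₀, hY₀X, hr₀⟩ := S.exists_rhat X
  obtain ⟨B, hBY, hBi, hBr⟩ := S.exists_basis hY₀
  have cB := S.mem_of_subset hY₀ hBY
  have hBX := hBY.trans hY₀X
  have key : ∀ e ∈ X, e ∉ B → insert e B ∈ S.C := by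
    intro e he heB
    have hBe : insert e B ⊆ X := Finset.insert_subset he hBX
    have hdep : S.rhat (insert e B) < (insert e B).card := by
      rw [Finset.card_insert_of_notMem heB]
      obtain ⟨W, hW, hWs, hWr⟩ := S.exists_rhat (insert e B)
      have := S.r_le_rhat hW (hWs.trans hBe)
      omega
    obtain ⟨K, hKs, hK⟩ := S.exists_circuit hdep
    have cK := hX K hK (hKs.trans hBe)
    have hKr := hK.1
    rw [S.rhat_eq_r cK] at hKr
    have heK : e ∈ K := by
      by_contra heK
      have : K ⊆ B := by
        intro x hx
        rcases Finset.mem_insert.1 (hKs hx) with rfl | h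
        · exact absurd hx heK
        · exact h
      have := S.indep_subset cB hBi this
      omega
    have hI : K ∩ B = K.erase e := by
      ext x
      simp only [Finset.mem_inter, Finset.mem_erase]
      constructor
      · rintro ⟨h1, h2⟩
        exact ⟨fun h => heB (h ▸ h2), h1⟩
      · rintro ⟨h1, h2⟩
        exact ⟨h2, (Finset.mem_insert.1 (hKs h2)).resolve_left h1⟩
    have hU : K ∪ B = insert e B := by
      apply Finset.Subset.antisymm
      · exact Finset.union_subset hKs (Finset.subset_insert e B)
      · exact Finset.insert_subset (Finset.mem_union_left _ heK) Finset.subset_union_right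
    rw [← hU]
    apply S.union_mem cK cB
    have h1 := S.indep_subset cB hBi (Finset.inter_subset_right (s₁ := K))
    have h2 := S.r_mono (S.mem_of_subset cK Finset.inter_subset_left) cK
      (Finset.inter_subset_left (s₁ := K) (s₂ := B))
    rw [hI] at h1 h2 ⊢
    have h3 := Finset.card_erase_add_one heK
    omega
  obtain ⟨Z, hZ, hZmax⟩ := Finset.exists_max_image
    (X.powerset.filter fun Z => B ⊆ Z ∧ Z ∈ S.C) Finset.card ⟨B, by simp [hBX, cB]⟩
  simp only [Finset.mem_filter, Finset.mem_powerset] at hZ hZmax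
  obtain ⟨hZX, hBZ, cZ⟩ := hZ
  suffices Z = X by rw [← this]; exact cZ
  refine Finset.Subset.antisymm hZX ?_
  intro e he
  by_contra heZ
  have heB : e ∉ B := fun h => heZ (hBZ h)
  have cBe := key e he heB
  have hI : insert e B ∩ Z = B := by
    rw [Finset.insert_inter_of_notMem heZ, Finset.inter_eq_left.2 hBZ]
  have hU : insert e B ∪ Z = insert e Z := by
    rw [Finset.insert_union, Finset.union_eq_right.2 hBZ]
  have cZe := S.union_mem cBe cZ (by
    rw [hI]
    have h1 := S.r_le_rhat cBe (Finset.insert_subset he hBX)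
    have h2 := S.r_mono cB cBe (Finset.subset_insert e B)
    omega)
  rw [hU] at cZe
  have h4 := hZmax (insert e Z)
    ⟨Finset.insert_subset he hZX, hBZ.trans (Finset.subset_insert e Z), cZe⟩
  rw [Finset.card_insert_of_notMem heZ] at h4
  omega

end Semimatroid

/-- The Tutte and characteristic polynomials of a semimatroid `𝒞` coincide
with the compatible Tutte and characteristic polynomials of the assigning matroid
`(M_𝒞, α_𝒞)`, summed over the compatible sets `𝒟`. -/
theorem Semimatroid.tutte_charPoly_eq_compat
    {E : Type*} [DecidableEq E] [Fintype E] (S : Semimatroid E) :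
    (∀ t s : ℤ,
      (∑ A ∈ S.C, (t - 1) ^ (S.rank - S.r A) * (s - 1) ^ (A.card - S.r A)) =
      ∑ X ∈ S.compat,
        (t - 1) ^ (S.rhat Finset.univ - S.rhat X) * (s - 1) ^ (X.card - S.rhat X)) ∧
    S.charPoly =
      ∑ X ∈ S.compat,
        (-1 : Polynomial ℤ) ^ X.card * Polynomial.X ^ (S.rhat Finset.univ - S.rhat X) := by
  refine ⟨fun t s => ?_, ?_⟩
  · rw [S.compat_eq, S.rank_eq]
    exact Finset.sum_congr rfl fun A hA => by rw [S.rhat_eq_r hA]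
  · rw [S.compat_eq, charPoly, S.rank_eq]
    exact Finset.sum_congr rfl fun A hA => by rw [S.rhat_eq_r hA]
end

section
/- Let (E,𝒞,r) be a semimatroid and X a flat of 𝒞. Then the map Y ↦ Y ∪ X is an order isomorphism from the poset ℒ(𝒞/X) of flats of the contraction 𝒞/X (ordered by inclusion) onto the poset {Z ∈ ℒ(𝒞) : X ⊆ Z} of flats of 𝒞 containing X (ordered by inclusion). -/
open scoped Classical

namespace Semimatroid

variable {E : Type*} [DecidableEq E] [Fintype E] (S : Semimatroid E)

/-- `Y` is central in the contraction `𝒞/X`: `Y ⊆ E \ X` and `Y ∪ X ∈ 𝒞`. -/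
def ContrCentral (X Y : Finset E) : Prop :=
  Y ⊆ Finset.univ \ X ∧ Y ∪ X ∈ S.C

/-- The rank function of the contraction `𝒞/X`: `Y ↦ r(Y ∪ X) − r(X)`. -/
def contrR (X Y : Finset E) : ℕ := S.r (Y ∪ X) - S.r X

/-- The closure operator of the contraction `𝒞/X`. -/
noncomputable def contrCl (X Y : Finset E) : Finset E :=
  (Finset.univ \ X).filter fun e =>
    S.ContrCentral X (insert e Y) ∧ S.contrR X (insert e Y) = S.contrR X Y

/-- The flats of the contraction `𝒞/X`: central sets of `𝒞/X` fixed by its closure. -/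
noncomputable def contrFlats (X : Finset E) : Finset (Finset E) :=
  (Finset.univ \ X).powerset.filter fun Y => Y ∪ X ∈ S.C ∧ S.contrCl X Y = Y

end Semimatroid

theorem Semimatroid.mem_contrCl_iff_mem_cl
    {E : Type*} [DecidableEq E] [Fintype E] (S : Semimatroid E)
    (X Y : Finset E) (hXC : X ∈ S.C) (hY : Y ⊆ Finset.univ \ X) (hYC : Y ∪ X ∈ S.C)
    (e : E) (he : e ∉ X) : e ∈ S.contrCl X Y ↔ e ∈ S.cl (Y ∪ X) := by
  have h1 := S.r_mono hXC hYC Finset.subset_union_right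
  have hsub : insert e Y ⊆ Finset.univ \ X := by
    apply Finset.insert_subset _ hY
    simp [he]
  simp only [contrCl, cl, ContrCentral, contrR, Finset.mem_filter, Finset.mem_sdiff,
    Finset.mem_univ, true_and, he, not_false_eq_true, hsub, Finset.insert_union]
  refine and_congr_right fun h => ?_
  have h2 := S.r_mono hXC h
    (Finset.subset_union_right.trans (Finset.subset_insert e (Y ∪ X)))
  omega

theorem Semimatroid.contrCl_eq_iff
    {E : Type*} [DecidableEq E] [Fintype E] (S : Semimatroid E)
    (X Y : Finset E) (hXC : X ∈ S.C) (hY : Y ⊆ Finset.univ \ X) (hYC : Y ∪ X ∈ S.C) :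
    S.contrCl X Y = Y ↔ S.cl (Y ∪ X) = Y ∪ X := by
  have key := S.mem_contrCl_iff_mem_cl X Y hXC hY hYC
  constructor
  · intro h
    ext e
    by_cases he : e ∈ X
    · simp [cl, he, hYC]
    · rw [← key e he, h]
      simp [he]
  · intro h
    ext e
    by_cases he : e ∈ X
    · have h1 : e ∉ Y := fun h' => by simpa [he] using hY h'
      simp [contrCl, he, h1]
    · rw [key e he, h]
      simp [he]

/-- For a flat `X` of a semimatroid `𝒞`, the map `Y ↦ Y ∪ X` is an order
isomorphism from the poset `ℒ(𝒞/X)` of flats of the contraction onto the poset of flats of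
`𝒞` containing `X`, both ordered by inclusion. -/
theorem Semimatroid.contraction_flats_orderIso
    {E : Type*} [DecidableEq E] [Fintype E] (S : Semimatroid E)
    (X : Finset E) (hX : X ∈ S.flats) :
    (∀ Y ∈ S.contrFlats X, Y ∪ X ∈ S.flats ∧ X ⊆ Y ∪ X) ∧
    (∀ Z ∈ S.flats, X ⊆ Z → ∃! Y, Y ∈ S.contrFlats X ∧ Y ∪ X = Z) ∧
    (∀ Y₁ ∈ S.contrFlats X, ∀ Y₂ ∈ S.contrFlats X, (Y₁ ⊆ Y₂ ↔ Y₁ ∪ X ⊆ Y₂ ∪ X)) := by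
  have hXC : X ∈ S.C := (Finset.mem_filter.1 hX).1
  have hmem : ∀ Y, Y ∈ S.contrFlats X ↔ Y ⊆ Finset.univ \ X ∧ Y ∪ X ∈ S.flats := by
    intro Y
    simp only [contrFlats, flats, Finset.mem_filter, Finset.mem_powerset]
    exact and_congr_right fun h => and_congr_right fun h' => S.contrCl_eq_iff X Y hXC h h'
  have hdisj : ∀ Y ∈ S.contrFlats X, ∀ e ∈ Y, e ∉ X := by
    intro Y hY e he
    simpa using ((hmem Y).1 hY).1 he
  have hord : ∀ Y₁ ∈ S.contrFlats X, ∀ Y₂ ∈ S.contrFlats X,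
      (Y₁ ⊆ Y₂ ↔ Y₁ ∪ X ⊆ Y₂ ∪ X) := by
    intro Y₁ h₁ Y₂ h₂
    refine ⟨fun h => Finset.union_subset_union_left h, fun h e he => ?_⟩
    have := h (Finset.mem_union_left X he)
    exact (Finset.mem_union.1 this).resolve_right (hdisj Y₁ h₁ e he)
  refine ⟨fun Y hY => ⟨((hmem Y).1 hY).2, Finset.subset_union_right⟩, ?_, hord⟩
  intro Z hZ hXZ
  have hu : Z \ X ∪ X = Z := Finset.sdiff_union_of_subset hXZ
  have hm : Z \ X ∈ S.contrFlats X := by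
    rw [hmem, hu]
    exact ⟨Finset.sdiff_subset_sdiff (Finset.subset_univ Z) (Finset.Subset.refl X), hZ⟩
  refine ⟨Z \ X, ⟨hm, hu⟩, ?_⟩
  rintro Y ⟨hY, hYZ⟩
  apply Finset.Subset.antisymm
  · rw [hord _ hY _ hm, hu, hYZ]
  · rw [hord _ hm _ hY, hu, hYZ]
end

section
/- (Convolution formula for the characteristic polynomial of semimatroids.) Let (E,𝒞,r) be a semimatroid without loops. Then, as an identity of polynomials in the two variables t and s, χ(𝒞; t·s) = Σ_{X ∈ ℒ(𝒞)} t^{r(𝒞)−r(X)} · χ(𝒞|X; t) · χ(𝒞/X; s), where χ(𝒞; t·s) denotes the characteristic polynomial of 𝒞 with the product t·s substituted for its variable. -/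
namespace Semimatroid

variable {E : Type*} [DecidableEq E] [Fintype E] (S : Semimatroid E)

/-- The central sets of the restriction `𝒞|X`: `{Y ⊆ X : Y ∈ 𝒞}`. -/
def restCentrals (X : Finset E) : Finset (Finset E) := S.C.filter fun Y => Y ⊆ X

/-- The rank of the restriction `𝒞|X` (the common rank of its maximal central sets). -/
def restRank (X : Finset E) : ℕ := (S.restCentrals X).sup S.r

/-- The characteristic polynomial of the restriction `𝒞|X`, evaluated at `t`. -/
def restCharEval (X : Finset E) (t : ℤ) : ℤ :=
  ∑ Y ∈ S.restCentrals X, (-1 : ℤ) ^ Y.card * t ^ (S.restRank X - S.r Y)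

/-- The central sets of the contraction `𝒞/X`: `{Y ⊆ E \ X : Y ∪ X ∈ 𝒞}`. -/
def contrCentrals (X : Finset E) : Finset (Finset E) :=
  (Finset.univ \ X).powerset.filter fun Y => Y ∪ X ∈ S.C

/-- The rank of the contraction `𝒞/X`, whose rank function is `Y ↦ r(Y ∪ X) − r(X)`. -/
def contrRank (X : Finset E) : ℕ :=
  (S.contrCentrals X).sup fun Y => S.r (Y ∪ X) - S.r X

/-- The characteristic polynomial of the contraction `𝒞/X`, evaluated at `s`. -/
def contrCharEval (X : Finset E) (s : ℤ) : ℤ :=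
  ∑ Y ∈ S.contrCentrals X,
    (-1 : ℤ) ^ Y.card * s ^ (S.contrRank X - (S.r (Y ∪ X) - S.r X))

/-- The characteristic polynomial of `𝒞` evaluated at `t`:
`χ(𝒞;t) = Σ_{A ∈ 𝒞} (−1)^{|A|} t^{r(𝒞)−r(A)}`. -/
def charEval (t : ℤ) : ℤ :=
  ∑ A ∈ S.C, (-1 : ℤ) ^ A.card * t ^ (S.rank - S.r A)

end Semimatroid

namespace Semimatroid

section Helpers

variable {E : Type*} [DecidableEq E] [Fintype E] (S : Semimatroid E)

theorem r_le_rank {X : Finset E} (hX : X ∈ S.C) : S.r X ≤ S.rank :=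
  Finset.le_sup (f := S.r) hX

theorem restRank_eq {X : Finset E} (hX : X ∈ S.C) : S.restRank X = S.r X := by
  unfold restRank restCentrals
  apply le_antisymm
  · apply Finset.sup_le
    intro Y hY
    rw [Finset.mem_filter] at hY
    exact S.r_mono hY.1 hX hY.2
  · exact Finset.le_sup (f := S.r) (Finset.mem_filter.2 ⟨hX, subset_rfl⟩)

/-- Every central set lies in a central set of full rank. -/
theorem exists_full {X : Finset E} (hX : X ∈ S.C) :
    ∃ Z ∈ S.C, X ⊆ Z ∧ S.r Z = S.rank := by
  obtain ⟨Z, hZ, hmax⟩ := Finset.exists_max_image (S.C.filter fun Z => X ⊆ Z) Finset.card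
    ⟨X, Finset.mem_filter.2 ⟨hX, subset_rfl⟩⟩
  rw [Finset.mem_filter] at hZ
  refine ⟨Z, hZ.1, hZ.2, ?_⟩
  by_contra hne
  have hlt : S.r Z < S.rank := lt_of_le_of_ne (S.r_le_rank hZ.1) hne
  obtain ⟨Y, hY, hYr⟩ := Finset.exists_mem_eq_sup S.C S.C_nonempty S.r
  have hYr' : S.rank = S.r Y := hYr
  obtain ⟨e, he, hin⟩ := S.augment hZ.1 hY (hYr' ▸ hlt)
  rw [Finset.mem_sdiff] at he
  have := hmax (insert e Z)
    (Finset.mem_filter.2 ⟨hin, hZ.2.trans (Finset.subset_insert _ _)⟩)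
  rw [Finset.card_insert_of_notMem he.2] at this
  omega

theorem contrRank_eq {X : Finset E} (hX : X ∈ S.C) :
    S.contrRank X = S.rank - S.r X := by
  unfold contrRank contrCentrals
  apply le_antisymm
  · apply Finset.sup_le
    intro Y hY
    rw [Finset.mem_filter] at hY
    have := S.r_le_rank hY.2
    omega
  · obtain ⟨Z, hZ, hXZ, hr⟩ := S.exists_full hX
    have hu : Z \ X ∪ X = Z := Finset.sdiff_union_of_subset hXZ
    have := Finset.le_sup (s := (Finset.univ \ X).powerset.filter fun Y => Y ∪ X ∈ S.C)
      (f := fun Y => S.r (Y ∪ X) - S.r X) (b := Z \ X)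
      (Finset.mem_filter.2 ⟨Finset.mem_powerset.2
        (Finset.sdiff_subset_sdiff (Finset.subset_univ _) subset_rfl), by rwa [hu]⟩)
    simpa [hu, hr] using this

/-- The signed sum over the central sets above `X`. -/
def upSum (X : Finset E) (s : ℤ) : ℤ :=
  ∑ Z ∈ S.C.filter (fun Z => X ⊆ Z), (-1 : ℤ) ^ Z.card * s ^ (S.rank - S.r Z)

theorem contrCharEval_eq {X : Finset E} (hX : X ∈ S.C) (s : ℤ) :
    S.contrCharEval X s = (-1) ^ X.card * S.upSum X s := by
  unfold contrCharEval upSum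
  rw [Finset.mul_sum, S.contrRank_eq hX]
  refine Finset.sum_bij' (fun Y _ => Y ∪ X) (fun Z _ => Z \ X) ?_ ?_ ?_ ?_ ?_
  · intro Y hY
    simp only [contrCentrals, Finset.mem_filter] at hY ⊢
    exact ⟨hY.2, Finset.subset_union_right⟩
  · intro Z hZ
    simp only [contrCentrals, Finset.mem_filter, Finset.mem_powerset] at hZ ⊢
    refine ⟨Finset.sdiff_subset_sdiff (Finset.subset_univ _) subset_rfl, ?_⟩
    rw [Finset.sdiff_union_of_subset hZ.2]
    exact hZ.1
  · intro Y hY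
    simp only [contrCentrals, Finset.mem_filter, Finset.mem_powerset] at hY
    rw [Finset.union_sdiff_right]
    exact Finset.sdiff_eq_self_of_disjoint
      (Finset.disjoint_of_subset_left hY.1 Finset.sdiff_disjoint)
  · intro Z hZ
    exact Finset.sdiff_union_of_subset (Finset.mem_filter.1 hZ).2
  · intro Y hY
    simp only [contrCentrals, Finset.mem_filter, Finset.mem_powerset] at hY
    have hd : Disjoint Y X := Finset.disjoint_of_subset_left hY.1 Finset.sdiff_disjoint
    have h1 := S.r_mono hX hY.2 Finset.subset_union_right
    have h2 := S.r_le_rank hY.2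
    have h3 : S.rank - S.r X - (S.r (Y ∪ X) - S.r X) = S.rank - S.r (Y ∪ X) := by omega
    have h4 : ((-1 : ℤ) ^ X.card) * (-1) ^ X.card = 1 := by
      rw [← mul_pow]; simp
    rw [h3, Finset.card_union_of_disjoint hd, pow_add]
    linear_combination (-(-1 : ℤ) ^ Y.card * s ^ (S.rank - S.r (Y ∪ X))) * h4

/-- Adding an element of the closure of `X` to a central `Z ⊇ X`. -/
theorem insert_closure {X Z : Finset E} {e : E} (hX : X ∈ S.C) (he : insert e X ∈ S.C)
    (hr : S.r (insert e X) = S.r X) (hZ : Z ∈ S.C) (hXZ : X ⊆ Z) :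
    insert e Z ∈ S.C ∧ S.r (insert e Z) = S.r Z := by
  by_cases heZ : e ∈ Z
  · rw [Finset.insert_eq_of_mem heZ]; exact ⟨hZ, rfl⟩
  have hi : insert e X ∩ Z = X := by
    rw [Finset.insert_inter_of_notMem heZ, Finset.inter_eq_left.2 hXZ]
  have hu : insert e X ∪ Z = insert e Z := by
    rw [Finset.insert_union, Finset.union_eq_right.2 hXZ]
  have hm : insert e Z ∈ S.C := by
    rw [← hu]; exact S.union_mem he hZ (by rw [hi, hr])
  refine ⟨hm, le_antisymm ?_ (S.r_mono hZ hm (Finset.subset_insert _ _))⟩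
  have := S.submodular he hZ (by rwa [hu])
  rw [hi, hu] at this
  omega

theorem upSum_eq_zero {X : Finset E} {e : E} (hX : X ∈ S.C) (he : insert e X ∈ S.C)
    (hr : S.r (insert e X) = S.r X) (heX : e ∉ X) (s : ℤ) : S.upSum X s = 0 := by
  unfold upSum
  refine Finset.sum_involution
    (fun Z _ => if e ∈ Z then Z.erase e else insert e Z) ?_ ?_ ?_ ?_
  · intro Z hZ
    rw [Finset.mem_filter] at hZ
    by_cases h : e ∈ Z
    · have hsub : X ⊆ Z.erase e := Finset.subset_erase.2 ⟨hZ.2, heX⟩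
      have hm := S.mem_of_subset hZ.1 (Finset.erase_subset e Z)
      have h1 := (S.insert_closure hX he hr hm hsub).2
      rw [Finset.insert_erase h] at h1
      have h2 := Finset.card_erase_add_one h
      rw [if_pos h, ← h2, h1, pow_succ]
      ring
    · have h1 := (S.insert_closure hX he hr hZ.1 hZ.2).2
      rw [if_neg h, h1, Finset.card_insert_of_notMem h, pow_succ]
      ring
  · intro Z hZ _ heq
    by_cases h : e ∈ Z
    · rw [if_pos h] at heq
      rw [← heq] at h
      simp at h
    · rw [if_neg h] at heq
      apply h
      rw [← heq]
      exact Finset.mem_insert_self _ _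
  · intro Z hZ
    rw [Finset.mem_filter] at hZ
    by_cases h : e ∈ Z
    · rw [if_pos h, Finset.mem_filter]
      exact ⟨S.mem_of_subset hZ.1 (Finset.erase_subset e Z),
        Finset.subset_erase.2 ⟨hZ.2, heX⟩⟩
    · rw [if_neg h, Finset.mem_filter]
      exact ⟨(S.insert_closure hX he hr hZ.1 hZ.2).1,
        hZ.2.trans (Finset.subset_insert _ _)⟩
  · intro Z hZ
    by_cases h : e ∈ Z
    · simp [h]
    · simp [h]

theorem upSum_eq_zero_of_not_flat {X : Finset E} (hX : X ∈ S.C) (hn : X ∉ S.flats) (s : ℤ) :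
    S.upSum X s = 0 := by
  have hcl : S.cl X ≠ X := fun h => hn (Finset.mem_filter.2 ⟨hX, h⟩)
  have hsub : X ⊆ S.cl X := by
    intro e he
    simp [cl, Finset.insert_eq_of_mem he, hX]
  have : ¬ S.cl X ⊆ X := fun h => hcl (Finset.Subset.antisymm h hsub)
  obtain ⟨e, he, heX⟩ := Finset.not_subset.1 this
  simp only [cl, Finset.mem_filter, Finset.mem_univ, true_and] at he
  exact S.upSum_eq_zero hX he.1 he.2 heX s

theorem sum_interval_neg_one {α : Type*} [DecidableEq α] (Y Z : Finset α) :
    ∑ X ∈ Finset.Icc Y Z, (-1 : ℤ) ^ X.card = if Y = Z then (-1) ^ Z.card else 0 := by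
  split_ifs with h
  · subst h; simp
  by_cases hYZ : Y ⊆ Z
  · obtain ⟨e, heZ, heY⟩ := Finset.exists_of_ssubset (lt_of_le_of_ne hYZ h)
    refine Finset.sum_involution
      (fun X _ => if e ∈ X then X.erase e else insert e X) ?_ ?_ ?_ ?_
    · intro X _
      by_cases h : e ∈ X
      · rw [if_pos h, ← Finset.card_erase_add_one h, pow_succ]
        ring
      · rw [if_neg h, Finset.card_insert_of_notMem h, pow_succ]
        ring
    · intro X _ _ heq
      by_cases h : e ∈ X
      · rw [if_pos h] at heq
        rw [← heq] at h
        simp at h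
      · rw [if_neg h] at heq
        apply h
        rw [← heq]
        exact Finset.mem_insert_self _ _
    · intro X hX
      rw [Finset.mem_Icc] at hX
      by_cases h : e ∈ X
      · rw [if_pos h, Finset.mem_Icc]
        exact ⟨Finset.subset_erase.2 ⟨hX.1, heY⟩, (Finset.erase_subset _ _).trans hX.2⟩
      · rw [if_neg h, Finset.mem_Icc]
        exact ⟨hX.1.trans (Finset.subset_insert _ _), Finset.insert_subset heZ hX.2⟩
    · intro X _
      by_cases h : e ∈ X
      · simp [h]
      · simp [h]
  · rw [Finset.Icc_eq_empty hYZ, Finset.sum_empty]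

theorem restCharEval_eq {X : Finset E} (hX : X ∈ S.C) (t : ℤ) :
    t ^ (S.rank - S.r X) * S.restCharEval X t =
      ∑ Y ∈ S.C.filter (fun Y => Y ⊆ X), (-1 : ℤ) ^ Y.card * t ^ (S.rank - S.r Y) := by
  unfold restCharEval restCentrals
  rw [Finset.mul_sum, S.restRank_eq hX]
  refine Finset.sum_congr rfl fun Y hY => ?_
  rw [Finset.mem_filter] at hY
  have h1 := S.r_mono hY.1 hX hY.2
  have h2 := S.r_le_rank hX
  have h3 : S.rank - S.r Y = (S.rank - S.r X) + (S.r X - S.r Y) := by omega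
  rw [h3, pow_add]
  ring

theorem total_sum (f g : Finset E → ℤ) :
    ∑ X ∈ S.C, (∑ Y ∈ S.C.filter (fun Y => Y ⊆ X), f Y) *
      ((-1) ^ X.card * ∑ Z ∈ S.C.filter (fun Z => X ⊆ Z), g Z) =
    ∑ Z ∈ S.C, f Z * g Z * (-1) ^ Z.card := by
  have hstep : ∀ Z ∈ S.C, f Z * g Z * (-1) ^ Z.card =
      ∑ Y ∈ S.C, ∑ X ∈ S.C, if Y ⊆ X ∧ X ⊆ Z then f Y * g Z * (-1) ^ X.card else 0 := by
    intro Z hZ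
    have : ∀ Y ∈ S.C, (∑ X ∈ S.C,
        if Y ⊆ X ∧ X ⊆ Z then f Y * g Z * (-1 : ℤ) ^ X.card else 0) =
        if Y = Z then f Y * g Z * (-1) ^ Z.card else 0 := by
      intro Y _
      rw [← Finset.sum_filter]
      have hI : S.C.filter (fun X => Y ⊆ X ∧ X ⊆ Z) = Finset.Icc Y Z := by
        ext X
        simp only [Finset.mem_filter, Finset.mem_Icc, Finset.le_eq_subset]
        exact ⟨fun h => h.2, fun h => ⟨S.mem_of_subset hZ h.2, h⟩⟩
      rw [hI, ← Finset.mul_sum, sum_interval_neg_one]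
      split_ifs <;> simp
    rw [Finset.sum_congr rfl this, Finset.sum_ite_eq' S.C Z, if_pos hZ]
  rw [Finset.sum_congr rfl hstep]
  have hL : ∀ X ∈ S.C, (∑ Y ∈ S.C.filter (fun Y => Y ⊆ X), f Y) *
      ((-1) ^ X.card * ∑ Z ∈ S.C.filter (fun Z => X ⊆ Z), g Z) =
      ∑ Z ∈ S.C, ∑ Y ∈ S.C, if Y ⊆ X ∧ X ⊆ Z then f Y * g Z * (-1) ^ X.card else 0 := by
    intro X _
    rw [Finset.sum_filter, Finset.sum_filter, mul_left_comm, Finset.sum_mul_sum,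
      Finset.sum_comm, Finset.mul_sum]
    refine Finset.sum_congr rfl fun Z _ => ?_
    rw [Finset.mul_sum]
    refine Finset.sum_congr rfl fun Y _ => ?_
    by_cases h1 : Y ⊆ X <;> by_cases h2 : X ⊆ Z <;> simp [h1, h2]
    ring
  rw [Finset.sum_congr rfl hL, Finset.sum_comm]
  refine Finset.sum_congr rfl fun Z _ => ?_
  rw [Finset.sum_comm]

end Helpers

end Semimatroid

/-- **convolution formula for the characteristic polynomial.** For a
loopless semimatroid `𝒞`, as an identity in the two variables `t` and `s`,
`χ(𝒞; t·s) = Σ_{X ∈ ℒ(𝒞)} t^{r(𝒞)−r(X)} χ(𝒞|X; t) χ(𝒞/X; s)`. -/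
theorem Semimatroid.charPoly_convolution
    {E : Type*} [DecidableEq E] [Fintype E] (S : Semimatroid E)
    (hloopless : ¬ ∃ e : E, {e} ∈ S.C ∧ S.r {e} = 0) :
    ∀ t s : ℤ,
      S.charEval (t * s) =
        ∑ X ∈ S.flats,
          t ^ (S.rank - S.r X) * S.restCharEval X t * S.contrCharEval X s := by
  intro t s
  have hsub : S.flats ⊆ S.C := Finset.filter_subset _ _
  have h1 : ∀ X ∈ S.C,
      t ^ (S.rank - S.r X) * S.restCharEval X t * S.contrCharEval X s =
      (∑ Y ∈ S.C.filter (fun Y => Y ⊆ X), (-1 : ℤ) ^ Y.card * t ^ (S.rank - S.r Y)) *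
        ((-1) ^ X.card *
          ∑ Z ∈ S.C.filter (fun Z => X ⊆ Z), (-1 : ℤ) ^ Z.card * s ^ (S.rank - S.r Z)) := by
    intro X hX
    rw [S.restCharEval_eq hX, S.contrCharEval_eq hX]
    rfl
  rw [Finset.sum_subset hsub, Finset.sum_congr rfl h1, S.total_sum]
  · unfold charEval
    refine Finset.sum_congr rfl fun Z _ => ?_
    have h4 : ((-1 : ℤ) ^ Z.card) * (-1) ^ Z.card = 1 := by
      rw [← mul_pow]; simp
    rw [mul_pow]
    linear_combination
      (-(-1 : ℤ) ^ Z.card * t ^ (S.rank - S.r Z) * s ^ (S.rank - S.r Z)) * h4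
  · intro X hX hn
    rw [S.contrCharEval_eq hX, S.upSum_eq_zero_of_not_flat hX hn]
    simp
end
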